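/- arXiv:1806.05200 — 2 statements merged into one kernel-verified Lean document; each statement's English description precedes it below -/
import Mathlib

section
/- For n ≥ 3, the graded Betti number β_{n,n+2}(S/in_<(I)) equals n − 1, where in_<(I) = (y_i y_j : 1 ≤ i < j ≤ n) + (x y_k z : 1 ≤ k ≤ n−1) + (x y_n² z) in S = K[x, y_1, …, y_n, z]. -/
open MvPolynomial

noncomputable def xP (K : Type*) [Field K] (n : ℕ) : MvPolynomial (Fin (n + 2)) K := X 0
noncomputable def zP (K : Type*) [Field K] (n : ℕ) : MvPolynomial (Fin (n + 2)) K :=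
  X (Fin.last (n + 1))
noncomputable def yP (K : Type*) [Field K] (n : ℕ) (i : Fin n) : MvPolynomial (Fin (n + 2)) K :=
  X i.succ.castSucc

/-- The join-meet ideal `I` of the diamond lattice `D_{n+2}`. -/
noncomputable def diamondIdeal (K : Type*) [Field K] (n : ℕ) :
    Ideal (MvPolynomial (Fin (n + 2)) K) :=
  Ideal.span {f | ∃ i j : Fin n, i < j ∧ f = yP K n i * yP K n j - xP K n * zP K n}

/-- The initial ideal `in_<(I)` of `I` w.r.t. the reverse lexicographic order induced by
`x > y_1 > ⋯ > y_n > z`, as computed in the paper: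
`(y_i y_j : i < j) + (x y_k z : k ≤ n-1) + (x y_n² z)`. -/
noncomputable def diamondIni (K : Type*) [Field K] (n : ℕ) (hn : 1 ≤ n) :
    Ideal (MvPolynomial (Fin (n + 2)) K) :=
  Ideal.span
    ({f | ∃ i j : Fin n, i < j ∧ f = yP K n i * yP K n j} ∪
      {f | ∃ k : Fin n, (k : ℕ) < n - 1 ∧ f = xP K n * yP K n k * zP K n} ∪
      {xP K n * (yP K n ⟨n - 1, by omega⟩) ^ 2 * zP K n})

def mdeg {σ : Type*} (m : σ →₀ ℕ) : ℕ := m.sum fun _ e => e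

/-- A minimal graded free resolution
`⋯ → F_{i+1} → F_i → ⋯ → F_0 → S/I → 0` of `S/I` over `S = K[x_s : s ∈ σ]`.
`F_i` is free with finite homogeneous basis `B i`, the basis element `b : B i` having
degree `deg i b`; the differentials are graded and have entries in the graded maximal
ideal (minimality); `ε` is a lift of the augmentation `F_0 → S/I`. -/
structure MinGradedFreeRes (K : Type*) [Field K] (σ : Type*) (I : Ideal (MvPolynomial σ K)) where
  B : ℕ → Type
  finB : ∀ i, Finite (B i)
  deg : ∀ i, B i → ℕ
  d : ∀ i, ((B (i + 1)) →₀ MvPolynomial σ K) →ₗ[MvPolynomial σ K] ((B i) →₀ MvPolynomial σ K)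
  ε : ((B 0) →₀ MvPolynomial σ K) →ₗ[MvPolynomial σ K] MvPolynomial σ K
  ε_homog : ∀ b : B 0, (ε (Finsupp.single b 1)).IsHomogeneous (deg 0 b)
  surj : ∀ s : MvPolynomial σ K, ∃ t, ε t - s ∈ I
  exact0 : LinearMap.range (d 0) = Submodule.comap ε (I : Submodule _ _)
  exact : ∀ i, LinearMap.range (d (i + 1)) = LinearMap.ker (d i)
  homog : ∀ i (b : B (i + 1)) (c : B i),
    ∀ m ∈ ((d i (Finsupp.single b 1)) c).support, mdeg m + deg i c = deg (i + 1) b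
  minimal : ∀ i (b : B (i + 1)) (c : B i), coeff 0 ((d i (Finsupp.single b 1)) c) = 0

/-- The graded Betti number `β_{i,j}(S/I)` read off from a minimal graded free resolution:
the number of basis elements of `F_i` of degree `j`. -/
noncomputable def MinGradedFreeRes.betti {K : Type*} [Field K] {σ : Type*}
    {I : Ideal (MvPolynomial σ K)} (F : MinGradedFreeRes K σ I) (i j : ℕ) : ℕ :=
  Nat.card {b : F.B i // F.deg i b = j}

/-!
The monomials `y_a y_c` (`a < c`), followed by `x y_a z` (`a < n`) and `x y_n² z`, have linear
quotients: the colon ideal of the monomials preceding a given one is generated by variables.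
Adding one monomial `u` at a time to an ideal `I`, the mapping cone over a lift of multiplication
by `u`, from the Koszul resolution of `S/(I : u)` to the resolution of `S/I`, is again a minimal
resolution, because the degrees of `u` never decrease. In the strand `j = i + 2` only the cubic
generators matter: each of `x y_a z`, `a < n`, has a colon ideal generated by `n - 1` variables and
so contributes `(n - 1).choose (i - 1)`.

Betti numbers do not depend on the resolution: the composite of comparison maps between two minimal
resolutions is homotopic to the identity, hence equal to it modulo the maximal ideal.
-/

/-! ### Graded free modules over a polynomial ring -/

section GradedFreeModule

variable {R : Type*} [CommSemiring R] {σ A B C : Type*}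

lemma isHomogeneous_iff_degree {p : MvPolynomial σ R} {i : ℕ} :
    p.IsHomogeneous i ↔ ∀ m, coeff m p ≠ 0 → m.degree = i := by
  rw [Finsupp.degree_eq_weight_one]
  rfl

/-- The homogeneous elements of degree `j` of the graded free module whose basis vectors `b`
have degree `deg b`, described through the monomials of their coordinates. -/
def homogeneousVectors (R σ : Type*) [CommSemiring R] (deg : B → ℕ) (j : ℕ) :
    Submodule R (B →₀ MvPolynomial σ R) where
  carrier := {v | ∀ b m, coeff m (v b) ≠ 0 → m.degree + deg b = j}
  zero_mem' := fun b m h => (h (coeff_zero m)).elim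
  add_mem' := by
    intro v w hv hw b m h
    rw [Finsupp.add_apply, coeff_add] at h
    by_contra hne
    have hv0 : coeff m (v b) = 0 := not_not.1 (mt (hv b m) hne)
    have hw0 : coeff m (w b) = 0 := not_not.1 (mt (hw b m) hne)
    exact h (by rw [hv0, hw0, add_zero])
  smul_mem' := fun r v hv b m h => hv b m fun h0 => h <| by
    rw [Finsupp.smul_apply, coeff_smul, h0, smul_zero]

lemma smul_mem_homogeneousVectors {deg : B → ℕ} {p : MvPolynomial σ R} {i j : ℕ}
    (hp : p.IsHomogeneous i) {v : B →₀ MvPolynomial σ R}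
    (hv : v ∈ homogeneousVectors R σ deg j) : p • v ∈ homogeneousVectors R σ deg (i + j) := by
  classical
  intro b m hm
  rw [Finsupp.smul_apply, smul_eq_mul, coeff_mul] at hm
  obtain ⟨⟨k, l⟩, hkl, hne⟩ := Finset.exists_ne_zero_of_sum_ne_zero hm
  rw [← Finset.HasAntidiagonal.mem_antidiagonal.1 hkl, map_add, add_assoc,
    isHomogeneous_iff_degree.1 hp k (left_ne_zero_of_mul hne), hv b l (right_ne_zero_of_mul hne)]

lemma single_mem_homogeneousVectors {deg : B → ℕ} {b : B} {p : MvPolynomial σ R} {i j : ℕ}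
    (hp : p.IsHomogeneous i) (hj : i + deg b = j) :
    Finsupp.single b p ∈ homogeneousVectors R σ deg j := by
  classical
  intro c m hm
  rw [Finsupp.single_apply] at hm
  split_ifs at hm with hbc
  · rw [isHomogeneous_iff_degree.1 hp m hm, ← hbc, hj]
  · exact (hm (coeff_zero m)).elim

/-- The projection of a graded free module onto its homogeneous part of degree `j`. -/
noncomputable def homogeneousPart (R σ : Type*) [CommSemiring R] (deg : B → ℕ) (j : ℕ) :
    (B →₀ MvPolynomial σ R) →ₗ[R] (B →₀ MvPolynomial σ R) :=
  Finsupp.lsum R fun b =>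
    if deg b ≤ j then Finsupp.lsingle b ∘ₗ homogeneousComponent (j - deg b) else 0

lemma coeff_homogeneousPart (deg : B → ℕ) (j : ℕ) (v : B →₀ MvPolynomial σ R) (b : B)
    (m : σ →₀ ℕ) :
    coeff m (homogeneousPart R σ deg j v b) =
      if m.degree + deg b = j then coeff m (v b) else 0 := by
  classical
  have hcoord : homogeneousPart R σ deg j v b =
      if deg b ≤ j then homogeneousComponent (j - deg b) (v b) else 0 := by
    induction v using Finsupp.induction_linear with
    | zero => simp
    | add v w hv hw => rw [map_add, Finsupp.add_apply, hv, hw]; split_ifs <;> simp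
    | single c p =>
      rw [homogeneousPart, Finsupp.lsum_single]
      by_cases hbc : c = b
      · subst hbc
        split_ifs <;> simp
      · split_ifs <;> simp [Finsupp.single_eq_of_ne' hbc]
  rw [hcoord]
  split_ifs with h₁ h₂ h₂
  · rw [coeff_homogeneousComponent, if_pos (by omega)]
  · rw [coeff_homogeneousComponent, if_neg (by omega)]
  · omega
  · exact coeff_zero m

lemma homogeneousPart_mem (deg : B → ℕ) (j : ℕ) (v : B →₀ MvPolynomial σ R) :
    homogeneousPart R σ deg j v ∈ homogeneousVectors R σ deg j := by
  intro b m h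
  rw [coeff_homogeneousPart] at h
  exact (ite_ne_right_iff.1 h).1

lemma homogeneousPart_of_mem {deg : B → ℕ} {i : ℕ} {v : B →₀ MvPolynomial σ R}
    (hv : v ∈ homogeneousVectors R σ deg i) (j : ℕ) :
    homogeneousPart R σ deg j v = if i = j then v else 0 := by
  ext b m
  rw [coeff_homogeneousPart]
  by_cases hm : coeff m (v b) = 0
  · split_ifs <;> simp [hm]
  · rw [hv b m hm]
    split_ifs <;> simp

/-- `f` raises degrees by `e`, where the basis vectors `b` and `c` of source and target have
degrees `degB b` and `degC c`. -/
def IsGradedMap (degB : B → ℕ) (degC : C → ℕ) (e : ℕ)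
    (f : (B →₀ MvPolynomial σ R) →ₗ[MvPolynomial σ R] (C →₀ MvPolynomial σ R)) : Prop :=
  ∀ b, f (Finsupp.single b 1) ∈ homogeneousVectors R σ degC (degB b + e)

section

variable {degA : A → ℕ} {degB : B → ℕ} {degC : C → ℕ} {e : ℕ}
  {f : (B →₀ MvPolynomial σ R) →ₗ[MvPolynomial σ R] (C →₀ MvPolynomial σ R)}
  {g : (A →₀ MvPolynomial σ R) →ₗ[MvPolynomial σ R] (C →₀ MvPolynomial σ R)}

lemma map_single_eq_smul {M : Type*} [AddCommMonoid M] [Module R M] (f : (B →₀ R) →ₗ[R] M)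
    (b : B) (r : R) : f (Finsupp.single b r) = r • f (Finsupp.single b 1) := by
  rw [← Finsupp.smul_single_one, map_smul]

lemma IsGradedMap.map_single_mem (hf : IsGradedMap degB degC e f) (b : B)
    {p : MvPolynomial σ R} {i : ℕ} (hp : p.IsHomogeneous i) :
    f (Finsupp.single b p) ∈ homogeneousVectors R σ degC (i + degB b + e) := by
  rw [map_single_eq_smul, add_assoc]
  exact smul_mem_homogeneousVectors hp (hf b)

lemma IsGradedMap.map_homogeneousPart (hf : IsGradedMap degB degC 0 f) (j : ℕ)
    (v : B →₀ MvPolynomial σ R) :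
    f (homogeneousPart R σ degB j v) = homogeneousPart R σ degC j (f v) := by
  suffices h : f.restrictScalars R ∘ₗ homogeneousPart R σ degB j =
      homogeneousPart R σ degC j ∘ₗ f.restrictScalars R from LinearMap.congr_fun h v
  refine Finsupp.lhom_ext' fun b => (basisMonomials σ R).ext fun m => ?_
  have hm : (monomial m (1 : R)).IsHomogeneous m.degree := isHomogeneous_monomial 1 rfl
  simp only [LinearMap.comp_apply, LinearMap.restrictScalars_apply, Finsupp.lsingle_apply,
    coe_basisMonomials]
  rw [homogeneousPart_of_mem (single_mem_homogeneousVectors hm rfl),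
    homogeneousPart_of_mem (hf.map_single_mem b hm), add_zero]
  split_ifs <;> simp

lemma IsGradedMap.map_mem (hf : IsGradedMap degB degC e f) {j : ℕ}
    {v : B →₀ MvPolynomial σ R} (hv : v ∈ homogeneousVectors R σ degB j) :
    f v ∈ homogeneousVectors R σ degC (j + e) := by
  rw [← v.sum_single, Finsupp.sum, map_sum]
  refine Submodule.sum_mem _ fun b hb => ?_
  obtain ⟨m, hm⟩ := ne_zero_iff.1 (Finsupp.mem_support_iff.1 hb)
  have hvb : (v b).IsHomogeneous m.degree := isHomogeneous_iff_degree.2 fun k hk =>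
    Nat.add_right_cancel ((hv b k hk).trans (hv b m hm).symm)
  rw [← hv b m hm]
  exact hf.map_single_mem b hvb

lemma IsGradedMap.comp {e' : ℕ}
    {h : (A →₀ MvPolynomial σ R) →ₗ[MvPolynomial σ R] (B →₀ MvPolynomial σ R)}
    (hf : IsGradedMap degB degC e f) (hh : IsGradedMap degA degB e' h) :
    IsGradedMap degA degC (e' + e) (f ∘ₗ h) := fun a => by
  rw [← add_assoc]
  exact hf.map_mem (hh a)

lemma IsGradedMap.exists_homogeneous_preimage (hf : IsGradedMap degB degC 0 f) {j : ℕ}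
    {v : C →₀ MvPolynomial σ R} (hv : v ∈ homogeneousVectors R σ degC j)
    (hvf : v ∈ LinearMap.range f) : ∃ w ∈ homogeneousVectors R σ degB j, f w = v := by
  obtain ⟨w, rfl⟩ := hvf
  refine ⟨homogeneousPart R σ degB j w, homogeneousPart_mem _ _ _, ?_⟩
  rw [hf.map_homogeneousPart, homogeneousPart_of_mem hv, if_pos rfl]

lemma IsGradedMap.exists_graded_lift (hf : IsGradedMap degB degC 0 f)
    (hg : IsGradedMap degA degC e g) (h : ∀ x, g x ∈ LinearMap.range f) :
    ∃ g' : (A →₀ MvPolynomial σ R) →ₗ[MvPolynomial σ R] (B →₀ MvPolynomial σ R),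
      IsGradedMap degA degB e g' ∧ ∀ x, f (g' x) = g x := by
  choose w hw hfw using fun a => hf.exists_homogeneous_preimage (hg a) (h _)
  refine ⟨Finsupp.linearCombination _ w, fun a => by simpa using hw a, fun x => ?_⟩
  suffices hcomp : f ∘ₗ Finsupp.linearCombination _ w = g from LinearMap.congr_fun hcomp x
  ext1 a
  ext1
  simp [hfw]

end

end GradedFreeModule

lemma exists_lift_of_forall_mem_range {R P M N : Type*} [Ring R] [AddCommGroup P] [Module R P]
    [Module.Projective R P] [AddCommGroup M] [Module R M] [AddCommGroup N] [Module R N]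
    (g : P →ₗ[R] N) (f : M →ₗ[R] N) (h : ∀ x, g x ∈ LinearMap.range f) :
    ∃ g' : P →ₗ[R] M, ∀ x, f (g' x) = g x := by
  obtain ⟨g', hg'⟩ := Module.projective_lifting_property f.rangeRestrict (g.codRestrict _ h)
    f.surjective_rangeRestrict
  exact ⟨g', fun x => congrArg Subtype.val (LinearMap.congr_fun hg' x)⟩

section ConstantPart

variable {R : Type*} [CommSemiring R] {σ B C D : Type*}

/-- All entries of the matrix of `f` lie in the ideal of polynomials without constant term. -/
def IsMinimalMap (f : (B →₀ MvPolynomial σ R) →ₗ[MvPolynomial σ R] (C →₀ MvPolynomial σ R)) :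
    Prop :=
  ∀ b c, constantCoeff (f (Finsupp.single b 1) c) = 0

lemma constantCoeff_map_apply
    (f : (B →₀ MvPolynomial σ R) →ₗ[MvPolynomial σ R] (C →₀ MvPolynomial σ R))
    (v : B →₀ MvPolynomial σ R) (c : C) :
    constantCoeff (f v c) = v.sum fun b p =>
      constantCoeff p * constantCoeff (f (Finsupp.single b 1) c) := by
  conv_lhs => rw [← v.sum_single, Finsupp.sum, map_sum, Finsupp.finsetSum_apply, map_sum]
  refine Finset.sum_congr rfl fun b _ => ?_
  rw [map_single_eq_smul, Finsupp.smul_apply, smul_eq_mul, map_mul]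

lemma IsMinimalMap.constantCoeff_apply
    {f : (B →₀ MvPolynomial σ R) →ₗ[MvPolynomial σ R] (C →₀ MvPolynomial σ R)}
    (hf : IsMinimalMap f) (v : B →₀ MvPolynomial σ R) (c : C) : constantCoeff (f v c) = 0 := by
  rw [constantCoeff_map_apply]
  exact Finset.sum_eq_zero fun b _ => by simp only [hf b c, mul_zero]

lemma IsMinimalMap.comp_left
    {f : (B →₀ MvPolynomial σ R) →ₗ[MvPolynomial σ R] (C →₀ MvPolynomial σ R)}
    (hf : IsMinimalMap f)
    (g : (C →₀ MvPolynomial σ R) →ₗ[MvPolynomial σ R] (D →₀ MvPolynomial σ R)) :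
    IsMinimalMap (g ∘ₗ f) := by
  intro b d
  rw [LinearMap.comp_apply, constantCoeff_map_apply]
  exact Finset.sum_eq_zero fun c _ => by simp only [hf b c, zero_mul]

lemma IsGradedMap.constantCoeff_eq_zero {degB : B → ℕ} {degC : C → ℕ} {e : ℕ}
    {f : (B →₀ MvPolynomial σ R) →ₗ[MvPolynomial σ R] (C →₀ MvPolynomial σ R)}
    (hf : IsGradedMap degB degC e f) {b : B} {c : C} (h : degC c ≠ degB b + e) :
    constantCoeff (f (Finsupp.single b 1) c) = 0 := by
  by_contra h0
  rw [constantCoeff_eq] at h0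
  exact h (by simpa using hf b c 0 h0)

open scoped Classical in
lemma card_degree_eq_le {R : Type*} [CommRing R] [Nontrivial R] [Finite B] [Finite C]
    {degB : B → ℕ} {degC : C → ℕ}
    {φ : (B →₀ MvPolynomial σ R) →ₗ[MvPolynomial σ R] (C →₀ MvPolynomial σ R)}
    {ψ : (C →₀ MvPolynomial σ R) →ₗ[MvPolynomial σ R] (B →₀ MvPolynomial σ R)}
    (hφ : IsGradedMap degB degC 0 φ)
    (hψφ : ∀ x b, constantCoeff (ψ (φ x) b) = constantCoeff (x b)) (j : ℕ) :
    Nat.card {b // degB b = j} ≤ Nat.card {c // degC c = j} := by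
  cases nonempty_fintype B
  cases nonempty_fintype C
  let M : Matrix C B R := fun c b => constantCoeff (φ (Finsupp.single b 1) c)
  let N : Matrix B C R := fun b c => constantCoeff (ψ (Finsupp.single c 1) b)
  have hNM : N * M = 1 := by
    ext b b'
    have h := hψφ (Finsupp.single b' 1) b
    rw [constantCoeff_map_apply, Finsupp.sum_fintype _ _ (by simp)] at h
    rw [Matrix.mul_apply, Finset.sum_congr rfl fun c _ => mul_comm (N b c) (M c b'), h,
      Matrix.one_apply, Finsupp.single_apply]
    simp [eq_comm, apply_ite]
  have hM : M.toBlock (fun c => ¬ degC c = j) (fun b => degB b = j) = 0 := by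
    ext ⟨c, hc⟩ ⟨b, hb⟩
    exact hφ.constantCoeff_eq_zero (by rw [hb]; exact hc)
  have hblock : N.toBlock (fun b => degB b = j) (fun c => degC c = j) *
      M.toBlock (fun c => degC c = j) (fun b => degB b = j) = 1 := by
    have h := Matrix.toBlock_mul_eq_add (fun b => degB b = j) (fun c => degC c = j)
      (fun b => degB b = j) N M
    rwa [hM, Matrix.mul_zero, add_zero, hNM, Matrix.toBlock_one_self, eq_comm] at h
  calc Nat.card {b // degB b = j} = (1 : Matrix {b // degB b = j} {b // degB b = j} R).rank := by
        rw [Matrix.rank_one, Nat.card_eq_fintype_card]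
    _ ≤ (N.toBlock (fun b => degB b = j) (fun c => degC c = j)).rank := by
        rw [← hblock]
        exact Matrix.rank_mul_le_left _ _
    _ ≤ Nat.card {c // degC c = j} := by
        rw [Nat.card_eq_fintype_card]
        exact Matrix.rank_le_card_width _

end ConstantPart

/-! ### Uniqueness of Betti numbers -/

lemma exists_dependent_seq {α : ℕ → Type*} {P : ∀ i, α i → Prop} {r : ∀ i, α i → α (i + 1) → Prop}
    {a : α 0} (ha : P 0 a) (step : ∀ i a, P i a → ∃ b, P (i + 1) b ∧ r i a b) :
    ∃ s : ∀ i, α i, s 0 = a ∧ (∀ i, P i (s i)) ∧ ∀ i, r i (s i) (s (i + 1)) := by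
  choose next hP hr using step
  let s : ∀ i, {a // P i a} := Nat.rec ⟨a, ha⟩ fun i x => ⟨next i x.1 x.2, hP i x.1 x.2⟩
  exact ⟨fun i => (s i).1, rfl, fun i => (s i).2, fun i => hr i (s i).1 (s i).2⟩

namespace MinGradedFreeRes

variable {K : Type*} [Field K] {σ : Type*} {I J : Ideal (MvPolynomial σ K)}

section Basic

variable (F : MinGradedFreeRes K σ I)

lemma isGradedMap_d (i : ℕ) : IsGradedMap (F.deg (i + 1)) (F.deg i) 0 (F.d i) :=
  fun b c m hm => F.homog i b c m (mem_support_iff.2 hm)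

lemma isMinimalMap_d (i : ℕ) : IsMinimalMap (F.d i) := F.minimal i

lemma mem_range_d_zero {x : F.B 0 →₀ MvPolynomial σ K} :
    x ∈ LinearMap.range (F.d 0) ↔ F.ε x ∈ I := by
  rw [F.exact0]
  rfl

lemma mem_range_d_succ {i : ℕ} {x : F.B (i + 1) →₀ MvPolynomial σ K} :
    x ∈ LinearMap.range (F.d (i + 1)) ↔ F.d i x = 0 := by
  rw [F.exact, LinearMap.mem_ker]

lemma d_d (i : ℕ) (x : F.B (i + 2) →₀ MvPolynomial σ K) : F.d i (F.d (i + 1) x) = 0 :=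
  F.mem_range_d_succ.1 ⟨x, rfl⟩

lemma exists_ε_eq_one (hI : ∀ p ∈ I, constantCoeff p = 0) :
    ∃ t ∈ homogeneousVectors K σ (F.deg 0) 0, F.ε t = 1 := by
  classical
  obtain ⟨t, ht⟩ := F.surj 1
  have hgraded : IsGradedMap (F.deg 0) (fun _ : Unit => 0) 0 (Finsupp.lsingle () ∘ₗ F.ε) :=
    fun b => single_mem_homogeneousVectors (F.ε_homog b) rfl
  refine ⟨homogeneousPart K σ (F.deg 0) 0 t, homogeneousPart_mem _ _ _, ?_⟩
  have h := hgraded.map_homogeneousPart 0 t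
  ext m
  have hm : coeff m (F.ε (homogeneousPart K σ (F.deg 0) 0 t)) =
      if m.degree + 0 = 0 then coeff m (F.ε t) else 0 := by
    simpa [coeff_homogeneousPart] using congrArg (fun v => coeff m (v ())) h
  have hεt : constantCoeff (F.ε t) = 1 := by
    have := hI _ ht
    rwa [map_sub, map_one, sub_eq_zero] at this
  rw [constantCoeff_eq] at hεt
  simp only [hm, coeff_one, add_zero, Finsupp.degree_eq_zero_iff, eq_comm (a := m)]
  split_ifs with h0
  · rw [← h0, hεt]
  · rfl

end Basic

/-- A chain map of degree `e` between resolutions of `S/J` and `S/I` which lifts multiplication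
by `f : S/J → S/I`. -/
structure GradedLift (G : MinGradedFreeRes K σ J) (F : MinGradedFreeRes K σ I)
    (f : MvPolynomial σ K) (e : ℕ) where
  map : ∀ i, (G.B i →₀ MvPolynomial σ K) →ₗ[MvPolynomial σ K] (F.B i →₀ MvPolynomial σ K)
  isGradedMap : ∀ i, IsGradedMap (G.deg i) (F.deg i) e (map i)
  ε_map : ∀ x, F.ε (map 0 x) = f * G.ε x
  comm : ∀ i x, F.d i (map (i + 1) x) = map i (G.d i x)

lemma exists_gradedLift (G : MinGradedFreeRes K σ J) (F : MinGradedFreeRes K σ I)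
    (hI : ∀ p ∈ I, constantCoeff p = 0) {f : MvPolynomial σ K} {e : ℕ}
    (hf : f.IsHomogeneous e) (hJ : ∀ p ∈ J, f * p ∈ I) : Nonempty (GradedLift G F f e) := by
  obtain ⟨t, ht, hεt⟩ := F.exists_ε_eq_one hI
  let φ₀ := (f • G.ε).smulRight t
  have hε₀ (x) : F.ε (φ₀ x) = f * G.ε x := by simp [φ₀, hεt]
  have hφ₀ : IsGradedMap (G.deg 0) (F.deg 0) e φ₀ := fun b =>
    Nat.add_comm e _ ▸ smul_mem_homogeneousVectors (hf.mul (G.ε_homog b)) ht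
  have hrange₀ (x) : φ₀ (G.d 0 x) ∈ LinearMap.range (F.d 0) := by
    rw [F.mem_range_d_zero, hε₀]
    exact hJ _ (G.mem_range_d_zero.1 ⟨x, rfl⟩)
  obtain ⟨φ, hφ0, hφ, hcomm⟩ := exists_dependent_seq
    (P := fun i φ => IsGradedMap (G.deg i) (F.deg i) e φ ∧
      ∀ x, φ (G.d i x) ∈ LinearMap.range (F.d i))
    (r := fun i φ φ' => ∀ x, F.d i (φ' x) = φ (G.d i x)) ⟨hφ₀, hrange₀⟩
    (step := by
      rintro i φ ⟨hφ, hrange⟩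
      obtain ⟨φ', hφ', hcomm⟩ := (F.isGradedMap_d i).exists_graded_lift (g := φ ∘ₗ G.d i)
        (by simpa using hφ.comp (G.isGradedMap_d i)) fun x => hrange x
      refine ⟨φ', ⟨hφ', fun x => ?_⟩, hcomm⟩
      rw [F.mem_range_d_succ, hcomm, LinearMap.comp_apply, G.d_d, map_zero])
  exact ⟨⟨φ, fun i => (hφ i).1, hφ0 ▸ hε₀, hcomm⟩⟩

lemma exists_homotopy_id (F : MinGradedFreeRes K σ I)
    {χ : ∀ i, (F.B i →₀ MvPolynomial σ K) →ₗ[MvPolynomial σ K] (F.B i →₀ MvPolynomial σ K)}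
    (hε : ∀ x, F.ε (χ 0 x) = F.ε x) (hχ : ∀ i x, F.d i (χ (i + 1) x) = χ i (F.d i x)) :
    ∃ h : ∀ i, (F.B i →₀ MvPolynomial σ K) →ₗ[MvPolynomial σ K]
        (F.B (i + 1) →₀ MvPolynomial σ K),
      (∀ x, χ 0 x - x = F.d 0 (h 0 x)) ∧
        ∀ i x, χ (i + 1) x - x = F.d (i + 1) (h (i + 1) x) + h i (F.d i x) := by
  obtain ⟨h₀, hh₀⟩ := exists_lift_of_forall_mem_range (χ 0 - LinearMap.id) (F.d 0)
    fun x => F.mem_range_d_zero.2 (by simp [hε])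
  obtain ⟨h, h0, -, hr⟩ := exists_dependent_seq
    (α := fun i => (F.B i →₀ MvPolynomial σ K) →ₗ[MvPolynomial σ K]
      (F.B (i + 1) →₀ MvPolynomial σ K))
    (P := fun i h => ∀ x, F.d i (h (F.d i x)) = χ i (F.d i x) - F.d i x)
    (r := fun i h h' => ∀ x, F.d (i + 1) (h' x) = χ (i + 1) x - x - h (F.d i x))
    (fun x => hh₀ (F.d 0 x))
    (step := fun i h hP => by
      obtain ⟨h', hh'⟩ := exists_lift_of_forall_mem_range
        (χ (i + 1) - LinearMap.id - h ∘ₗ F.d i) (F.d (i + 1))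
        fun x => F.mem_range_d_succ.2 (by simp [hP, hχ])
      exact ⟨h', fun x => by simp [hh', F.d_d], hh'⟩)
  exact ⟨h, fun x => by rw [h0, hh₀]; rfl, fun i x => by rw [hr, sub_add_cancel]⟩

lemma constantCoeff_endomorphism_apply (F : MinGradedFreeRes K σ I)
    {χ : ∀ i, (F.B i →₀ MvPolynomial σ K) →ₗ[MvPolynomial σ K] (F.B i →₀ MvPolynomial σ K)}
    (hε : ∀ x, F.ε (χ 0 x) = F.ε x) (hχ : ∀ i x, F.d i (χ (i + 1) x) = χ i (F.d i x))
    (i : ℕ) (x : F.B i →₀ MvPolynomial σ K) (c : F.B i) :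
    constantCoeff (χ i x c) = constantCoeff (x c) := by
  obtain ⟨h, h0, hsucc⟩ := F.exists_homotopy_id hε hχ
  rw [← sub_eq_zero, ← map_sub, ← Finsupp.sub_apply]
  cases i with
  | zero =>
    rw [h0]
    exact (F.isMinimalMap_d 0).constantCoeff_apply _ c
  | succ i =>
    rw [hsucc, Finsupp.add_apply, map_add, (F.isMinimalMap_d _).constantCoeff_apply, zero_add]
    exact ((F.isMinimalMap_d i).comp_left (h i)).constantCoeff_apply x c

lemma betti_le (hI : ∀ p ∈ I, constantCoeff p = 0) (F G : MinGradedFreeRes K σ I) (i j : ℕ) :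
    F.betti i j ≤ G.betti i j := by
  obtain ⟨φ⟩ := exists_gradedLift F G hI (isHomogeneous_one σ K) (by simp)
  obtain ⟨ψ⟩ := exists_gradedLift G F hI (isHomogeneous_one σ K) (by simp)
  have := F.finB i
  have := G.finB i
  refine card_degree_eq_le (φ.isGradedMap i) (fun x c => ?_) j (ψ := ψ.map i)
  exact F.constantCoeff_endomorphism_apply (χ := fun i => ψ.map i ∘ₗ φ.map i)
    (by simp [ψ.ε_map, φ.ε_map]) (by simp [ψ.comm, φ.comm]) i x c

lemma betti_eq (hI : ∀ p ∈ I, constantCoeff p = 0) (F G : MinGradedFreeRes K σ I) :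
    F.betti = G.betti :=
  funext₂ fun i j => (betti_le hI F G i j).antisymm (betti_le hI G F i j)

end MinGradedFreeRes

/-! ### Mapping cones -/

section BlockTriangular

variable {R : Type*} [CommSemiring R] {A B C D : Type*}

/-- The map of free modules with the block matrix `[[d, φ], [0, d']]`. -/
noncomputable def blockTriangular (d : (A →₀ R) →ₗ[R] (C →₀ R)) (φ : (B →₀ R) →ₗ[R] (C →₀ R))
    (d' : (B →₀ R) →ₗ[R] (D →₀ R)) : (A ⊕ B →₀ R) →ₗ[R] (C ⊕ D →₀ R) :=
  (Finsupp.sumFinsuppLEquivProdFinsupp R).symm.toLinearMap ∘ₗ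
    ((d.coprod φ).prod (d' ∘ₗ LinearMap.snd R _ _)) ∘ₗ
      (Finsupp.sumFinsuppLEquivProdFinsupp R).toLinearMap

lemma exists_eq_sumElim (x : A ⊕ B →₀ R) : ∃ a b, x = Finsupp.sumElim a b :=
  ⟨_, _, (Finsupp.sumFinsuppEquivProdFinsupp.symm_apply_apply x).symm⟩

lemma sumElim_inj {a a' : A →₀ R} {b b' : B →₀ R} :
    Finsupp.sumElim a b = Finsupp.sumElim a' b' ↔ a = a' ∧ b = b' :=
  Finsupp.sumFinsuppEquivProdFinsupp.symm.injective.eq_iff.trans Prod.mk_inj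

lemma lcomapDomain_inl_sumElim (a : A →₀ R) (b : B →₀ R) :
    Finsupp.lcomapDomain (R := R) Sum.inl Sum.inl_injective (Finsupp.sumElim a b) = a :=
  Finsupp.comapDomain_inl_sumElim a b

lemma blockTriangular_sumElim (d : (A →₀ R) →ₗ[R] (C →₀ R)) (φ : (B →₀ R) →ₗ[R] (C →₀ R))
    (d' : (B →₀ R) →ₗ[R] (D →₀ R)) (a : A →₀ R) (b : B →₀ R) :
    blockTriangular d φ d' (Finsupp.sumElim a b) = Finsupp.sumElim (d a + φ b) (d' b) := by
  have h : Finsupp.sumFinsuppLEquivProdFinsupp R (Finsupp.sumElim a b) = (a, b) :=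
    Finsupp.sumFinsuppEquivProdFinsupp.apply_symm_apply (a, b)
  rw [blockTriangular, LinearMap.comp_apply, LinearMap.comp_apply, LinearEquiv.coe_coe,
    LinearEquiv.coe_coe, h]
  rfl

lemma blockTriangular_eq_zero_iff {d : (A →₀ R) →ₗ[R] (C →₀ R)} {φ : (B →₀ R) →ₗ[R] (C →₀ R)}
    {d' : (B →₀ R) →ₗ[R] (D →₀ R)} {a : A →₀ R} {b : B →₀ R} :
    blockTriangular d φ d' (Finsupp.sumElim a b) = 0 ↔ d a + φ b = 0 ∧ d' b = 0 := by
  rw [blockTriangular_sumElim, ← Finsupp.sumElim_zero_zero, sumElim_inj]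

lemma sumElim_mem_range_blockTriangular_iff {d : (A →₀ R) →ₗ[R] (C →₀ R)}
    {φ : (B →₀ R) →ₗ[R] (C →₀ R)} {d' : (B →₀ R) →ₗ[R] (D →₀ R)} {c : C →₀ R} {w : D →₀ R} :
    Finsupp.sumElim c w ∈ LinearMap.range (blockTriangular d φ d') ↔
      ∃ a b, d a + φ b = c ∧ d' b = w := by
  constructor
  · rintro ⟨x, hx⟩
    obtain ⟨a, b, rfl⟩ := exists_eq_sumElim x
    exact ⟨a, b, sumElim_inj.1 (blockTriangular_sumElim d φ d' a b ▸ hx)⟩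
  · rintro ⟨a, b, rfl, rfl⟩
    exact ⟨_, blockTriangular_sumElim d φ d' a b⟩

end BlockTriangular

section BlockTriangularEntries

variable {R : Type*} [CommSemiring R] {σ A B C D : Type*}
  {d : (A →₀ MvPolynomial σ R) →ₗ[MvPolynomial σ R] (C →₀ MvPolynomial σ R)}
  {φ : (B →₀ MvPolynomial σ R) →ₗ[MvPolynomial σ R] (C →₀ MvPolynomial σ R)}
  {d' : (B →₀ MvPolynomial σ R) →ₗ[MvPolynomial σ R] (D →₀ MvPolynomial σ R)}

lemma blockTriangular_single_inl (a : A) :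
    blockTriangular d φ d' (Finsupp.single (.inl a) 1) =
      Finsupp.sumElim (d (Finsupp.single a 1)) 0 := by
  rw [← Finsupp.sumElim_single_zero, blockTriangular_sumElim, map_zero, map_zero, add_zero]

lemma blockTriangular_single_inr (b : B) :
    blockTriangular d φ d' (Finsupp.single (.inr b) 1) =
      Finsupp.sumElim (φ (Finsupp.single b 1)) (d' (Finsupp.single b 1)) := by
  rw [← Finsupp.sumElim_zero_single, blockTriangular_sumElim, map_zero, zero_add]

lemma IsGradedMap.blockTriangular {degA : A → ℕ} {degB : B → ℕ} {degC : C → ℕ} {degD : D → ℕ}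
    {e : ℕ} (hd : IsGradedMap degA degC e d) (hφ : IsGradedMap degB degC e φ)
    (hd' : IsGradedMap degB degD e d') :
    IsGradedMap (Sum.elim degA degB) (Sum.elim degC degD) e (blockTriangular d φ d') := by
  rintro (a | b) (c | w) m hm
  · rw [blockTriangular_single_inl] at hm
    exact hd a c m hm
  · rw [blockTriangular_single_inl] at hm
    exact (hm (coeff_zero m)).elim
  · rw [blockTriangular_single_inr] at hm
    exact hφ b c m hm
  · rw [blockTriangular_single_inr] at hm
    exact hd' b w m hm

lemma IsMinimalMap.blockTriangular (hd : IsMinimalMap d) (hφ : IsMinimalMap φ)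
    (hd' : IsMinimalMap d') : IsMinimalMap (blockTriangular d φ d') := by
  rintro (a | b) (c | w)
  · rw [blockTriangular_single_inl]
    exact hd a c
  · rw [blockTriangular_single_inl]
    exact map_zero constantCoeff
  · rw [blockTriangular_single_inr]
    exact hφ b c
  · rw [blockTriangular_single_inr]
    exact hd' b w

end BlockTriangularEntries

namespace MinGradedFreeRes

variable {K : Type*} [Field K] {σ : Type*} {I J : Ideal (MvPolynomial σ K)}

/-- The basis of `G[-1]`. -/
abbrev shiftBasis (G : MinGradedFreeRes K σ J) : ℕ → Type
  | 0 => Empty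
  | i + 1 => G.B i

/-- The degrees of the basis of `G[-1](-e)`. -/
def shiftDeg (G : MinGradedFreeRes K σ J) (e : ℕ) : ∀ i, G.shiftBasis i → ℕ
  | 0 => Empty.elim
  | i + 1 => fun b => G.deg i b + e

/-- The differential `G[-1]_{i+1} → G[-1]_i` of `G[-1]`, with the usual sign. -/
noncomputable def shiftD (G : MinGradedFreeRes K σ J) :
    ∀ i, (G.B i →₀ MvPolynomial σ K) →ₗ[MvPolynomial σ K] (G.shiftBasis i →₀ MvPolynomial σ K)
  | 0 => 0
  | i + 1 => -G.d i

section Shift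

variable (G : MinGradedFreeRes K σ J)

instance (i : ℕ) : Finite (G.shiftBasis i) :=
  match i with
  | 0 => inferInstanceAs (Finite Empty)
  | i + 1 => G.finB i

lemma isGradedMap_shiftD (e : ℕ) :
    ∀ i, IsGradedMap (fun b => G.deg i b + e) (G.shiftDeg e i) 0 (G.shiftD i)
  | 0 => fun _ => Submodule.zero_mem _
  | i + 1 => fun b c m hm => by
    have h : m.degree + G.deg i c = G.deg (i + 1) b + 0 := G.isGradedMap_d i b c m fun h =>
      hm ((coeff_neg ..).trans (neg_eq_zero.2 h))
    change m.degree + (G.deg i c + e) = G.deg (i + 1) b + e + 0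
    omega

lemma isMinimalMap_shiftD : ∀ i, IsMinimalMap (G.shiftD i)
  | 0 => fun _ _ => map_zero constantCoeff
  | i + 1 => fun b c => (map_neg constantCoeff _).trans (neg_eq_zero.2 (G.isMinimalMap_d i b c))

lemma shiftD_succ_apply (i : ℕ) (b : G.B (i + 1) →₀ MvPolynomial σ K) :
    G.shiftD (i + 1) b = -G.d i b := rfl

lemma shiftD_d (i : ℕ) (b : G.B (i + 1) →₀ MvPolynomial σ K) : G.shiftD i (G.d i b) = 0 :=
  match i with
  | 0 => rfl
  | i + 1 => (congrArg Neg.neg (G.d_d i b)).trans neg_zero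

end Shift

section MappingCone

variable {F : MinGradedFreeRes K σ I} {G : MinGradedFreeRes K σ J} {f : MvPolynomial σ K} {e : ℕ}
  (φ : GradedLift G F f e)

lemma GradedLift.mem_range_d (hJ : ∀ p, f * p ∈ I → p ∈ J) {i : ℕ}
    {a : F.B (i + 1) →₀ MvPolynomial σ K} {b : G.B i →₀ MvPolynomial σ K}
    (hab : F.d i a + φ.map i b = 0) (hb : G.shiftD i b = 0) : b ∈ LinearMap.range (G.d i) := by
  cases i with
  | zero =>
    refine G.mem_range_d_zero.2 (hJ _ ?_)
    rw [← φ.ε_map, eq_neg_of_add_eq_zero_right hab, map_neg]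
    exact I.neg_mem (F.mem_range_d_zero.1 ⟨a, rfl⟩)
  | succ i => exact G.mem_range_d_succ.2 (neg_eq_zero.1 hb)

lemma GradedLift.blockTriangular_exact (hJ : ∀ p, f * p ∈ I → p ∈ J) (i : ℕ) :
    LinearMap.range (blockTriangular (F.d (i + 1)) (φ.map (i + 1)) (G.shiftD (i + 1))) =
      LinearMap.ker (blockTriangular (F.d i) (φ.map i) (G.shiftD i)) := by
  ext x
  obtain ⟨a, b, rfl⟩ := exists_eq_sumElim x
  rw [LinearMap.mem_ker, blockTriangular_eq_zero_iff, sumElim_mem_range_blockTriangular_iff]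
  constructor
  · rintro ⟨a, b, rfl, rfl⟩
    constructor
    · rw [map_add, F.d_d, φ.comm, G.shiftD_succ_apply, map_neg, zero_add, add_neg_cancel]
    · rw [G.shiftD_succ_apply, map_neg, G.shiftD_d, neg_zero]
  · rintro ⟨hab, hb⟩
    obtain ⟨b, rfl⟩ := φ.mem_range_d hJ hab hb
    obtain ⟨a', ha'⟩ := (F.mem_range_d_succ (x := a + φ.map (i + 1) b)).2 <| by
      rw [map_add, φ.comm, hab]
    exact ⟨a', -b, by rw [ha', map_neg, add_neg_cancel_right],
      by rw [G.shiftD_succ_apply, map_neg, neg_neg]⟩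

lemma GradedLift.mem_range_blockTriangular_zero (hJ : ∀ p, f * p ∈ I ↔ p ∈ J)
    (a : F.B 0 →₀ MvPolynomial σ K) (w : G.shiftBasis 0 →₀ MvPolynomial σ K) :
    Finsupp.sumElim a w ∈ LinearMap.range (blockTriangular (F.d 0) (φ.map 0) (G.shiftD 0)) ↔
      F.ε a ∈ I ⊔ Ideal.span {f} := by
  have hw : w = 0 := Finsupp.ext Empty.rec
  rw [sumElim_mem_range_blockTriangular_iff, hw]
  constructor
  · rintro ⟨a', b, rfl, -⟩
    rw [map_add, φ.ε_map]
    exact Submodule.add_mem_sup (F.mem_range_d_zero.1 ⟨a', rfl⟩)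
      (Ideal.mul_mem_right _ _ (Ideal.mem_span_singleton_self f))
  · intro h
    obtain ⟨p, hp, q, hq, hpq⟩ := Submodule.mem_sup.1 h
    obtain ⟨r, rfl⟩ := Ideal.mem_span_singleton.1 hq
    obtain ⟨b, hb⟩ := G.surj r
    obtain ⟨a', ha'⟩ := (F.mem_range_d_zero (x := a - φ.map 0 b)).2 <| by
      have : F.ε (a - φ.map 0 b) = p - f * (G.ε b - r) := by
        rw [map_sub, φ.ε_map, ← hpq]
        ring
      rw [this]
      exact I.sub_mem hp ((hJ _).2 hb)
    exact ⟨a', b, by rw [ha', sub_add_cancel], rfl⟩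

/-- The mapping cone of a lift `φ : G(-e) → F` of multiplication by `f : S/(I : f) → S/I`,
which resolves `S/(I + (f))`. -/
noncomputable def GradedLift.mappingCone (hJ : ∀ p, f * p ∈ I ↔ p ∈ J)
    (hφ : ∀ i, IsMinimalMap (φ.map i)) : MinGradedFreeRes K σ (I ⊔ Ideal.span {f}) where
  B i := F.B i ⊕ G.shiftBasis i
  finB i := have := F.finB i; inferInstance
  deg i := Sum.elim (F.deg i) (G.shiftDeg e i)
  d i := blockTriangular (F.d i) (φ.map i) (G.shiftD i)
  ε := F.ε ∘ₗ Finsupp.lcomapDomain Sum.inl Sum.inl_injective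
  ε_homog
    | .inl b => by
      rw [← Finsupp.sumElim_single_zero, LinearMap.comp_apply, lcomapDomain_inl_sumElim]
      exact F.ε_homog b
    | .inr b => b.elim
  surj s := by
    obtain ⟨t, ht⟩ := F.surj s
    refine ⟨Finsupp.sumElim t 0, ?_⟩
    rw [LinearMap.comp_apply, lcomapDomain_inl_sumElim]
    exact Submodule.mem_sup_left ht
  exact0 := by
    ext x
    obtain ⟨a, w, rfl⟩ := exists_eq_sumElim x
    rw [φ.mem_range_blockTriangular_zero hJ, Submodule.mem_comap, LinearMap.comp_apply,
      lcomapDomain_inl_sumElim]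
  exact := φ.blockTriangular_exact fun p => (hJ p).1
  homog i b c m hm := ((F.isGradedMap_d i).blockTriangular (φ.isGradedMap i)
    (G.isGradedMap_shiftD e i)) b c m (mem_support_iff.1 hm)
  minimal i := (F.isMinimalMap_d i).blockTriangular (hφ i) (G.isMinimalMap_shiftD i)

lemma GradedLift.betti_mappingCone (hJ : ∀ p, f * p ∈ I ↔ p ∈ J) (hφ : ∀ i, IsMinimalMap (φ.map i))
    (i j : ℕ) : (φ.mappingCone hJ hφ).betti i j =
      F.betti i j + Nat.card {b : G.shiftBasis i // G.shiftDeg e i b = j} := by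
  have := F.finB i
  rw [betti, betti, ← Nat.card_sum]
  exact Nat.card_congr Equiv.subtypeSum

end MappingCone

end MinGradedFreeRes

/-! ### Betti tables and linear quotients -/

/-- The Betti table of `G[-1](-e)`, where `γ` is the Betti table of `G`. -/
def shiftedTable (e : ℕ) (γ : ℕ → ℕ → ℕ) : ℕ → ℕ → ℕ
  | 0, _ => 0
  | i + 1, j => if e ≤ j then γ i (j - e) else 0

/-- The Betti table of the residue ring modulo `q` variables. -/
def koszulTable (q i j : ℕ) : ℕ := if i = j then q.choose i else 0

lemma shiftedTable_koszulTable_succ (e q i j : ℕ) :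
    shiftedTable e (koszulTable q) (i + 1) j = if j = i + e then q.choose i else 0 := by
  simp only [shiftedTable, koszulTable]
  split_ifs <;> first | rfl | omega

lemma koszulTable_add_shiftedTable (q : ℕ) :
    koszulTable q + shiftedTable 1 (koszulTable q) = koszulTable (q + 1) := by
  funext i j
  cases i with
  | zero => simp [koszulTable, shiftedTable]
  | succ i =>
    rw [Pi.add_apply, Pi.add_apply, shiftedTable_koszulTable_succ]
    simp only [koszulTable, eq_comm (a := j)]
    split_ifs
    · rw [add_comm, Nat.choose_succ_succ]
    · rfl

section BettiTable

variable {K : Type*} [Field K] {σ : Type*}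

/-- Some minimal graded free resolution of `S/I` has Betti table `β`. -/
def HasBettiTable (I : Ideal (MvPolynomial σ K)) (β : ℕ → ℕ → ℕ) : Prop :=
  ∃ F : MinGradedFreeRes K σ I, F.betti = β

namespace MinGradedFreeRes

variable {I J : Ideal (MvPolynomial σ K)}

lemma betti_deg_ne_zero (F : MinGradedFreeRes K σ I) {i : ℕ} (b : F.B i) :
    F.betti i (F.deg i b) ≠ 0 :=
  have := F.finB i
  have : Nonempty {c // F.deg i c = F.deg i b} := ⟨⟨b, rfl⟩⟩
  Nat.card_pos.ne'

lemma card_shiftDeg_eq (G : MinGradedFreeRes K σ J) (e i j : ℕ) :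
    Nat.card {b : G.shiftBasis i // G.shiftDeg e i b = j} = shiftedTable e G.betti i j := by
  cases i with
  | zero => exact Nat.card_eq_zero.2 (.inl ⟨fun b => b.1.elim⟩)
  | succ i =>
    change Nat.card {b // G.deg i b + e = j} = if e ≤ j then G.betti i (j - e) else 0
    split_ifs with h
    · exact Nat.card_congr (Equiv.subtypeEquivRight fun b => by omega)
    · have : IsEmpty {b // G.deg i b + e = j} := ⟨fun b => h (b.2 ▸ Nat.le_add_left _ _)⟩
      exact Nat.card_of_isEmpty

/-- The resolution `0 → S → S → 0` of `S/0`. -/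
noncomputable def ofBot (K σ : Type*) [Field K] : MinGradedFreeRes K σ ⊥ where
  B i := PLift (i = 0)
  finB _ := inferInstance
  deg _ _ := 0
  d _ := 0
  ε := Finsupp.lapply ⟨rfl⟩
  ε_homog b := by simpa using isHomogeneous_one σ K
  surj s := ⟨Finsupp.single ⟨rfl⟩ s, by simp⟩
  exact0 := by
    have h : Function.Injective (Finsupp.lapply ⟨rfl⟩ :
        (PLift (0 = 0) →₀ MvPolynomial σ K) →ₗ[MvPolynomial σ K] MvPolynomial σ K) :=
      fun x y hxy => Finsupp.ext fun _ => hxy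
    rw [LinearMap.range_zero, Submodule.comap_bot, LinearMap.ker_eq_bot.2 h]
  exact i := by
    have : IsEmpty (PLift (i + 1 = 0)) := ⟨fun b => Nat.succ_ne_zero i b.down⟩
    exact Subsingleton.elim _ _
  homog _ b := absurd b.down (Nat.succ_ne_zero _)
  minimal _ b := absurd b.down (Nat.succ_ne_zero _)

lemma betti_ofBot : (ofBot K σ).betti = koszulTable 0 := by
  funext i j
  change Nat.card {_b : PLift (i = 0) // 0 = j} = if i = j then Nat.choose 0 i else 0
  by_cases h : i = 0 ∧ j = 0
  · obtain ⟨rfl, rfl⟩ := h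
    exact Nat.card_eq_one_iff_unique.2 ⟨inferInstance, ⟨⟨⟨rfl⟩, rfl⟩⟩⟩
  · have : IsEmpty {_b : PLift (i = 0) // 0 = j} := ⟨fun b => h ⟨b.1.down, b.2.symm⟩⟩
    rw [Nat.card_of_isEmpty]
    split_ifs with hij
    · exact (Nat.choose_eq_zero_of_lt (by omega)).symm
    · rfl

end MinGradedFreeRes

lemma hasBettiTable_bot : HasBettiTable (⊥ : Ideal (MvPolynomial σ K)) (koszulTable 0) :=
  ⟨.ofBot K σ, MinGradedFreeRes.betti_ofBot⟩

lemma HasBettiTable.sup_span_singleton {I J : Ideal (MvPolynomial σ K)} {β γ : ℕ → ℕ → ℕ}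
    (hβ : HasBettiTable I β) (hγ : HasBettiTable J γ) (hI : ∀ p ∈ I, constantCoeff p = 0)
    {f : MvPolynomial σ K} {e : ℕ} (hf : f.IsHomogeneous e) (hJ : ∀ p, f * p ∈ I ↔ p ∈ J)
    (hβγ : ∀ i j l, β i j ≠ 0 → γ i l ≠ 0 → j ≠ l + e) :
    HasBettiTable (I ⊔ Ideal.span {f}) (β + shiftedTable e γ) := by
  obtain ⟨F, rfl⟩ := hβ
  obtain ⟨G, rfl⟩ := hγ
  obtain ⟨φ⟩ := MinGradedFreeRes.exists_gradedLift G F hI hf fun p => (hJ p).2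
  have hφ (i) : IsMinimalMap (φ.map i) := fun b c => (φ.isGradedMap i).constantCoeff_eq_zero
    (hβγ i _ _ (F.betti_deg_ne_zero c) (G.betti_deg_ne_zero b))
  refine ⟨φ.mappingCone hJ hφ, funext₂ fun i j => ?_⟩
  rw [φ.betti_mappingCone, G.card_shiftDeg_eq, Pi.add_apply, Pi.add_apply]

lemma X_mul_mem_span_X_image_iff {s : Set σ} {a : σ} (ha : a ∉ s) {p : MvPolynomial σ K} :
    X a * p ∈ Ideal.span (X '' s) ↔ p ∈ Ideal.span (X '' s) := by
  rw [mem_ideal_span_X_image, mem_ideal_span_X_image, support_X_mul]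
  simp only [Finset.forall_mem_map, addLeftEmbedding_apply, Finsupp.add_apply]
  refine forall₂_congr fun m _ => exists_congr fun i => and_congr_right fun hi => ?_
  rw [Finsupp.single_eq_of_ne (by rintro rfl; exact ha hi), zero_add]

lemma constantCoeff_eq_zero_of_mem_span_X_image {s : Set σ} {p : MvPolynomial σ K}
    (hp : p ∈ Ideal.span (X '' s)) : constantCoeff p = 0 := by
  by_contra h
  obtain ⟨i, -, hi⟩ := mem_ideal_span_X_image.1 hp 0 (mem_support_iff.2 h)
  exact hi rfl

lemma hasBettiTable_span_X_image (s : Finset σ) :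
    HasBettiTable (Ideal.span (X '' (s : Set σ)) : Ideal (MvPolynomial σ K))
      (koszulTable s.card) := by
  classical
  induction s using Finset.induction_on with
  | empty => simpa using hasBettiTable_bot
  | insert a s ha ih =>
    have h := ih.sup_span_singleton ih (fun p => constantCoeff_eq_zero_of_mem_span_X_image)
      (isHomogeneous_X K a) (fun p => X_mul_mem_span_X_image_iff (Finset.mem_coe.not.2 ha)) ?_
    · rwa [koszulTable_add_shiftedTable, ← Ideal.span_union, Set.union_singleton,
        ← Set.image_insert_eq, ← Finset.coe_insert, ← Finset.card_insert_of_notMem ha] at h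
    · intro i j l hj hl
      rw [koszulTable, ite_ne_right_iff] at hj hl
      omega

end BettiTable

section MonomialIdeal

variable {K : Type*} [Field K] {σ : Type*}

/-- The monomial ideal generated by the monomials with exponents in `E`. -/
noncomputable def monomialIdeal (K : Type*) [Field K] {σ : Type*} (E : Set (σ →₀ ℕ)) :
    Ideal (MvPolynomial σ K) :=
  Ideal.span ((fun u => monomial u 1) '' E)

lemma mem_monomialIdeal {E : Set (σ →₀ ℕ)} {p : MvPolynomial σ K} :
    p ∈ monomialIdeal K E ↔ ∀ m ∈ p.support, ∃ u ∈ E, u ≤ m :=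
  mem_ideal_span_monomial_image

lemma monomialIdeal_insert (u : σ →₀ ℕ) (E : Set (σ →₀ ℕ)) :
    monomialIdeal K (insert u E) = monomialIdeal K E ⊔ Ideal.span {monomial u 1} := by
  rw [monomialIdeal, Set.image_insert_eq, Ideal.span_insert, sup_comm, monomialIdeal]

lemma constantCoeff_eq_zero_of_mem_monomialIdeal {E : Set (σ →₀ ℕ)} (hE : 0 ∉ E)
    {p : MvPolynomial σ K} (hp : p ∈ monomialIdeal K E) : constantCoeff p = 0 := by
  by_contra h
  obtain ⟨u, hu, hu0⟩ := mem_monomialIdeal.1 hp 0 (mem_support_iff.2 h)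
  exact hE (nonpos_iff_eq_zero.1 hu0 ▸ hu)

lemma monomial_mul_mem_monomialIdeal_iff {E : Set (σ →₀ ℕ)} {u : σ →₀ ℕ}
    {p : MvPolynomial σ K} :
    monomial u 1 * p ∈ monomialIdeal K E ↔ ∀ m ∈ p.support, ∃ w ∈ E, w ≤ u + m := by
  rw [mem_monomialIdeal]
  constructor
  · intro h m hm
    exact h (u + m) (by rwa [mem_support_iff, coeff_monomial_mul, one_mul, ← mem_support_iff])
  · intro h k hk
    rw [mem_support_iff, coeff_monomial_mul', ite_ne_right_iff, one_mul] at hk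
    simpa [hk.1] using h (k - u) (mem_support_iff.2 hk.2)

/-- Linear quotients: the monomials `u k`, `k ∈ T`, generate an ideal such that the colon ideal
`(u j : j < k) : u k` is generated by the variables in `s k`. -/
def HasLinearQuotients {ι : Type*} [LinearOrder ι] (T : Finset ι) (u : ι → σ →₀ ℕ)
    (s : ι → Finset σ) : Prop :=
  ∀ k ∈ T, ∀ m : σ →₀ ℕ, (∃ j ∈ T, j < k ∧ u j ≤ u k + m) ↔ ∃ i ∈ s k, m i ≠ 0

/-- The Betti table of a graded ideal with linear quotients, according to the iterated mapping
cone construction. -/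
noncomputable def linearQuotientsTable {ι : Type*} (T : Finset ι) (u : ι → σ →₀ ℕ)
    (s : ι → Finset σ) : ℕ → ℕ → ℕ :=
  koszulTable 0 + ∑ k ∈ T, shiftedTable (u k).degree (koszulTable (s k).card)

lemma linearQuotientsTable_insert {ι : Type*} [DecidableEq ι] {T : Finset ι} {k : ι} (hk : k ∉ T)
    (u : ι → σ →₀ ℕ) (s : ι → Finset σ) : linearQuotientsTable (insert k T) u s =
      linearQuotientsTable T u s + shiftedTable (u k).degree (koszulTable (s k).card) := by
  rw [linearQuotientsTable, Finset.sum_insert hk, add_comm (shiftedTable _ _), ← add_assoc,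
    linearQuotientsTable]

lemma linearQuotientsTable_succ {ι : Type*} (T : Finset ι) (u : ι → σ →₀ ℕ)
    (s : ι → Finset σ) (i j : ℕ) : linearQuotientsTable T u s (i + 1) j =
      ∑ k ∈ T, if j = i + (u k).degree then (s k).card.choose i else 0 := by
  simp only [linearQuotientsTable, Pi.add_apply, Finset.sum_apply, shiftedTable_koszulTable_succ]
  simp [koszulTable]

lemma lt_add_of_linearQuotientsTable_ne_zero {ι : Type*} {T : Finset ι} {u : ι → σ →₀ ℕ}
    {s : ι → Finset σ} {e : ℕ} (he : 0 < e) (hT : ∀ k ∈ T, (u k).degree ≤ e) {i j : ℕ}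
    (h : linearQuotientsTable T u s i j ≠ 0) : j < i + e := by
  cases i with
  | zero =>
    have hj : 0 = j := by
      by_contra hj
      simp [linearQuotientsTable, koszulTable, shiftedTable, hj] at h
    omega
  | succ i =>
    rw [linearQuotientsTable_succ] at h
    obtain ⟨k, hk, hne⟩ := Finset.exists_ne_zero_of_sum_ne_zero h
    have hj : j = i + (u k).degree := (ite_ne_right_iff.1 hne).1
    have := hT k hk
    omega

section LinearQuotients

variable {ι : Type*} [LinearOrder ι] {T : Finset ι} {u : ι → σ →₀ ℕ} {s : ι → Finset σ}

lemma HasLinearQuotients.of_insert {k : ι} (h : HasLinearQuotients (insert k T) u s)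
    (hk : ∀ j ∈ T, j < k) : HasLinearQuotients T u s := by
  intro l hl m
  rw [← h l (Finset.mem_insert_of_mem hl) m]
  simp only [Finset.exists_mem_insert, (hk l hl).not_gt, false_and, false_or]

lemma HasLinearQuotients.monomial_mul_mem_iff {k : ι} (h : HasLinearQuotients (insert k T) u s)
    (hk : ∀ j ∈ T, j < k) (p : MvPolynomial σ K) :
    monomial (u k) 1 * p ∈ monomialIdeal K (u '' T) ↔ p ∈ Ideal.span (X '' (s k : Set σ)) := by
  rw [monomial_mul_mem_monomialIdeal_iff, mem_ideal_span_X_image]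
  refine forall₂_congr fun m _ => ?_
  rw [Set.exists_mem_image]
  simp only [Finset.mem_coe]
  rw [← h k (Finset.mem_insert_self k T) m]
  simp only [Finset.exists_mem_insert, lt_irrefl, false_and, false_or]
  exact exists_congr fun j => and_congr_right fun hj => (and_iff_right (hk j hj)).symm

theorem HasLinearQuotients.hasBettiTable (h : HasLinearQuotients T u s) (hu : ∀ k ∈ T, u k ≠ 0)
    (hdeg : MonotoneOn (fun k => (u k).degree) T) :
    HasBettiTable (monomialIdeal K (u '' T)) (linearQuotientsTable T u s) := by
  induction T using Finset.induction_on_max with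
  | empty => simpa [monomialIdeal, linearQuotientsTable] using hasBettiTable_bot
  | insert k T hk ih =>
    rw [Finset.coe_insert] at hdeg
    have hT := ih (h.of_insert hk) (fun j hj => hu j (Finset.mem_insert_of_mem hj))
      (hdeg.mono (Set.subset_insert _ _))
    have h0 : 0 ∉ u '' T := by
      rintro ⟨j, hj, hj0⟩
      exact hu j (Finset.mem_insert_of_mem hj) hj0
    have hpos : 0 < (u k).degree := Nat.pos_of_ne_zero <|
      (Finsupp.degree_eq_zero_iff _).not.2 (hu k (Finset.mem_insert_self k T))
    have hle (j) (hj : j ∈ T) : (u j).degree ≤ (u k).degree :=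
      hdeg (Set.mem_insert_of_mem k hj) (Set.mem_insert k _) (hk j hj).le
    have hstep := hT.sup_span_singleton (hasBettiTable_span_X_image (s k))
      (fun p => constantCoeff_eq_zero_of_mem_monomialIdeal h0)
      (isHomogeneous_monomial 1 rfl) (h.monomial_mul_mem_iff hk) ?_
    · rwa [Finset.coe_insert, Set.image_insert_eq, monomialIdeal_insert,
        linearQuotientsTable_insert fun hkT => (hk k hkT).false]
    · intro i j l hj hl
      rw [koszulTable, ite_ne_right_iff] at hl
      have := lt_add_of_linearQuotientsTable_ne_zero hpos hle hj
      omega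

end LinearQuotients

end MonomialIdeal

/-! ### The initial ideal of the diamond lattice -/

section Diamond

variable {n : ℕ}

/-- The index of the variable `y_{a+1}`. -/
def yVar : Fin n ↪ Fin (n + 2) := (Fin.succEmb n).trans Fin.castSuccEmb

/-- Labels `(c, a)`, `a < c`, of the generators of `in_<(I)`: those with `c < n` stand for
`y_{a+1} y_{c+1}`, and `(n, a)` stands for the generator divisible by `x y_{a+1} z`. The order is
lexicographic. -/
def diamondLabels (n : ℕ) : Finset (Fin (n + 1) ×ₗ Fin n) :=
  {k | (ofLex k).2.castSucc < (ofLex k).1}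

/-- The exponent of the generator of `in_<(I)` with label `k`. -/
noncomputable def diamondExp (k : Fin (n + 1) ×ₗ Fin n) : Fin (n + 2) →₀ ℕ :=
  Fin.lastCases (motive := fun _ => Fin (n + 2) →₀ ℕ)
    (.single 0 1 + .single (yVar (ofLex k).2) (if ((ofLex k).2 : ℕ) < n - 1 then 1 else 2) +
      .single (Fin.last (n + 1)) 1)
    (fun b => .single (yVar (ofLex k).2) 1 + .single (yVar b) 1) (ofLex k).1

/-- The variables generating the colon ideal of the generators preceding `k` by that of `k`. -/
def diamondColonVars (k : Fin (n + 1) ×ₗ Fin n) : Finset (Fin (n + 2)) :=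
  ({l | l.castSucc < (ofLex k).1 ∧ l ≠ (ofLex k).2} : Finset (Fin n)).map yVar

lemma mem_diamondLabels {c : Fin (n + 1)} {a : Fin n} :
    toLex (c, a) ∈ diamondLabels n ↔ a.castSucc < c := by
  simp [diamondLabels]

lemma mem_diamondColonVars {c : Fin (n + 1)} {a l : Fin n} :
    yVar l ∈ diamondColonVars (toLex (c, a)) ↔ l.castSucc < c ∧ l ≠ a := by
  rw [diamondColonVars, Finset.mem_map', Finset.mem_filter_univ]
  rfl

lemma diamondExp_castSucc (b a : Fin n) :
    diamondExp (toLex (b.castSucc, a)) = .single (yVar a) 1 + .single (yVar b) 1 :=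
  Fin.lastCases_castSucc ..

lemma diamondExp_last (a : Fin n) :
    diamondExp (toLex (Fin.last n, a)) = .single 0 1 +
      .single (yVar a) (if (a : ℕ) < n - 1 then 1 else 2) + .single (Fin.last (n + 1)) 1 :=
  Fin.lastCases_last ..

lemma diamondExp_yVar_ne_zero_iff {c : Fin (n + 1)} {a l : Fin n} :
    diamondExp (toLex (c, a)) (yVar l) ≠ 0 ↔ l = a ∨ l.castSucc = c := by
  have hx : yVar l ≠ 0 := by simp [yVar, Fin.ext_iff]
  have hz : yVar l ≠ Fin.last (n + 1) := (Fin.castSucc_lt_last _).ne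
  cases c using Fin.lastCases with
  | last =>
    have hl : l.castSucc ≠ Fin.last n := (Fin.castSucc_lt_last _).ne
    rw [diamondExp_last]
    split_ifs <;> simp [Finsupp.single_apply, hx.symm, hz.symm, hl, eq_comm]
  | cast b => simp [diamondExp_castSucc, Finsupp.single_apply, imp_iff_not_or, eq_comm]

lemma diamondExp_ne_zero (k : Fin (n + 1) ×ₗ Fin n) : diamondExp k ≠ 0 := fun h =>
  diamondExp_yVar_ne_zero_iff.2 (.inl rfl) (DFunLike.congr_fun h (yVar (ofLex k).2))

lemma degree_diamondExp (c : Fin (n + 1)) (a : Fin n) : (diamondExp (toLex (c, a))).degree =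
    if c = Fin.last n then if (a : ℕ) < n - 1 then 3 else 4 else 2 := by
  cases c using Fin.lastCases with
  | last =>
    rw [diamondExp_last, if_pos rfl]
    split_ifs <;> simp
  | cast b => simp [diamondExp_castSucc]

lemma monotone_degree_diamondExp :
    Monotone fun k : Fin (n + 1) ×ₗ Fin n => (diamondExp k).degree := by
  rintro ⟨c, a⟩ ⟨c', a'⟩ h
  have h : c < c' ∨ c = c' ∧ a ≤ a' := Prod.Lex.toLex_le_toLex.1 h
  change (diamondExp (toLex (c, a))).degree ≤ (diamondExp (toLex (c', a'))).degree
  rw [degree_diamondExp, degree_diamondExp]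
  simp only [Fin.ext_iff, Fin.lt_def, Fin.le_def, Fin.val_last] at *
  split_ifs <;> omega

lemma exists_diamondExp_eq {a b : Fin n} (hab : a ≠ b) {c : Fin (n + 1)}
    (ha : a.castSucc < c) (hb : b.castSucc < c) :
    ∃ j ∈ diamondLabels n, (ofLex j).1 < c ∧
      diamondExp j = .single (yVar a) 1 + .single (yVar b) 1 := by
  rcases hab.lt_or_gt with h | h
  · exact ⟨toLex (b.castSucc, a), mem_diamondLabels.2 h, hb, diamondExp_castSucc b a⟩
  · exact ⟨toLex (a.castSucc, b), mem_diamondLabels.2 h, ha,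
      (diamondExp_castSucc a b).trans (add_comm _ _)⟩

lemma exists_mem_diamondColonVars_of_lt {j k : Fin (n + 1) ×ₗ Fin n} (hj : j ∈ diamondLabels n)
    (hk : k ∈ diamondLabels n) (hjk : j < k) :
    ∃ i ∈ diamondColonVars k, diamondExp j i ≠ 0 ∧ diamondExp k i = 0 := by
  obtain ⟨c', a'⟩ := j
  obtain ⟨c, a⟩ := k
  have ha' : a'.castSucc < c' := mem_diamondLabels.1 hj
  have hjk : c' < c ∨ c' = c ∧ a' < a := Prod.Lex.toLex_lt_toLex.1 hjk
  obtain ⟨l, hl, hlc, hla⟩ : ∃ l : Fin n, (l = a' ∨ l.castSucc = c') ∧ l.castSucc < c ∧ l ≠ a := by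
    obtain hc | ⟨rfl, h⟩ := hjk
    · obtain ⟨b', rfl⟩ := Fin.exists_castSucc_eq.2 (hc.trans_le (Fin.le_last c)).ne
      obtain h | rfl := ne_or_eq a' a
      · exact ⟨a', .inl rfl, ha'.trans hc, h⟩
      · exact ⟨b', .inr rfl, hc, fun h => ha'.ne' (congrArg Fin.castSucc h)⟩
    · exact ⟨a', .inl rfl, ha', h.ne⟩
  refine ⟨yVar l, mem_diamondColonVars.2 ⟨hlc, hla⟩, diamondExp_yVar_ne_zero_iff.2 hl, ?_⟩
  exact not_not.1 (diamondExp_yVar_ne_zero_iff.not.2 (not_or.2 ⟨hla, hlc.ne⟩))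

lemma hasLinearQuotients_diamond :
    HasLinearQuotients (diamondLabels n) diamondExp diamondColonVars := by
  intro k hk m
  constructor
  · rintro ⟨j, hj, hjk, hle⟩
    obtain ⟨i, hi, hij, hik⟩ := exists_mem_diamondColonVars_of_lt hj hk hjk
    refine ⟨i, hi, fun hm => hij ?_⟩
    simpa [hik, hm] using hle i
  · rintro ⟨i, hi, hm⟩
    obtain ⟨c, a⟩ := k
    obtain ⟨l, -, rfl⟩ := Finset.mem_map.1 hi
    obtain ⟨hlc, hla⟩ := mem_diamondColonVars.1 hi
    obtain ⟨j, hj, hjc, hju⟩ := exists_diamondExp_eq hla.symm (mem_diamondLabels.1 hk) hlc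
    refine ⟨j, hj, Prod.Lex.lt_iff.2 (.inl hjc), hju ▸ add_le_add ?_ ?_⟩
    · exact Finsupp.single_le_iff.2 (Nat.one_le_iff_ne_zero.2
        (diamondExp_yVar_ne_zero_iff.2 (.inl rfl)))
    · exact Finsupp.single_le_iff.2 (Nat.one_le_iff_ne_zero.2 hm)

lemma card_diamondColonVars_last (a : Fin n) :
    (diamondColonVars (toLex (Fin.last n, a))).card = n - 1 := by
  simp [diamondColonVars, Fin.castSucc_lt_last, Finset.filter_ne']

lemma monomial_diamondExp_castSucc (K : Type*) [Field K] (b a : Fin n) :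
    monomial (diamondExp (toLex (b.castSucc, a))) 1 = yP K n a * yP K n b := by
  rw [diamondExp_castSucc, ← one_mul (1 : K), ← monomial_mul]
  rfl

lemma monomial_diamondExp_last (K : Type*) [Field K] (a : Fin n) :
    monomial (diamondExp (toLex (Fin.last n, a))) 1 =
      xP K n * yP K n a ^ (if (a : ℕ) < n - 1 then 1 else 2) * zP K n := by
  rw [diamondExp_last, monomial_add_single, monomial_add_single, pow_one]
  rfl

lemma diamondIni_eq_monomialIdeal (K : Type*) [Field K] (hn : 1 ≤ n) :
    diamondIni K n hn = monomialIdeal K (diamondExp '' diamondLabels n) := by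
  refine congrArg Ideal.span (Set.Subset.antisymm ?_ ?_)
  · rintro f ((⟨a, b, hab, rfl⟩ | ⟨a, ha, rfl⟩) | rfl)
    · exact ⟨_, ⟨_, mem_diamondLabels.2 hab, rfl⟩, monomial_diamondExp_castSucc K b a⟩
    · refine ⟨_, ⟨_, mem_diamondLabels.2 a.castSucc_lt_last, rfl⟩, ?_⟩
      exact (monomial_diamondExp_last K a).trans (by rw [if_pos ha, pow_one])
    · refine ⟨_, ⟨_, mem_diamondLabels.2 (Fin.castSucc_lt_last ⟨n - 1, by omega⟩), rfl⟩, ?_⟩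
      exact (monomial_diamondExp_last K _).trans (by rw [if_neg (lt_irrefl _)])
  · rintro _ ⟨_, ⟨⟨c, a⟩, hk, rfl⟩, rfl⟩
    have hac : a.castSucc < c := mem_diamondLabels.1 hk
    cases c using Fin.lastCases with
    | last =>
      by_cases ha : (a : ℕ) < n - 1
      · refine .inl (.inr ⟨a, ha, ?_⟩)
        exact (monomial_diamondExp_last K a).trans (by rw [if_pos ha, pow_one])
      · have ha' : a = ⟨n - 1, by omega⟩ := Fin.ext (by dsimp; omega)
        exact .inr ((monomial_diamondExp_last K a).trans (by rw [if_neg ha, ha']))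
    | cast b => exact .inl (.inl ⟨a, b, hac, monomial_diamondExp_castSucc K b a⟩)

lemma filter_degree_diamondExp_eq_three :
    {k ∈ diamondLabels n | (diamondExp k).degree = 3} =
      Finset.image (fun a : Fin n => toLex (Fin.last n, a)) {a | (a : ℕ) < n - 1} := by
  ext ⟨c, a⟩
  change toLex (c, a) ∈ _ ↔ toLex (c, a) ∈ _
  rw [Finset.mem_filter, mem_diamondLabels, degree_diamondExp]
  simp only [Finset.mem_image, Finset.mem_filter_univ, EmbeddingLike.apply_eq_iff_eq,
    Prod.mk.injEq]
  constructor
  · rintro ⟨-, h⟩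
    split_ifs at h with hc ha
    · exact ⟨a, ha, hc.symm, rfl⟩
    all_goals contradiction
  · rintro ⟨a, ha, rfl, rfl⟩
    exact ⟨a.castSucc_lt_last, by rw [if_pos rfl, if_pos ha]⟩

lemma linearQuotientsTable_diamond (n i : ℕ) :
    linearQuotientsTable (diamondLabels n) diamondExp diamondColonVars (i + 1) (i + 3) =
      (n - 1) * (n - 1).choose i := by
  simp only [linearQuotientsTable_succ, Nat.add_left_cancel_iff, eq_comm (a := 3)]
  rw [← Finset.sum_filter, filter_degree_diamondExp_eq_three, Finset.sum_image (by simp)]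
  simp only [card_diamondColonVars_last, Finset.sum_const, Fin.card_filter_val_lt, smul_eq_mul]
  rw [min_eq_right (Nat.sub_le n 1)]

end Diamond

theorem diamond_ini_betti_n_np2_general (K : Type*) [Field K] (n : ℕ) (hn : 1 ≤ n) :
    Nonempty (MinGradedFreeRes K (Fin (n + 2)) (diamondIni K n hn)) ∧
      ∀ (F : MinGradedFreeRes K (Fin (n + 2)) (diamondIni K n hn)) (i : ℕ),
        F.betti (i + 1) (i + 3) = (n - 1) * (n - 1).choose i := by
  rw [diamondIni_eq_monomialIdeal]
  obtain ⟨G, hG⟩ := hasLinearQuotients_diamond.hasBettiTable (K := K)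
    (fun k _ => diamondExp_ne_zero k) (monotone_degree_diamondExp.monotoneOn _)
  have h0 : 0 ∉ diamondExp '' (diamondLabels n : Set (Fin (n + 1) ×ₗ Fin n)) :=
    fun ⟨k, _, hk⟩ => diamondExp_ne_zero k hk
  refine ⟨⟨G⟩, fun F i => ?_⟩
  rw [F.betti_eq (fun p => constantCoeff_eq_zero_of_mem_monomialIdeal h0) G, hG,
    linearQuotientsTable_diamond]

theorem diamond_ini_betti_n_np2 (K : Type*) [Field K] (n : ℕ) (hn : 3 ≤ n) :
    Nonempty (MinGradedFreeRes K (Fin (n + 2)) (diamondIni K n (by omega))) ∧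
      ∀ F : MinGradedFreeRes K (Fin (n + 2)) (diamondIni K n (by omega)),
        F.betti n (n + 2) = n - 1 := by
  obtain ⟨m, rfl⟩ := Nat.exists_eq_add_of_le' (show 1 ≤ n by omega)
  obtain ⟨hres, hbetti⟩ := diamond_ini_betti_n_np2_general K (m + 1) (by omega)
  exact ⟨hres, fun F => by simpa using hbetti F m⟩
end

section
/- For n ≥ 3, the join-meet ideal I = (y_i y_j − xz : 1 ≤ i < j ≤ n) of the diamond lattice D_{n+2} is a Gorenstein ideal; that is, the quotient ring S/I is Gorenstein. -/
open MvPolynomial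

/-- Regular sequence (elementwise colon characterization). -/
def IsRegSeq {R : Type*} [CommRing R] {m : ℕ} (f : Fin m → R) : Prop :=
  (∀ k : Fin m, ∀ s : R,
      f k * s ∈ Ideal.span (f '' {j | j < k}) → s ∈ Ideal.span (f '' {j | j < k})) ∧
    Ideal.span (Set.range f) ≠ ⊤

/-- `S/I` is Cohen–Macaulay: there is a regular sequence inside the graded maximal ideal
whose length equals the Krull dimension of `S/I`. -/
def IsCMquot {K : Type*} [Field K] {σ : Type*} (I : Ideal (MvPolynomial σ K)) : Prop :=
  ∃ m : ℕ, ringKrullDim (MvPolynomial σ K ⧸ I) = m ∧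
    ∃ f : Fin m → (MvPolynomial σ K ⧸ I),
      (∀ i, f i ∈ Ideal.map (Ideal.Quotient.mk I)
        (Ideal.span (Set.range (X : σ → MvPolynomial σ K)))) ∧
      IsRegSeq f

/-!
Put `S = K[x, y₁, …, yₙ, z]`. Modulo `I`, the algebra is free of rank `n + 2` over the polynomial
ring in the two parameters `s = x - z` and `t = ∑ yᵢ - b x`, where `b` is a scalar with
`n² ≠ b²`: the relations give a spanning set of that size, and an algebra of rank `n + 2` built by
hand shows that there is no further collapse. Hence `s, t` is a regular sequence on `S ⧸ I`, whose
Krull dimension is `2`, so `S ⧸ I` is Cohen–Macaulay.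

The socle of the Artinian reduction `S ⧸ (I, s, t)` is one-dimensional. To read the last Betti
number off an arbitrary minimal resolution `F`, extend `s, t` to a regular sequence of linear forms
that generates the graded maximal ideal `𝔪`. Reducing `F` modulo `s, t` only replaces `S ⧸ I` by the
Artinian reduction; reducing modulo each of the `n` remaining forms shifts the top homology up by
one degree and restricts it to the torsion of that form. So the top homology of `F ⧸ 𝔪 F` is the
socle, in degree `n`, while by minimality the differentials of `F ⧸ 𝔪 F` vanish.
-/

open CategoryTheory RingTheory.Sequence
open scoped Pointwise

universe u v

section ReductionFunctor

variable {R : Type u} [CommRing R]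

/-- The functor `M ↦ M ⧸ r M` on modules. -/
def quotSMulTopFunctor (r : R) : ModuleCat.{v} R ⥤ ModuleCat.{v} R where
  obj M := ModuleCat.of R (QuotSMulTop r M)
  map f := ModuleCat.ofHom (QuotSMulTop.map r f.hom)
  map_id M := ModuleCat.hom_ext (QuotSMulTop.map_id r M)
  map_comp f g := ModuleCat.hom_ext (QuotSMulTop.map_comp r g.hom f.hom)

instance (r : R) : (quotSMulTopFunctor.{u, v} r).Additive where
  map_add := ModuleCat.hom_ext (map_add (QuotSMulTop.map r) _ _)

/-- The functor `M ↦ M ⧸ J M` on modules. -/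
def quotIdealFunctor (J : Ideal R) : ModuleCat.{v} R ⥤ ModuleCat.{v} R where
  obj M := ModuleCat.of R (M ⧸ (J • ⊤ : Submodule R M))
  map f := ModuleCat.ofHom (Submodule.mapQ _ _ f.hom (Submodule.smul_top_le_comap_smul_top J f.hom))
  map_id _ := ModuleCat.hom_ext (Submodule.mapQ_id _)
  map_comp f g := ModuleCat.hom_ext (Submodule.mapQ_comp _ _ _ f.hom g.hom
    (Submodule.smul_top_le_comap_smul_top J f.hom) (Submodule.smul_top_le_comap_smul_top J g.hom))

instance (J : Ideal R) : (quotIdealFunctor.{u, v} J).Additive where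
  map_add := by
    intros
    apply ModuleCat.hom_ext
    apply Submodule.linearMap_qext
    rfl

theorem quotIdealFunctor_map_eq_zero {J : Ideal R} {M N : ModuleCat.{v} R} {f : M ⟶ N}
    (hf : LinearMap.range f.hom ≤ J • ⊤) : (quotIdealFunctor J).map f = 0 :=
  ModuleCat.hom_ext <| Submodule.linearMap_qext _ <| LinearMap.ext fun m =>
    (Submodule.Quotient.mk_eq_zero _).mpr (hf ⟨m, rfl⟩)

/-- `M ⧸ (r, r₁, …, rₖ) M` is `(M ⧸ r M) ⧸ (r₁, …, rₖ) (M ⧸ r M)`, naturally in `M`. -/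
def quotIdealFunctorConsIso (r : R) (rs : List R) :
    quotIdealFunctor.{u, v} (Ideal.ofList (r :: rs)) ≅
      quotSMulTopFunctor r ⋙ quotIdealFunctor (Ideal.ofList rs) :=
  NatIso.ofComponents
    (fun M => (Submodule.quotOfListConsSMulTopEquivQuotSMulTopInner M r rs).toModuleIso)
    fun f => ModuleCat.hom_ext
      (Submodule.quotOfListConsSMulTopEquivQuotSMulTopInner_naturality r rs f.hom)

/-- `M ⧸ () M` is `M`, naturally in `M`. -/
noncomputable def quotIdealFunctorNilIso :
    quotIdealFunctor.{u, v} (Ideal.ofList ([] : List R)) ≅ 𝟭 (ModuleCat.{v} R) :=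
  NatIso.ofComponents
    (fun M => (Submodule.quotEquivOfEqBot (Ideal.ofList ([] : List R) • (⊤ : Submodule R M))
      (by simp)).toModuleIso)
    fun f => by
      apply ModuleCat.hom_ext
      apply Submodule.linearMap_qext
      rfl

/-- The projections `M ⟶ M ⧸ r M`. -/
def quotSMulTopProj (r : R) : 𝟭 (ModuleCat.{v} R) ⟶ quotSMulTopFunctor r where
  app M := ModuleCat.ofHom (r • (⊤ : Submodule R M)).mkQ
  naturality _ _ _ := rfl

end ReductionFunctor

section ReductionComplex

variable {R : Type u} [CommRing R] (r : R) (C : ChainComplex (ModuleCat.{v} R) ℕ)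

/-- The reduction `C ⧸ r C` of a complex modulo an element. -/
abbrev quotSMulTopComplex : ChainComplex (ModuleCat.{v} R) ℕ :=
  ((quotSMulTopFunctor r).mapHomologicalComplex _).obj C

/-- The reduction `C ⧸ J C` of a complex modulo an ideal. -/
abbrev quotIdealComplex (J : Ideal R) : ChainComplex (ModuleCat.{v} R) ℕ :=
  ((quotIdealFunctor J).mapHomologicalComplex _).obj C

/-- The short complex `C ⟶ C ⟶ C ⧸ r C` whose first map is multiplication by `r`. -/
abbrev smulShortComplex : ShortComplex (ChainComplex (ModuleCat.{v} R) ℕ) where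
  X₁ := C
  X₂ := C
  X₃ := quotSMulTopComplex r C
  f := r • 𝟙 C
  g := (NatTrans.mapHomologicalComplex (quotSMulTopProj r) _).app C
  zero := by
    ext i x
    exact (Submodule.Quotient.mk_eq_zero _).mpr
      (Submodule.smul_mem_pointwise_smul x r ⊤ Submodule.mem_top)

variable {r C}

theorem smulShortComplex_shortExact (hr : ∀ i, IsSMulRegular (C.X i) r) :
    (smulShortComplex r C).ShortExact :=
  HomologicalComplex.shortExact_of_degreewise_shortExact _ fun i =>
    (hr i).smulShortComplex_shortExact

theorem homologyMap_smul_id_hom (i : ℕ) :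
    (HomologicalComplex.homologyMap (r • 𝟙 C) i).hom = LinearMap.lsmul R (C.homology i) r := by
  have h := ShortComplex.homologyMap_smul (a := r) (𝟙 (C.sc i))
  rw [ShortComplex.homologyMap_id] at h
  exact congrArg ModuleCat.Hom.hom h

/-- The connecting map `H_{i+1}(C ⧸ r C) ⟶ H_i(C)`. -/
noncomputable def homologyQuotSMulTopδ (hr : ∀ i, IsSMulRegular (C.X i) r) (i : ℕ) :
    (quotSMulTopComplex r C).homology (i + 1) →ₗ[R] C.homology i :=
  ((smulShortComplex_shortExact hr).δ (i + 1) i rfl).hom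

theorem homologyQuotSMulTopδ_injective (hr : ∀ i, IsSMulRegular (C.X i) r) {i : ℕ}
    (hi : Limits.IsZero (C.homology (i + 1))) :
    Function.Injective (homologyQuotSMulTopδ hr i) :=
  (ModuleCat.mono_iff_injective _).mp ((smulShortComplex_shortExact hr).mono_δ _ _ rfl hi)

theorem range_homologyQuotSMulTopδ (hr : ∀ i, IsSMulRegular (C.X i) r) (i : ℕ) :
    LinearMap.range (homologyQuotSMulTopδ hr i) =
      Submodule.torsionBy R (C.homology i) r :=
  ((smulShortComplex_shortExact hr).homology_exact₁ (i + 1) i rfl).moduleCat_range_eq_ker.trans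
    (congrArg LinearMap.ker (homologyMap_smul_id_hom i))

theorem isSMulRegular_of_isZero {M : ModuleCat.{v} R} (hM : Limits.IsZero M) (r : R) :
    IsSMulRegular M r :=
  have := ModuleCat.subsingleton_of_isZero hM
  Function.injective_of_subsingleton _

theorem isZero_homology_quotSMulTopComplex (hr : ∀ i, IsSMulRegular (C.X i) r) {i : ℕ}
    (hi : Limits.IsZero (C.homology (i + 1))) (hreg : IsSMulRegular (C.homology i) r) :
    Limits.IsZero ((quotSMulTopComplex r C).homology (i + 1)) := by
  have hδ : homologyQuotSMulTopδ hr i = 0 := by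
    rw [← LinearMap.range_eq_bot, range_homologyQuotSMulTopδ]
    exact LinearMap.ker_eq_bot.mpr hreg
  have : Subsingleton ((quotSMulTopComplex r C).homology (i + 1)) :=
    ⟨fun a b => homologyQuotSMulTopδ_injective hr hi (by rw [hδ]; rfl)⟩
  exact ModuleCat.isZero_of_subsingleton _

theorem epi_homologyMap_zero {D : ChainComplex (ModuleCat.{v} R) ℕ} (f : C ⟶ D) [Epi (f.f 0)] :
    Epi (HomologicalComplex.homologyMap f 0) := by
  have h := ChainComplex.isoHomologyι₀_inv_naturality f
  have : Epi (C.isoHomologyι₀.inv ≫ HomologicalComplex.homologyMap f 0) := h ▸ inferInstance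
  exact epi_of_epi C.isoHomologyι₀.inv _

theorem nonempty_homology_zero_quotSMulTopComplex_equiv (hr : ∀ i, IsSMulRegular (C.X i) r) :
    Nonempty ((quotSMulTopComplex r C).homology 0 ≃ₗ[R] QuotSMulTop r (C.homology 0)) := by
  have hS := smulShortComplex_shortExact hr
  have : Epi ((smulShortComplex r C).g.f 0) :=
    (ModuleCat.epi_iff_surjective _).mpr (Submodule.mkQ_surjective _)
  have hepi := (ModuleCat.epi_iff_surjective _).mp (epi_homologyMap_zero (smulShortComplex r C).g)
  have hker := (hS.homology_exact₂ 0).moduleCat_range_eq_ker.symm.trans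
    (congrArg LinearMap.range (homologyMap_smul_id_hom 0))
  have hrange : LinearMap.range (LinearMap.lsmul R (C.homology 0) r) = r • ⊤ := by
    ext; simp [Submodule.mem_smul_pointwise_iff_exists]
  exact ⟨(LinearMap.quotKerEquivOfSurjective _ hepi).symm ≪≫ₗ
    Submodule.quotEquivOfEq _ _ (hker.trans hrange)⟩

end ReductionComplex

section RegularSequenceHomology

variable {R : Type u} [CommRing R]

/-- `C ⧸ (r, r₁, …, rₖ) C` is `(C ⧸ r C) ⧸ (r₁, …, rₖ) (C ⧸ r C)`. -/
noncomputable def quotIdealComplexConsIso (r : R) (rs : List R)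
    (C : ChainComplex (ModuleCat.{v} R) ℕ) :
    quotIdealComplex C (Ideal.ofList (r :: rs)) ≅
      quotIdealComplex (quotSMulTopComplex r C) (Ideal.ofList rs) :=
  (NatIso.mapHomologicalComplex (quotIdealFunctorConsIso r rs) _).app C

/-- `C ⧸ () C` is `C`. -/
noncomputable def quotIdealComplexNilIso (C : ChainComplex (ModuleCat.{v} R) ℕ) :
    quotIdealComplex C (Ideal.ofList []) ≅ C :=
  (NatIso.mapHomologicalComplex quotIdealFunctorNilIso _).app C ≪≫
    (Functor.mapHomologicalComplexIdIso (ModuleCat.{v} R) (ComplexShape.down ℕ)).app C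

/-- Isomorphic complexes have isomorphic homology modules. -/
noncomputable def homologyEquivOfIso {C D : ChainComplex (ModuleCat.{v} R) ℕ} (e : C ≅ D) (i : ℕ) :
    C.homology i ≃ₗ[R] D.homology i :=
  ((HomologicalComplex.homologyFunctor _ _ i).mapIso e).toLinearEquiv

variable {M N : Type*} [AddCommGroup M] [Module R M] [AddCommGroup N] [Module R N]

theorem map_torsionBySet_of_range_eq_torsionBy {φ : N →ₗ[R] M} (hφ : Function.Injective φ)
    {r : R} (hrange : LinearMap.range φ = Submodule.torsionBy R M r) (s : Set R) :
    (Submodule.torsionBySet R N s).map φ = Submodule.torsionBySet R M (insert r s) := by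
  ext m
  have hm : r • m = 0 ↔ ∃ a, φ a = m := by
    rw [← LinearMap.mem_range, hrange, Submodule.mem_torsionBy_iff]
  simp only [Submodule.mem_map, Submodule.mem_torsionBySet_iff, Subtype.forall,
    Set.forall_mem_insert, hm]
  constructor
  · rintro ⟨a, ha, rfl⟩
    exact ⟨⟨a, rfl⟩, fun t ht => by rw [← map_smul, ha t ht, map_zero]⟩
  · rintro ⟨⟨a, rfl⟩, ha⟩
    exact ⟨a, fun t ht => hφ (by rw [map_smul, ha t ht, map_zero]), rfl⟩

theorem map_torsionBySet_linearEquiv (e : N ≃ₗ[R] M) (s : Set R) :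
    (Submodule.torsionBySet R N s).map e.toLinearMap = Submodule.torsionBySet R M s := by
  ext m
  obtain ⟨a, rfl⟩ := e.surjective m
  simp [Submodule.mem_torsionBySet_iff, ← map_smul]

/-- Isomorphic modules have isomorphic `s`-torsion. -/
def torsionBySetCongr (e : N ≃ₗ[R] M) (s : Set R) :
    Submodule.torsionBySet R N s ≃ₗ[R] Submodule.torsionBySet R M s :=
  e.submoduleMap _ ≪≫ₗ LinearEquiv.ofEq _ _ (map_torsionBySet_linearEquiv e s)

-- Each reduction shifts the top homology up by one degree and cuts it down to the torsion.
theorem homology_quotIdealComplex_ofList (rs : List R) (C : ChainComplex (ModuleCat.{v} R) ℕ)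
    (p : ℕ) (hreg : ∀ i, IsWeaklyRegular (C.X i) rs)
    (hp : ∀ i > p, Limits.IsZero (C.homology i)) :
    (∀ i > rs.length + p, Limits.IsZero ((quotIdealComplex C (Ideal.ofList rs)).homology i)) ∧
      Nonempty ((quotIdealComplex C (Ideal.ofList rs)).homology (rs.length + p) ≃ₗ[R]
        Submodule.torsionBySet R (C.homology p) {r | r ∈ rs}) := by
  induction rs generalizing C p with
  | nil =>
    have e := fun i => homologyEquivOfIso (quotIdealComplexNilIso C) i
    rw [List.length_nil, Nat.zero_add]
    refine ⟨fun i hi => (hp i hi).of_iso (e i).toModuleIso, ⟨e p ≪≫ₗ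
      (LinearEquiv.ofTop _ (eq_top_iff.mpr fun m _ => ?_)).symm⟩⟩
    simp [Submodule.mem_torsionBySet_iff]
  | cons r rs ih =>
    have e := fun i => homologyEquivOfIso (quotIdealComplexConsIso r rs C) i
    have hr i := ((isWeaklyRegular_cons_iff _ _ _).mp (hreg i)).1
    have hp' : ∀ i > p + 1, Limits.IsZero ((quotSMulTopComplex r C).homology i) := by
      rintro (_ | i) hi
      · omega
      · exact isZero_homology_quotSMulTopComplex hr (hp _ (by omega))
          (isSMulRegular_of_isZero (hp i (by omega)) r)
    obtain ⟨hzero, ⟨e'⟩⟩ := ih (quotSMulTopComplex r C) (p + 1)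
      (fun i => ((isWeaklyRegular_cons_iff _ _ _).mp (hreg i)).2) hp'
    have hδ := homologyQuotSMulTopδ_injective hr (hp (p + 1) p.lt_succ_self)
    have hset : {t | t ∈ r :: rs} = insert r {t | t ∈ rs} := by ext; simp
    rw [show (r :: rs).length + p = rs.length + (p + 1) by simp; omega, hset]
    exact ⟨fun i hi => (hzero i hi).of_iso (e i).toModuleIso,
      ⟨e _ ≪≫ₗ e' ≪≫ₗ Submodule.equivMapOfInjective _ hδ _ ≪≫ₗ LinearEquiv.ofEq _ _
        (map_torsionBySet_of_range_eq_torsionBy hδ (range_homologyQuotSMulTopδ hr p) _)⟩⟩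

theorem homology_quotIdealComplex_ofList_append (ss rs : List R)
    (C : ChainComplex (ModuleCat.{v} R) ℕ) (hreg : ∀ i, IsWeaklyRegular (C.X i) (ss ++ rs))
    (hp : ∀ i, Limits.IsZero (C.homology (i + 1))) (hH : IsWeaklyRegular (C.homology 0) ss) :
    (∀ i > rs.length,
      Limits.IsZero ((quotIdealComplex C (Ideal.ofList (ss ++ rs))).homology i)) ∧
      Nonempty ((quotIdealComplex C (Ideal.ofList (ss ++ rs))).homology rs.length ≃ₗ[R]
        Submodule.torsionBySet R
          (C.homology 0 ⧸ (Ideal.ofList ss • ⊤ : Submodule R (C.homology 0))) {r | r ∈ rs}) := by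
  induction ss generalizing C with
  | nil =>
    obtain ⟨hzero, ⟨e⟩⟩ := homology_quotIdealComplex_ofList rs C 0 hreg fun i hi => by
      obtain ⟨i, rfl⟩ := Nat.exists_eq_succ_of_ne_zero hi.ne'
      exact hp i
    have e0 : (C.homology 0 ⧸ (Ideal.ofList ([] : List R) • ⊤ : Submodule R (C.homology 0))) ≃ₗ[R]
        C.homology 0 :=
      Submodule.quotEquivOfEqBot _ (by rw [Ideal.ofList_nil, Submodule.bot_smul])
    exact ⟨hzero, ⟨e ≪≫ₗ torsionBySetCongr e0.symm _⟩⟩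
  | cons s ss ih =>
    have e := fun i => homologyEquivOfIso (quotIdealComplexConsIso s (ss ++ rs) C) i
    have hs i := ((isWeaklyRegular_cons_iff _ _ _).mp (hreg i)).1
    rw [isWeaklyRegular_cons_iff] at hH
    obtain ⟨e0⟩ := nonempty_homology_zero_quotSMulTopComplex_equiv hs
    have hacyclic : ∀ i, Limits.IsZero ((quotSMulTopComplex s C).homology (i + 1)) := fun i => by
      refine isZero_homology_quotSMulTopComplex hs (hp i) ?_
      obtain _ | i := i
      · exact hH.1
      · exact isSMulRegular_of_isZero (hp i) s
    obtain ⟨hzero, ⟨e'⟩⟩ := ih (quotSMulTopComplex s C)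
      (fun i => ((isWeaklyRegular_cons_iff _ _ _).mp (hreg i)).2) hacyclic
      ((e0.isWeaklyRegular_congr ss).mpr hH.2)
    let e1 : ((quotSMulTopComplex s C).homology 0 ⧸
        (Ideal.ofList ss • ⊤ : Submodule R ((quotSMulTopComplex s C).homology 0))) ≃ₗ[R]
          (C.homology 0 ⧸ (Ideal.ofList (s :: ss) • ⊤ : Submodule R (C.homology 0))) :=
      Submodule.Quotient.equiv _ _ e0 (by
        rw [Submodule.map_smul'', Submodule.map_top, LinearEquiv.range]) ≪≫ₗ
      (Submodule.quotOfListConsSMulTopEquivQuotSMulTopInner _ s ss).symm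
    exact ⟨fun i hi => (hzero i hi).of_iso (e i).toModuleIso,
      ⟨e _ ≪≫ₗ e' ≪≫ₗ torsionBySetCongr e1 _⟩⟩

end RegularSequenceHomology

section MinimalComplex

variable {R : Type u} [CommRing R] {C : ChainComplex (ModuleCat.{v} R) ℕ}

theorem isZero_homology_succ (i : ℕ)
    (h : LinearMap.range (C.d (i + 2) (i + 1)).hom = LinearMap.ker (C.d (i + 1) i).hom) :
    Limits.IsZero (C.homology (i + 1)) := by
  rw [← HomologicalComplex.exactAt_iff_isZero_homology,
    HomologicalComplex.exactAt_iff' C (i + 2) (i + 1) i (by simp) (by simp),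
    ShortComplex.moduleCat_exact_iff_range_eq_ker]
  exact h

theorem nonempty_homology_zero_equiv {M : Type*} [AddCommGroup M] [Module R M]
    {f : C.X 0 →ₗ[R] M} (hf : Function.Surjective f)
    (hker : LinearMap.range (C.d 1 0).hom = LinearMap.ker f) :
    Nonempty (C.homology 0 ≃ₗ[R] M) := by
  let e : C.homology 0 ≅ Limits.cokernel (C.d 1 0) := C.isoHomologyι₀ ≪≫
    Limits.IsColimit.coconePointUniqueUpToIso (C.opcyclesIsCokernel 1 0 (by simp))
      (Limits.colimit.isColimit _)
  exact ⟨(e ≪≫ ModuleCat.cokernelIsoRangeQuotient _).toLinearEquiv ≪≫ₗ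
    Submodule.quotEquivOfEq _ _ hker ≪≫ₗ f.quotKerEquivOfSurjective hf⟩

theorem nonempty_homology_equiv_X_of_d_eq_zero (hd : ∀ i, C.d (i + 1) i = 0) (i : ℕ) :
    Nonempty (C.homology i ≃ₗ[R] C.X i) := by
  have hd' : ∀ j k, C.d j k = 0 := fun j k => by
    by_cases hjk : k + 1 = j
    · exact hjk ▸ hd k
    · exact C.shape j k hjk
  let hC := ShortComplex.HomologyData.ofZeros (C.sc i) (hd' _ _) (hd' _ _)
  exact ⟨hC.left.homologyIso.toLinearEquiv⟩

theorem X_quotIdeal_of_range_d_le (ss rs : List R)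
    (hreg : ∀ i, IsWeaklyRegular (C.X i) (ss ++ rs))
    (hp : ∀ i, Limits.IsZero (C.homology (i + 1))) (hH : IsWeaklyRegular (C.homology 0) ss)
    (hmin : ∀ i, LinearMap.range (C.d (i + 1) i).hom ≤ Ideal.ofList (ss ++ rs) • ⊤) :
    (∀ i > rs.length, Subsingleton (C.X i ⧸ (Ideal.ofList (ss ++ rs) • ⊤ : Submodule R (C.X i)))) ∧
      Nonempty ((C.X rs.length ⧸ (Ideal.ofList (ss ++ rs) • ⊤ : Submodule R (C.X rs.length))) ≃ₗ[R]
        Submodule.torsionBySet R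
          (C.homology 0 ⧸ (Ideal.ofList ss • ⊤ : Submodule R (C.homology 0))) {r | r ∈ rs}) := by
  have hd : ∀ i, (quotIdealComplex C (Ideal.ofList (ss ++ rs))).d (i + 1) i = 0 :=
    fun i => quotIdealFunctor_map_eq_zero (hmin i)
  have e := nonempty_homology_equiv_X_of_d_eq_zero hd
  obtain ⟨hzero, ⟨e'⟩⟩ := homology_quotIdealComplex_ofList_append ss rs C hreg hp hH
  obtain ⟨ep⟩ := e rs.length
  refine ⟨fun i hi => ?_, ⟨ep.symm ≪≫ₗ e'⟩⟩
  obtain ⟨ei⟩ := e i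
  have := ModuleCat.subsingleton_of_isZero (hzero i hi)
  exact ei.symm.toEquiv.subsingleton

end MinimalComplex

section MinimalResolution

variable {R : Type*} [CommRing R]

theorem isWeaklyRegular_finsupp {rs : List R} (h : IsWeaklyRegular R rs) (B : Type*) :
    IsWeaklyRegular (B →₀ R) rs :=
  (LinearEquiv.isWeaklyRegular_congr (TensorProduct.rid R (B →₀ R)) rs).mp
    h.isWeaklyRegular_lTensor

open Classical in
/-- `(B →₀ R) ⧸ J (B →₀ R)` is `B →₀ R ⧸ J`. -/
noncomputable def finsuppQuotEquiv (J : Ideal R) (B : Type*) :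
    ((B →₀ R) ⧸ (J • ⊤ : Submodule R (B →₀ R))) ≃ₗ[R] (B →₀ R ⧸ J) :=
  (TensorProduct.quotTensorEquivQuotSMul _ J).symm ≪≫ₗ
    TensorProduct.finsuppScalarRight R R (R ⧸ J) B

theorem isEmpty_of_subsingleton_finsupp_quot {J : Ideal R} (hJ : J ≠ ⊤) {B : Type*}
    (h : Subsingleton ((B →₀ R) ⧸ (J • ⊤ : Submodule R (B →₀ R)))) : IsEmpty B := by
  have := Ideal.Quotient.nontrivial_iff.mpr hJ
  have : Subsingleton (B →₀ R ⧸ J) := (finsuppQuotEquiv J B).symm.toEquiv.subsingleton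
  refine ⟨fun b => ?_⟩
  simpa using DFunLike.congr_fun (Subsingleton.elim (Finsupp.single b (1 : R ⧸ J)) 0) b

theorem card_eq_one_of_finsupp_quot_equiv {J : Ideal R} (hJ : J ≠ ⊤) {B : Type*}
    (e : ((B →₀ R) ⧸ (J • ⊤ : Submodule R (B →₀ R))) ≃ₗ[R] R ⧸ J) : Nat.card B = 1 := by
  have := Ideal.Quotient.nontrivial_iff.mpr hJ
  have e' := ((finsuppQuotEquiv J B).symm ≪≫ₗ e).extendScalarsOfSurjective
    (S := R ⧸ J) Ideal.Quotient.mk_surjective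
  have h := e'.finrank_eq
  rw [Module.finrank_self] at h
  exact (Module.finrank_eq_nat_card_basis Finsupp.basisSingleOne).symm.trans h

theorem mem_ideal_smul_top_of_forall_apply_mem {J : Ideal R} {B : Type*} {v : B →₀ R}
    (hv : ∀ b, v b ∈ J) : v ∈ (J • ⊤ : Submodule R (B →₀ R)) := by
  rw [← v.sum_single]
  refine Submodule.sum_mem _ fun b _ => ?_
  rw [← mul_one (v b), ← smul_eq_mul, ← Finsupp.smul_single]
  exact Submodule.smul_mem_smul (hv b) Submodule.mem_top

theorem range_le_of_forall_single_mem {B M : Type*} [AddCommGroup M] [Module R M]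
    {f : (B →₀ R) →ₗ[R] M} {N : Submodule R M} (hf : ∀ b, f (Finsupp.single b 1) ∈ N) :
    LinearMap.range f ≤ N := by
  rw [LinearMap.range_eq_map, ← Finsupp.basisSingleOne.span_eq, Submodule.map_span_le]
  simpa using hf

/-- `(R ⧸ I) ⧸ J (R ⧸ I)` is `R ⧸ (I + J)`. -/
noncomputable def quotSMulTopQuotEquivQuotSup (I J : Ideal R) :
    ((R ⧸ I) ⧸ (J • ⊤ : Submodule R (R ⧸ I))) ≃ₗ[R] R ⧸ (I ⊔ J) :=
  Submodule.quotEquivOfEq _ _ (by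
    rw [← Submodule.range_mkQ I, ← Submodule.map_top, ← Submodule.map_smul'', smul_eq_mul,
      Ideal.mul_top]) ≪≫ₗ Submodule.quotientQuotientEquivQuotientSup I J

theorem torsionBySet_eq_torsionBySet_ofList_append (M : Type*) [AddCommGroup M] [Module R M]
    {ss : List R} (hss : ∀ s ∈ ss, ∀ m : M, s • m = 0) (rs : List R) :
    Submodule.torsionBySet R M {r | r ∈ rs} =
      Submodule.torsionBySet R M (Ideal.ofList (ss ++ rs)) := by
  rw [Ideal.ofList, ← Submodule.torsionBySet_eq_torsionBySet_span]
  ext m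
  simp only [Submodule.mem_torsionBySet_iff, Subtype.forall, Set.mem_ofPred_eq, List.mem_append]
  exact ⟨fun h r => Or.rec (hss r · m) (h r), fun h r hr => h r (Or.inr hr)⟩

theorem smul_quot_sup_eq_zero {I J : Ideal R} {r : R} (hr : r ∈ J) (m : R ⧸ (I ⊔ J)) :
    r • m = 0 := by
  obtain ⟨m, rfl⟩ := Ideal.Quotient.mk_surjective m
  exact Ideal.Quotient.eq_zero_iff_mem.mpr (Ideal.mul_mem_right m _ (Ideal.mem_sup_right hr))

end MinimalResolution

theorem ker_constantCoeff (σ R : Type*) [CommRing R] :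
    RingHom.ker (constantCoeff (σ := σ) (R := R)) = idealOfVars σ R := by
  ext p
  rw [RingHom.mem_ker, constantCoeff_eq, ← pow_one (idealOfVars σ R), mem_pow_idealOfVars_iff']
  refine ⟨fun h m hm => ?_, fun h => h 0 (by simp)⟩
  rwa [(Finsupp.degree_eq_zero_iff m).mp (Nat.lt_one_iff.mp hm)]

theorem isMaximal_idealOfVars (σ K : Type*) [Field K] : (idealOfVars σ K).IsMaximal := by
  rw [← ker_constantCoeff]
  exact RingHom.ker_isMaximal_of_surjective _ fun a => ⟨C a, constantCoeff_C σ a⟩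

namespace MinGradedFreeRes

variable {K : Type u} [Field K] {σ : Type v} {I : Ideal (MvPolynomial σ K)}
  (F : MinGradedFreeRes K σ I)

/-- The complex of free modules underlying a minimal graded free resolution. -/
noncomputable def toChainComplex : ChainComplex (ModuleCat.{max u v} (MvPolynomial σ K)) ℕ :=
  ChainComplex.of (fun i => ModuleCat.of _ (F.B i →₀ MvPolynomial σ K))
    (fun i => ModuleCat.ofHom (F.d i)) fun i => ModuleCat.hom_ext <|
      LinearMap.range_le_ker_iff.mp (F.exact i).le

theorem toChainComplex_d (i : ℕ) : F.toChainComplex.d (i + 1) i = ModuleCat.ofHom (F.d i) :=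
  ChainComplex.of_d (fun i => ModuleCat.of _ (F.B i →₀ MvPolynomial σ K))
    (fun i => ModuleCat.ofHom (F.d i)) i

theorem range_d_le (i : ℕ) : LinearMap.range (F.d i) ≤ idealOfVars σ K • ⊤ :=
  range_le_of_forall_single_mem fun b => mem_ideal_smul_top_of_forall_apply_mem fun c => by
    rw [← pow_one (idealOfVars σ K), mem_pow_idealOfVars_iff']
    intro m hm
    rw [(Finsupp.degree_eq_zero_iff m).mp (Nat.lt_one_iff.mp hm), F.minimal]

theorem ker_mkQ_comp_ε : LinearMap.ker (Submodule.mkQ I ∘ₗ F.ε) = LinearMap.range (F.d 0) := by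
  rw [LinearMap.ker_comp, Submodule.ker_mkQ, F.exact0]

theorem mkQ_comp_ε_surjective : Function.Surjective (Submodule.mkQ I ∘ₗ F.ε) := by
  intro s
  obtain ⟨s, rfl⟩ := Submodule.mkQ_surjective _ s
  obtain ⟨t, ht⟩ := F.surj s
  exact ⟨t, (Submodule.Quotient.eq _).mpr ht⟩

theorem isZero_homology_toChainComplex (i : ℕ) :
    Limits.IsZero (F.toChainComplex.homology (i + 1)) :=
  isZero_homology_succ i (by rw [toChainComplex_d, toChainComplex_d]; exact F.exact i)

theorem nonempty_homology_zero_toChainComplex_equiv :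
    Nonempty (F.toChainComplex.homology 0 ≃ₗ[MvPolynomial σ K] MvPolynomial σ K ⧸ I) :=
  nonempty_homology_zero_equiv F.mkQ_comp_ε_surjective (by
    rw [toChainComplex_d]; exact F.ker_mkQ_comp_ε.symm)

theorem card_eq_one_of_socle_equiv {ss rs : List (MvPolynomial σ K)}
    (hgen : Ideal.ofList (ss ++ rs) = idealOfVars σ K)
    (hreg : IsWeaklyRegular (MvPolynomial σ K) (ss ++ rs))
    (hI : IsWeaklyRegular (MvPolynomial σ K ⧸ I) ss)
    (hsocle : Nonempty (Submodule.torsionBySet (MvPolynomial σ K)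
      (MvPolynomial σ K ⧸ (I ⊔ Ideal.ofList ss)) (idealOfVars σ K) ≃ₗ[MvPolynomial σ K]
        MvPolynomial σ K ⧸ idealOfVars σ K)) :
    Nat.card (F.B rs.length) = 1 ∧ ∀ q, rs.length < q → IsEmpty (F.B q) := by
  obtain ⟨e₀⟩ := F.nonempty_homology_zero_toChainComplex_equiv
  obtain ⟨e₁⟩ := hsocle
  obtain ⟨hzero, ⟨e⟩⟩ := X_quotIdeal_of_range_d_le ss rs (C := F.toChainComplex)
    (fun i => isWeaklyRegular_finsupp hreg (F.B i)) F.isZero_homology_toChainComplex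
    ((e₀.isWeaklyRegular_congr ss).mpr hI)
    (fun i => by rw [toChainComplex_d, hgen]; exact F.range_d_le i)
  let e₂ := Submodule.Quotient.equiv _ (Ideal.ofList ss • ⊤) e₀ (by
    rw [Submodule.map_smul'', Submodule.map_top, LinearEquiv.range]) ≪≫ₗ
      quotSMulTopQuotEquivQuotSup I (Ideal.ofList ss)
  have htors := torsionBySet_eq_torsionBySet_ofList_append
    (MvPolynomial σ K ⧸ (I ⊔ Ideal.ofList ss))
    (fun s hs => smul_quot_sup_eq_zero (Ideal.subset_span hs)) rs
  rw [hgen] at hzero e htors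
  exact ⟨card_eq_one_of_finsupp_quot_equiv (isMaximal_idealOfVars σ K).ne_top
      (e ≪≫ₗ torsionBySetCongr e₂ _ ≪≫ₗ LinearEquiv.ofEq _ _ htors ≪≫ₗ e₁),
    fun q hq =>
      isEmpty_of_subsingleton_finsupp_quot (isMaximal_idealOfVars σ K).ne_top (hzero q hq)⟩

end MinGradedFreeRes

/-- The elements `x`, `z` and `y i` of a commutative ring satisfy the relations `y i * y j = x * z`
of the diamond lattice; `s` and `t` name the linear combinations `x - z` and `∑ i, y i - b * x`,
which will be a system of parameters. -/
structure DiamondRelations {R ι : Type*} [CommRing R] [Fintype ι] (b s t x z : R) (y : ι → R) :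
    Prop where
  mul_eq : Pairwise fun i j => y i * y j = x * z
  x_sub_z : x - z = s
  sum_sub : ∑ i, y i - b * x = t

namespace DiamondRelations

section Identities

variable {R ι : Type*} [CommRing R] [Fintype ι] {b s t x z : R} {y : ι → R}

local notation "N" => (Fintype.card ι : R)

theorem xz_eq (h : DiamondRelations b s t x z y) : x * z = x ^ 2 - s * x := by
  linear_combination -x * h.x_sub_z

theorem sum_add_x (h : DiamondRelations b s t x z y) : ∑ i, (y i + x) = t + (b + N) * x := by
  rw [Finset.sum_add_distrib, Finset.sum_const, Finset.card_univ, nsmul_eq_mul]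
  linear_combination h.sum_sub

theorem y_sq (h : DiamondRelations b s t x z y) (i : ι) :
    y i ^ 2 = t * y i + b * (x * y i) - (N - 1) * (x * z) := by
  classical
  have hsum : ∑ j ∈ Finset.univ.erase i, y i * y j = (N - 1) * (x * z) := by
    rw [Finset.sum_congr rfl fun j hj => h.mul_eq (Finset.ne_of_mem_erase hj).symm,
      Finset.sum_const, Finset.card_erase_of_mem (Finset.mem_univ i), Finset.card_univ,
      nsmul_eq_mul, Nat.cast_pred (Fintype.card_pos_iff.mpr ⟨i⟩)]
  have htotal := Finset.add_sum_erase Finset.univ (fun j => y i * y j) (Finset.mem_univ i)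
  rw [hsum, ← Finset.mul_sum] at htotal
  linear_combination htotal + y i * h.sum_sub

variable (h : DiamondRelations b s t x z y) (hι : 2 < Fintype.card ι)
include h hι

theorem xz_mul_y_eq (i j : ι) : x * z * y i = x * z * y j := by
  classical
  obtain ⟨k, -, hk⟩ := Finset.exists_mem_notMem_of_card_lt_card
    ((Finset.card_le_two (a := i) (b := j)).trans_lt (hι.trans_eq Finset.card_univ.symm))
  obtain ⟨hki, hkj⟩ : k ≠ i ∧ k ≠ j := by simpa using hk
  linear_combination y j * h.mul_eq hki - y i * h.mul_eq hkj

theorem xz_mul_y_sq (i : ι) : x * z * y i ^ 2 = (x * z) ^ 2 := by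
  have : Nontrivial ι := Fintype.one_lt_card_iff_nontrivial.mp (one_lt_two.trans hι)
  obtain ⟨j, hj⟩ := exists_ne i
  linear_combination y i * h.xz_mul_y_eq hι i j + x * z * h.mul_eq hj.symm

theorem card_mul_xz_mul_y (i : ι) : N * (x * z * y i) = x * z * (t + b * x) := by
  have hsum : ∑ j, x * z * y j = N * (x * z * y i) := by
    rw [Finset.sum_congr rfl fun j _ => h.xz_mul_y_eq hι j i, Finset.sum_const, Finset.card_univ,
      nsmul_eq_mul]
  rw [← hsum, ← Finset.mul_sum]
  linear_combination x * z * h.sum_sub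

end Identities

/-- The generator `x z (n x - b y i)` of the socle modulo `s` and `t`, where `n` is the number of
the `y i`. It does not depend on `i`. -/
def socleGen {R ι : Type*} [CommRing R] [Fintype ι] (b x z : R) (y : ι → R) (i : ι) : R :=
  x * z * (Fintype.card ι * x - b * y i)

section SocleIdentities

variable {R ι : Type*} [CommRing R] [Fintype ι] {b s t x z : R} {y : ι → R}
  (h : DiamondRelations b s t x z y) (hι : 2 < Fintype.card ι) (i : ι)
include h hι

local notation "N" => (Fintype.card ι : R)

theorem socleGen_eq (j : ι) : socleGen b x z y i = socleGen b x z y j := by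
  linear_combination (norm := (simp only [socleGen]; ring)) -b * h.xz_mul_y_eq hι i j

theorem mul_xz_mul_x : (N ^ 2 - b ^ 2) * (x * z * x) =
    N * socleGen b x z y i + b * t * (x * z) := by
  linear_combination (norm := (simp only [socleGen]; ring)) b * h.card_mul_xz_mul_y hι i

theorem mul_xz_mul_y : (N ^ 2 - b ^ 2) * (x * z * y i) =
    b * socleGen b x z y i + N * t * (x * z) := by
  linear_combination (norm := (simp only [socleGen]; ring)) N * h.card_mul_xz_mul_y hι i

theorem mul_socleGen : (N * x - b * y i) * socleGen b x z y i =
    (t ^ 2 + b * t * s) * (x * z) + N * s * socleGen b x z y i := by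
  rw [socleGen]
  linear_combination (b ^ 2 - N ^ 2) * (x * z * h.xz_eq + h.xz_mul_y_sq hι i) +
    (N * y i + t - b * x + s * b) * h.card_mul_xz_mul_y hι i

theorem mul_x_mul_socleGen : (N ^ 2 - b ^ 2) * (x * socleGen b x z y i) =
    N * ((t ^ 2 + b * t * s) * (x * z) + N * s * socleGen b x z y i) +
      b * t * socleGen b x z y i := by
  rw [← h.mul_socleGen hι i]
  linear_combination (norm := (simp only [socleGen]; ring))
     (N * x - b * y i) * h.mul_xz_mul_x hι i

theorem mul_y_mul_socleGen : (N ^ 2 - b ^ 2) * (y i * socleGen b x z y i) =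
    b * ((t ^ 2 + b * t * s) * (x * z) + N * s * socleGen b x z y i) +
      N * t * socleGen b x z y i := by
  rw [← h.mul_socleGen hι i]
  linear_combination (norm := (simp only [socleGen]; ring))
     (N * x - b * y i) * h.mul_xz_mul_y hι i

end SocleIdentities

end DiamondRelations

theorem submodule_eq_top_of_adjoin_eq_top {P R : Type*} [CommRing P] [CommRing R] [Algebra P R]
    {G : Set R} (hG : Algebra.adjoin P G = ⊤) {W : Submodule P R} (hone : 1 ∈ W)
    (hmul : ∀ g ∈ G, ∀ w ∈ W, g * w ∈ W) : W = ⊤ := by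
  have key : ∀ r ∈ Algebra.adjoin P G, ∀ w ∈ W, r * w ∈ W := by
    intro r hr
    induction hr using Algebra.adjoin_induction with
    | mem g hg => exact hmul g hg
    | algebraMap c => exact fun w hw => Algebra.smul_def c w ▸ W.smul_mem c hw
    | add p q _ _ hp hq => exact fun w hw => add_mul p q w ▸ W.add_mem (hp w hw) (hq w hw)
    | mul p q _ _ hp hq => exact fun w hw => mul_assoc p q w ▸ hp _ (hq w hw)
  exact eq_top_iff.mpr fun r _ => mul_one r ▸ key r (hG ▸ Algebra.mem_top) 1 hone

namespace DiamondRelations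

/-- The family `1`, `y i + x`, `x (y i + x)`, `socleGen`, which is a basis of the diamond ring over
the subring generated by `s` and `t`. -/
def basisFamily {R ι : Type*} [CommRing R] [Fintype ι] (b x z : R) (y : ι → R) (i₀ : ι) :
    Unit ⊕ ι ⊕ ι ⊕ Unit → R :=
  Sum.elim (fun _ => 1) (Sum.elim (fun i => y i + x)
    (Sum.elim (fun i => x * (y i + x)) fun _ => socleGen b x z y i₀))

section Spanning

variable {P R ι : Type*} [CommRing P] [CommRing R] [Algebra P R] [Fintype ι] {b s t : P}
  {x z : R} {y : ι → R} {i₀ : ι} {W : Submodule P R}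

theorem mem_of_algebraMap_mul_mem {u : P} (hu : IsUnit u) {r : R}
    (h : algebraMap P R u * r ∈ W) : r ∈ W := by
  rwa [← Algebra.smul_def, W.smul_mem_iff_of_isUnit hu] at h

theorem algebraMap_mul_mem (c : P) {r : R} (h : r ∈ W) : algebraMap P R c * r ∈ W := by
  rw [← Algebra.smul_def]
  exact W.smul_mem c h

section

variable (hW : ∀ k, basisFamily (algebraMap P R b) x z y i₀ k ∈ W)
include hW

theorem one_mem : 1 ∈ W := hW (Sum.inl ())

theorem y_add_x_mem (i : ι) : y i + x ∈ W := hW (Sum.inr (Sum.inl i))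

theorem x_mul_y_add_x_mem (i : ι) : x * (y i + x) ∈ W := hW (Sum.inr (Sum.inr (Sum.inl i)))

theorem socleGen_mem : socleGen (algebraMap P R b) x z y i₀ ∈ W :=
  hW (Sum.inr (Sum.inr (Sum.inr ())))

end

variable (h : DiamondRelations (algebraMap P R b) (algebraMap P R s) (algebraMap P R t) x z y)
  (hb : IsUnit ((Fintype.card ι : P) ^ 2 - b ^ 2))
include h hb

theorem mul_x_mem {r : R} (hr : r ∈ W) (hl : ∀ i, r * (y i + x) ∈ W) : r * x ∈ W := by
  have hunit : IsUnit (b + Fintype.card ι) :=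
    isUnit_of_mul_isUnit_left (y := (Fintype.card ι : P) - b) (by convert hb using 1; ring)
  refine mem_of_algebraMap_mul_mem hunit ?_
  have : algebraMap P R (b + Fintype.card ι) * (r * x) =
      ∑ i, r * (y i + x) - algebraMap P R t * r := by
    rw [← Finset.mul_sum, h.sum_add_x, map_add, map_natCast]
    ring
  exact this ▸ sub_mem (sum_mem fun i _ => hl i) (algebraMap_mul_mem t hr)

theorem mul_y_mem {r : R} (hr : r ∈ W) (hl : ∀ i, r * (y i + x) ∈ W) (i : ι) : r * y i ∈ W := by
  simpa [mul_add] using sub_mem (hl i) (h.mul_x_mem hb hr hl)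

variable (hι : 2 < Fintype.card ι) (hW : ∀ k, basisFamily (algebraMap P R b) x z y i₀ k ∈ W)
include hW

theorem x_mem : x ∈ W := by
  simpa using h.mul_x_mem hb (one_mem hW) (by simpa using y_add_x_mem hW)

theorem y_mem (i : ι) : y i ∈ W := by
  simpa using h.mul_y_mem hb (one_mem hW) (by simpa using y_add_x_mem hW) i

theorem x_mul_x_mem : x * x ∈ W := h.mul_x_mem hb (h.x_mem hb hW) (x_mul_y_add_x_mem hW)

theorem x_mul_y_mem (i : ι) : x * y i ∈ W :=
  h.mul_y_mem hb (h.x_mem hb hW) (x_mul_y_add_x_mem hW) i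

theorem xz_mem : x * z ∈ W := by
  rw [h.xz_eq, sq]
  exact sub_mem (h.x_mul_x_mem hb hW) (algebraMap_mul_mem s (h.x_mem hb hW))

theorem y_mul_y_mem (i j : ι) : y i * y j ∈ W := by
  obtain rfl | hij := eq_or_ne i j
  · have := h.y_sq i
    rw [sq, ← map_natCast (algebraMap P R), ← map_one (algebraMap P R), ← map_sub] at this
    exact this ▸ sub_mem (add_mem (algebraMap_mul_mem t (h.y_mem hb hW i))
      (algebraMap_mul_mem b (h.x_mul_y_mem hb hW i))) (algebraMap_mul_mem _ (h.xz_mem hb hW))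
  · exact h.mul_eq hij ▸ h.xz_mem hb hW

include hι

theorem xz_mul_x_mem : x * z * x ∈ W := by
  refine mem_of_algebraMap_mul_mem hb ?_
  simp only [map_sub, map_pow, map_natCast]
  rw [h.mul_xz_mul_x hι i₀, ← map_natCast (algebraMap P R), ← map_mul]
  exact add_mem (algebraMap_mul_mem _ (socleGen_mem hW)) (algebraMap_mul_mem _ (h.xz_mem hb hW))

theorem xz_mul_y_mem (i : ι) : x * z * y i ∈ W := by
  refine mem_of_algebraMap_mul_mem hb ?_
  simp only [map_sub, map_pow, map_natCast]
  rw [h.mul_xz_mul_y hι i, h.socleGen_eq hι i i₀, ← map_natCast (algebraMap P R), ← map_mul]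
  exact add_mem (algebraMap_mul_mem _ (socleGen_mem hW)) (algebraMap_mul_mem _ (h.xz_mem hb hW))

theorem x_mul_socleGen_mem : x * socleGen (algebraMap P R b) x z y i₀ ∈ W := by
  refine mem_of_algebraMap_mul_mem hb ?_
  simp only [map_sub, map_pow, map_natCast]
  rw [h.mul_x_mul_socleGen hι i₀]
  simp only [← map_natCast (algebraMap P R), ← map_mul, ← map_add, ← map_pow]
  have hσ := socleGen_mem hW
  exact add_mem (algebraMap_mul_mem _ (add_mem (algebraMap_mul_mem _ (h.xz_mem hb hW))
    (algebraMap_mul_mem _ hσ))) (algebraMap_mul_mem _ hσ)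

theorem y_mul_socleGen_mem (i : ι) : y i * socleGen (algebraMap P R b) x z y i₀ ∈ W := by
  refine mem_of_algebraMap_mul_mem hb ?_
  simp only [map_sub, map_pow, map_natCast]
  rw [h.socleGen_eq hι i₀ i, h.mul_y_mul_socleGen hι i, h.socleGen_eq hι i i₀]
  simp only [← map_natCast (algebraMap P R), ← map_mul, ← map_add, ← map_pow]
  have hσ := socleGen_mem hW
  exact add_mem (algebraMap_mul_mem _ (add_mem (algebraMap_mul_mem _ (h.xz_mem hb hW))
    (algebraMap_mul_mem _ hσ))) (algebraMap_mul_mem _ hσ)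

theorem x_mul_x_mul_y_mem (i : ι) : x * (x * y i) ∈ W := by
  rw [show x * (x * y i) = x * z * y i + algebraMap P R s * (x * y i) by
    linear_combination -y i * h.xz_eq]
  exact add_mem (h.xz_mul_y_mem hb hι hW i) (algebraMap_mul_mem s (h.x_mul_y_mem hb hW i))

theorem x_mul_x_mul_x_mem : x * (x * x) ∈ W := by
  rw [show x * (x * x) = x * z * x + algebraMap P R s * (x * x) by
    linear_combination -x * h.xz_eq]
  exact add_mem (h.xz_mul_x_mem hb hι hW) (algebraMap_mul_mem s (h.x_mul_x_mem hb hW))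

theorem y_mul_x_mul_y_mem (i j : ι) : y i * (x * y j) ∈ W := by
  obtain rfl | hij := eq_or_ne i j
  · have : y i * (x * y i) = algebraMap P R t * (x * y i) + algebraMap P R b * (x * (x * y i)) -
        algebraMap P R (Fintype.card ι - 1) * (x * z * x) := by
      rw [map_sub, map_natCast, map_one]
      linear_combination x * h.y_sq i
    exact this ▸ sub_mem (add_mem (algebraMap_mul_mem t (h.x_mul_y_mem hb hW i))
      (algebraMap_mul_mem b (h.x_mul_x_mul_y_mem hb hι hW i)))
      (algebraMap_mul_mem _ (h.xz_mul_x_mem hb hι hW))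
  · rw [show y i * (x * y j) = x * z * x by linear_combination x * h.mul_eq hij]
    exact h.xz_mul_x_mem hb hι hW

theorem x_mul_basisFamily_mem (k : Unit ⊕ ι ⊕ ι ⊕ Unit) :
    x * basisFamily (algebraMap P R b) x z y i₀ k ∈ W := by
  match k with
  | .inl _ => exact (mul_one x).symm ▸ h.x_mem hb hW
  | .inr (.inl i) => exact x_mul_y_add_x_mem hW i
  | .inr (.inr (.inl i)) =>
    have := add_mem (h.x_mul_x_mul_y_mem hb hι hW i) (h.x_mul_x_mul_x_mem hb hι hW)
    simpa [basisFamily, mul_add] using this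
  | .inr (.inr (.inr _)) => exact h.x_mul_socleGen_mem hb hι hW

theorem y_mul_basisFamily_mem (j : ι) (k : Unit ⊕ ι ⊕ ι ⊕ Unit) :
    y j * basisFamily (algebraMap P R b) x z y i₀ k ∈ W := by
  match k with
  | .inl _ => exact (mul_one (y j)).symm ▸ h.y_mem hb hW j
  | .inr (.inl i) =>
    have := add_mem (h.y_mul_y_mem hb hW j i) (h.x_mul_y_mem hb hW j)
    simpa [basisFamily, mul_add, mul_comm x] using this
  | .inr (.inr (.inl i)) =>
    have := add_mem (h.y_mul_x_mul_y_mem hb hι hW j i) (h.x_mul_x_mul_y_mem hb hι hW j)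
    simpa [basisFamily, mul_add, mul_comm, mul_left_comm] using this
  | .inr (.inr (.inr _)) => exact h.y_mul_socleGen_mem hb hι hW j

omit hW in
theorem span_range_basisFamily (i₀ : ι) (hgen : Algebra.adjoin P (insert x (Set.range y)) = ⊤) :
    Submodule.span P (Set.range (basisFamily (algebraMap P R b) x z y i₀)) = ⊤ := by
  have hW : ∀ k, basisFamily (algebraMap P R b) x z y i₀ k ∈
      Submodule.span P (Set.range (basisFamily (algebraMap P R b) x z y i₀)) :=
    fun k => Submodule.subset_span ⟨k, rfl⟩
  refine submodule_eq_top_of_adjoin_eq_top hgen (one_mem hW) ?_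
  suffices hG : ∀ g ∈ insert x (Set.range y), ∀ k,
      g * basisFamily (algebraMap P R b) x z y i₀ k ∈
        Submodule.span P (Set.range (basisFamily (algebraMap P R b) x z y i₀)) by
    intro g hg w hw
    have := Submodule.mem_map_of_mem (f := LinearMap.mulLeft P g) hw
    rw [Submodule.map_span] at this
    exact Submodule.span_le.mpr (by rintro _ ⟨_, ⟨k, rfl⟩, rfl⟩; exact hG g hg k) this
  rintro g (rfl | ⟨j, rfl⟩) k
  · exact h.x_mul_basisFamily_mem hb hι hW k
  · exact h.y_mul_basisFamily_mem hb hι hW j k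

end Spanning

end DiamondRelations

theorem linearIndependent_of_exists_apply_ne_zero_iff {P M κ : Type*} [CommRing P]
    [NoZeroDivisors P] [AddCommGroup M] [Module P M] {v : κ → M}
    (hv : ∀ k, ∃ f : M →ₗ[P] P, ∀ l, f (v l) ≠ 0 ↔ l = k) : LinearIndependent P v := by
  refine linearIndependent_iff.mpr fun g hg => Finsupp.ext fun k => ?_
  obtain ⟨f, hf⟩ := hv k
  have h := congrArg f hg
  rw [Finsupp.linearCombination_apply, map_finsuppSum, map_zero, Finsupp.sum,
    Finset.sum_eq_single k
      (fun l _ hl => by rw [map_smul, not_ne_iff.mp (mt (hf l).mp hl), smul_zero])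
      fun hk => by rw [Finsupp.notMem_support_iff.mp hk, zero_smul, map_zero], map_smul] at h
  exact (mul_eq_zero.mp h).resolve_right ((hf k).mpr rfl)

theorem linearIndependent_of_span_eq_top {P M κ : Type*} [CommRing P] [AddCommGroup M] [Module P M]
    [Finite κ] {v e : κ → M} (hv : LinearIndependent P v)
    (he : Submodule.span P (Set.range e) = ⊤) : LinearIndependent P e := by
  have : Module.Finite P M := ⟨Submodule.fg_def.mpr ⟨_, Set.finite_range e, he⟩⟩
  exact OrzechProperty.injective_of_surjective_of_injective
    (Finsupp.linearCombination P v) (Finsupp.linearCombination P e) hv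
    (LinearMap.range_eq_top.mp (by rw [Finsupp.range_linearCombination, he]))

/-- `R` is the universal `P`-algebra with elements `x`, `z`, `y i` satisfying the diamond relations
with parameters `b`, `s` and `t` from `P`. -/
structure IsUniversalDiamond {P : Type u} {R ι : Type*} [CommRing P] [CommRing R] [Algebra P R]
    [Fintype ι] (b s t : P) (x z : R) (y : ι → R) : Prop where
  relations : DiamondRelations (algebraMap P R b) (algebraMap P R s) (algebraMap P R t) x z y
  adjoin_eq_top : Algebra.adjoin P (insert x (Set.range y)) = ⊤
  exists_algHom : ∀ {Q : Type u} [CommRing Q] [Algebra P Q] {x' z' : Q} {y' : ι → Q},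
    DiamondRelations (algebraMap P Q b) (algebraMap P Q s) (algebraMap P Q t) x' z' y' →
      ∃ f : R →ₐ[P] Q, f x = x' ∧ f z = z' ∧ ∀ i, f (y i) = y' i

section Components

variable {P ι : Type*} [CommRing P] [Fintype ι] [DecidableEq ι] (b s t : P)

theorem diamondRelations_single (x z : P) (hxz : x * z = 0) (j : ι) :
    DiamondRelations b (x - z) t x z (Pi.single j (t + b * x)) where
  mul_eq i k hik := by
    obtain rfl | hi := eq_or_ne i j
    · rw [Pi.single_eq_of_ne hik.symm, mul_zero, hxz]
    · rw [Pi.single_eq_of_ne hi, zero_mul, hxz]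
  x_sub_z := rfl
  sum_sub := by rw [Finset.sum_pi_single', if_pos (Finset.mem_univ j), add_sub_cancel_right]

omit [DecidableEq ι]

open QuadraticAlgebra in
theorem diamondRelations_quadraticAlgebra {u : P}
    (hu : ((Fintype.card ι : P) ^ 2 - b ^ 2) * u = 1) :
    DiamondRelations (R := QuadraticAlgebra P (t ^ 2 + b * t * s) (Fintype.card ι * s))
      (algebraMap _ _ b) (algebraMap _ _ s) (algebraMap _ _ t)
      (u • ⟨b * t, Fintype.card ι⟩) (u • ⟨b * t, Fintype.card ι⟩ - algebraMap _ _ s)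
      fun _ : ι => u • ⟨Fintype.card ι * t, b⟩ where
  mul_eq i k _ := by
    ext
    · simp only [smul_mk, smul_eq_mul, mk_mul_mk, re_mul, re_sub, algebraMap_re, im_sub,
        algebraMap_im, sub_zero]
      linear_combination (-(b * t * s * u)) * hu
    · simp only [smul_mk, smul_eq_mul, mk_mul_mk, im_mul, re_sub, algebraMap_re, im_sub,
        algebraMap_im, sub_zero]
      linear_combination (-(Fintype.card ι * s * u)) * hu
  x_sub_z := sub_sub_cancel _ _
  sum_sub := by
    simp only [Finset.sum_const, Finset.card_univ]
    ext
    · simp only [smul_mk, smul_eq_mul, nsmul_eq_mul, re_sub, re_mul, algebraMap_re,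
        algebraMap_im, mul_zero, zero_mul, add_zero]
      linear_combination t * hu
    · simp only [smul_mk, smul_eq_mul, nsmul_eq_mul, im_sub, im_mul, algebraMap_re,
        algebraMap_im, mul_zero, zero_mul, add_zero]
      ring

end Components

namespace IsUniversalDiamond

variable {P : Type u} {R ι : Type*} [CommRing P] [CommRing R] [Algebra P R] [Fintype ι]
  {b s t : P} {x z : R} {y : ι → R}

theorem exists_algHom_single [DecidableEq ι] (h : IsUniversalDiamond b s t x z y) {x' z' : P}
    (hxz : x' * z' = 0) (hs : x' - z' = s) (j : ι) :
    ∃ f : R →ₐ[P] P, f x = x' ∧ f z = z' ∧ ∀ i, f (y i) = (Pi.single j (t + b * x') : ι → P) i :=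
  h.exists_algHom (Q := P) (hs ▸ diamondRelations_single b t x' z' hxz j)

/-- A family detected by the `2 n` linear components `y i = 0` for `i ≠ j` of the diamond variety
together with its quadric component, on which all `y i` agree. -/
def detectingFamily (b x z : R) (y : ι → R) (i₀ : ι) : Unit ⊕ ι ⊕ ι ⊕ Unit → R :=
  Sum.elim (fun _ => x * z) (Sum.elim (fun i => x * (y i ^ 2 - x * z))
    (Sum.elim (fun i => z * (y i ^ 2 - x * z)) fun _ => DiamondRelations.socleGen b x z y i₀))

theorem exists_linear_component_x [IsDomain P] (h : IsUniversalDiamond b s t x z y)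
    (hs : s ≠ 0) (htb : t + b * s ≠ 0) (i₀ j : ι) :
    ∃ f : R →ₗ[P] P, ∀ k, f (detectingFamily (algebraMap P R b) x z y i₀ k) ≠ 0 ↔
      k = Sum.inr (Sum.inl j) := by
  classical
  obtain ⟨f, hx, hz, hy⟩ := h.exists_algHom_single (mul_zero s) (sub_zero s) j
  refine ⟨f.toLinearMap, ?_⟩
  rintro (_ | i | i | _) <;>
    simp [detectingFamily, DiamondRelations.socleGen, hx, hz, hy, hs, htb, Pi.single_apply]

theorem exists_linear_component_z [IsDomain P] (h : IsUniversalDiamond b s t x z y)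
    (hs : s ≠ 0) (ht : t ≠ 0) (i₀ j : ι) :
    ∃ f : R →ₗ[P] P, ∀ k, f (detectingFamily (algebraMap P R b) x z y i₀ k) ≠ 0 ↔
      k = Sum.inr (Sum.inr (Sum.inl j)) := by
  classical
  obtain ⟨f, hx, hz, hy⟩ := h.exists_algHom_single (zero_mul (-s)) (by simp) j
  refine ⟨f.toLinearMap, ?_⟩
  rintro (_ | i | i | _) <;>
    simp [detectingFamily, DiamondRelations.socleGen, hx, hz, hy, hs, ht, Pi.single_apply]

open QuadraticAlgebra in
theorem exists_algHom_quadraticAlgebra (h : IsUniversalDiamond b s t x z y)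
    (hι : 2 < Fintype.card ι) {u : P} (hu : ((Fintype.card ι : P) ^ 2 - b ^ 2) * u = 1) :
    ∃ (f : R →ₐ[P] QuadraticAlgebra P (t ^ 2 + b * t * s) (Fintype.card ι * s))
      (η : QuadraticAlgebra P (t ^ 2 + b * t * s) (Fintype.card ι * s)),
      norm η = u * t * (t + b * s) ∧ f (x * z) = η ^ 2 ∧ (∀ i, f (y i) = η) ∧
        ∀ i, f (DiamondRelations.socleGen (algebraMap P R b) x z y i) = η ^ 2 * ω := by
  have hrel := diamondRelations_quadraticAlgebra (ι := ι) b s t hu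
  obtain ⟨f, hx, hz, hy⟩ := h.exists_algHom hrel
  have : Nontrivial ι := Fintype.one_lt_card_iff_nontrivial.mp (one_lt_two.trans hι)
  obtain ⟨i, j, hij⟩ := exists_pair_ne ι
  have hxz : f (x * z) = (u • ⟨Fintype.card ι * t, b⟩) ^ 2 := by
    rw [map_mul, hx, hz, ← hrel.mul_eq hij, pow_two (_ • _)]
  refine ⟨f, u • ⟨Fintype.card ι * t, b⟩, ?_, hxz, hy, fun i => ?_⟩
  · simp only [norm_def, re_smul, im_smul, smul_eq_mul]
    linear_combination u * t * (t + b * s) * hu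
  · rw [DiamondRelations.socleGen, map_mul, hxz, map_sub, map_mul, map_mul, hx, hy, map_natCast,
      AlgHom.commutes]
    congr 1
    ext
    · simp only [smul_mk, smul_eq_mul, nsmul_mk, re_sub, re_mul, algebraMap_re, algebraMap_im,
        mul_zero, zero_mul, add_zero, omega_re]
      ring
    · simp only [smul_mk, smul_eq_mul, nsmul_mk, im_sub, im_mul, algebraMap_re, algebraMap_im,
        mul_zero, zero_mul, add_zero, omega_im]
      linear_combination hu

theorem exists_quadric_component [IsDomain P] (h : IsUniversalDiamond b s t x z y)
    (hι : 2 < Fintype.card ι) (hb : IsUnit ((Fintype.card ι : P) ^ 2 - b ^ 2))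
    (ht : t ≠ 0) (htb : t + b * s ≠ 0) (i₀ : ι) :
    (∃ f : R →ₗ[P] P, ∀ k, f (detectingFamily (algebraMap P R b) x z y i₀ k) ≠ 0 ↔
      k = Sum.inl ()) ∧
    ∃ f : R →ₗ[P] P, ∀ k, f (detectingFamily (algebraMap P R b) x z y i₀ k) ≠ 0 ↔
      k = Sum.inr (Sum.inr (Sum.inr ())) := by
  obtain ⟨u, hu⟩ := hb.exists_right_inv
  obtain ⟨f, η, hη, hxz, hy, hσ⟩ := h.exists_algHom_quadraticAlgebra hι hu
  set N : P := QuadraticAlgebra.norm η with hN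
  have hN0 : N ≠ 0 :=
    hη ▸ mul_ne_zero (mul_ne_zero (right_ne_zero_of_mul_eq_one hu) ht) htb
  have hstar (w) : star η ^ 2 * (η ^ 2 * w) = N ^ 2 • w := by
    rw [Algebra.smul_def, map_pow, hN, QuadraticAlgebra.algebraMap_norm_eq_mul_star]
    ring
  let g := LinearMap.mulLeft P (star η ^ 2) ∘ₗ f.toLinearMap
  have hg_xz : g (x * z) = N ^ 2 • 1 := by simpa [g, hxz] using hstar 1
  have hg_σ : g (DiamondRelations.socleGen (algebraMap P R b) x z y i₀) =
      N ^ 2 • QuadraticAlgebra.omega := by simpa [g, hσ] using hstar _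
  have hg_mul (r i) : g (r * (y i ^ 2 - x * z)) = 0 := by simp [g, hy, hxz]
  refine ⟨⟨QuadraticAlgebra.reₗ _ _ ∘ₗ g, ?_⟩, ⟨QuadraticAlgebra.imₗ _ _ ∘ₗ g, ?_⟩⟩ <;>
    rintro (_ | i | i | _) <;>
    simp [detectingFamily, hg_xz, hg_σ, hg_mul, hN0, QuadraticAlgebra.re_one,
      QuadraticAlgebra.im_one]

variable [IsDomain P] (h : IsUniversalDiamond b s t x z y)
  (hι : 2 < Fintype.card ι) (hb : IsUnit ((Fintype.card ι : P) ^ 2 - b ^ 2))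
  (hs : s ≠ 0) (ht : t ≠ 0) (htb : t + b * s ≠ 0) (i₀ : ι)
include h hι hb hs ht htb

theorem linearIndependent_basisFamily :
    LinearIndependent P (DiamondRelations.basisFamily (algebraMap P R b) x z y i₀) := by
  classical
  have hv : LinearIndependent P (detectingFamily (algebraMap P R b) x z y i₀) := by
    refine linearIndependent_of_exists_apply_ne_zero_iff fun k => ?_
    obtain ⟨hfst, hlst⟩ := h.exists_quadric_component hι hb ht htb i₀
    match k with
    | .inl _ => exact hfst
    | .inr (.inl j) => exact h.exists_linear_component_x hs htb i₀ j
    | .inr (.inr (.inl j)) => exact h.exists_linear_component_z hs ht i₀ j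
    | .inr (.inr (.inr _)) => exact hlst
  exact linearIndependent_of_span_eq_top hv
    (h.relations.span_range_basisFamily hb hι i₀ h.adjoin_eq_top)

/-- The basis of the universal diamond ring over its ring of parameters. -/
noncomputable def basis : Module.Basis (Unit ⊕ ι ⊕ ι ⊕ Unit) P R :=
  Module.Basis.mk (h.linearIndependent_basisFamily hι hb hs ht htb i₀)
    (h.relations.span_range_basisFamily hb hι i₀ h.adjoin_eq_top).ge

theorem exists_socleGen_coord : ∃ f : R →ₗ[P] P,
    f (DiamondRelations.socleGen (algebraMap P R b) x z y i₀) = 1 :=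
  ⟨(h.basis hι hb hs ht htb i₀).coord (Sum.inr (Sum.inr (Sum.inr ()))),
    Module.Basis.mk_coord_apply_eq _⟩

end IsUniversalDiamond

theorem ofList_take_ofFn {R : Type*} [CommRing R] {m : ℕ} (f : Fin m → R) (k : Fin m) :
    Ideal.ofList ((List.ofFn f).take k) = Ideal.span (f '' {j | j < k}) := by
  refine congrArg Ideal.span (Set.ext fun r => ?_)
  simp only [Set.mem_ofPred_eq, List.mem_take_iff_getElem, List.getElem_ofFn, List.length_ofFn,
    Set.mem_image, lt_inf_iff]
  constructor
  · rintro ⟨i, ⟨hik, him⟩, rfl⟩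
    exact ⟨⟨i, him⟩, hik, rfl⟩
  · rintro ⟨j, hj, rfl⟩
    exact ⟨j, ⟨hj, j.isLt⟩, rfl⟩

theorem isWeaklyRegular_ofFn_iff {R : Type*} [CommRing R] {m : ℕ} (f : Fin m → R) :
    IsWeaklyRegular R (List.ofFn f) ↔
      ∀ (k : Fin m) (s : R), f k * s ∈ Ideal.span (f '' {j | j < k}) →
        s ∈ Ideal.span (f '' {j | j < k}) := by
  have h (k : Fin m) : IsSMulRegular (R ⧸ Ideal.ofList ((List.ofFn f).take k) • (⊤ : Ideal R)) (f k)
      ↔ ∀ s : R, f k * s ∈ Ideal.span (f '' {j | j < k}) → s ∈ Ideal.span (f '' {j | j < k}) := by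
    rw [isSMulRegular_quotient_iff_mem_of_smul_mem, smul_eq_mul, Ideal.mul_top, ofList_take_ofFn]
    rfl
  simp only [← h]
  exact ⟨fun hf k => by simpa using hf.regular_mod_prev k (by simp),
    fun hf => ⟨fun i hi => by simpa using hf ⟨i, by simpa using hi⟩⟩⟩

theorem isWeaklyRegular_ofFn_X (R : Type*) [CommRing R] (m : ℕ) :
    IsWeaklyRegular (MvPolynomial (Fin m) R) (List.ofFn (X (R := R) : Fin m → _)) := by
  refine (isWeaklyRegular_ofFn_iff _).mpr fun k p hp => mem_ideal_span_X_image.mpr fun a ha => ?_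
  obtain ⟨i, hik, hi⟩ := mem_ideal_span_X_image.mp hp (Finsupp.single k 1 + a) (by simpa using ha)
  have : Finsupp.single k 1 i = 0 := Finsupp.single_eq_of_ne (ne_of_lt hik)
  exact ⟨i, hik, by simpa [this] using hi⟩

theorem ringKrullDim_le_of_isIntegral (P R : Type*) [CommRing P] [CommRing R] [Algebra P R]
    [Algebra.IsIntegral P R] : ringKrullDim R ≤ ringKrullDim P :=
  Order.krullDim_le_of_strictMono (PrimeSpectrum.comap (algebraMap P R)) fun _ _ h =>
    Ideal.IsIntegral.comap_lt_comap h

section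

variable {K : Type*} [Field K] {m : ℕ} {R : Type*} [CommRing R]
  [Algebra (MvPolynomial (Fin m) K) R]

theorem ringKrullDim_eq_of_finite_of_surjective [Module.Finite (MvPolynomial (Fin m) K) R]
    (f : R →+* MvPolynomial (Fin m) K) (hf : Function.Surjective f) : ringKrullDim R = m := by
  have hdim : ringKrullDim (MvPolynomial (Fin m) K) = m := by
    simp [MvPolynomial.ringKrullDim_of_isNoetherianRing]
  exact le_antisymm (hdim ▸ ringKrullDim_le_of_isIntegral _ R)
    (hdim ▸ ringKrullDim_le_of_surjective f hf)

theorem isWeaklyRegular_ofFn_algebraMap_X [Module.Flat (MvPolynomial (Fin m) K) R] :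
    IsWeaklyRegular R (List.ofFn fun i => algebraMap (MvPolynomial (Fin m) K) R (X i)) := by
  simpa [List.map_ofFn, Function.comp_def] using (isWeaklyRegular_ofFn_X K m).of_flat (S := R)

end

section

variable {K : Type u} [Field K] {n : ℕ}

theorem diamondIdeal_le_ker_iff {Q : Type*} [CommRing Q] (f : MvPolynomial (Fin (n + 2)) K →+* Q) :
    diamondIdeal K n ≤ RingHom.ker f ↔
      Pairwise fun i j => f (yP K n i) * f (yP K n j) = f (xP K n) * f (zP K n) := by
  refine Ideal.span_le.trans ⟨fun h i j hij => ?_, ?_⟩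
  · have hlt {i j} (hij : i < j) : f (yP K n i) * f (yP K n j) = f (xP K n) * f (zP K n) := by
      simpa [sub_eq_zero] using h ⟨i, j, hij, rfl⟩
    exact hij.lt_or_gt.elim hlt fun hji => (mul_comm _ _).trans (hlt hji)
  · rintro h _ ⟨i, j, hij, rfl⟩
    simpa [sub_eq_zero] using h hij.ne

theorem X_mem_idealOfVars {σ R : Type*} [CommRing R] (i : σ) : X i ∈ idealOfVars σ R :=
  Ideal.subset_span ⟨i, rfl⟩

theorem diamondIdeal_le_idealOfVars : diamondIdeal K n ≤ idealOfVars (Fin (n + 2)) K := by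
  refine Ideal.span_le.mpr ?_
  rintro _ ⟨i, j, -, rfl⟩
  exact sub_mem (Ideal.mul_mem_left _ _ (X_mem_idealOfVars _))
    (Ideal.mul_mem_left _ _ (X_mem_idealOfVars _))

/-- The linear forms `x - z` and `∑ i, y i - b x`, a system of parameters of the diamond ring if
`n² ≠ b²`. -/
noncomputable def diamondParam (n : ℕ) (b : K) : Fin 2 → MvPolynomial (Fin (n + 2)) K :=
  ![xP K n - zP K n, ∑ i, yP K n i - C b * xP K n]

theorem diamondParam_mem_idealOfVars (b : K) (i : Fin 2) :
    diamondParam n b i ∈ idealOfVars (Fin (n + 2)) K := by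
  have hX (j) : X j ∈ idealOfVars (Fin (n + 2)) K := X_mem_idealOfVars j
  fin_cases i
  · exact sub_mem (hX _) (hX _)
  · exact sub_mem (sum_mem fun _ _ => hX _) (Ideal.mul_mem_left _ _ (hX _))

/-- The diamond ring as an algebra over the polynomial ring of its parameters. -/
noncomputable abbrev diamondAlgebra (n : ℕ) (b : K) :
    Algebra (MvPolynomial (Fin 2) K) (MvPolynomial (Fin (n + 2)) K ⧸ diamondIdeal K n) :=
  ((Ideal.Quotient.mk (diamondIdeal K n)).comp (aeval (diamondParam n b)).toRingHom).toAlgebra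

theorem forall_X_iff {p : MvPolynomial (Fin (n + 2)) K → Prop} :
    (∀ i, p (X i)) ↔ p (xP K n) ∧ p (zP K n) ∧ ∀ i, p (yP K n i) := by
  rw [Fin.forall_fin_succ', Fin.forall_fin_succ, and_assoc, and_comm (a := ∀ i : Fin n, _)]
  rfl

theorem induction_on_xP_yP_zP {p : MvPolynomial (Fin (n + 2)) K → Prop}
    (C : ∀ a, p (C a)) (add : ∀ f g, p f → p g → p (f + g)) (mul : ∀ f g, p f → p g → p (f * g))
    (x : p (xP K n)) (y : ∀ i, p (yP K n i)) (z : p (zP K n)) (f) : p f := by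
  induction f using MvPolynomial.induction_on with
  | C a => exact C a
  | add f g hf hg => exact add f g hf hg
  | mul_X f i hf => exact mul f _ hf (forall_X_iff.mpr ⟨x, z, y⟩ i)

theorem adjoin_insert_range_eq_top {P Q : Type*} [CommRing P] [CommRing Q] [Algebra P Q]
    {f : MvPolynomial (Fin (n + 2)) K →+* Q} (hf : Function.Surjective f)
    (hC : ∀ a, f (C a) ∈ (algebraMap P Q).range)
    (hxz : f (xP K n) - f (zP K n) ∈ (algebraMap P Q).range) :
    Algebra.adjoin P (insert (f (xP K n)) (Set.range fun i => f (yP K n i))) = ⊤ := by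
  set A := Algebra.adjoin P (insert (f (xP K n)) (Set.range fun i => f (yP K n i)))
  have hrange {r : Q} : r ∈ (algebraMap P Q).range → r ∈ A := by
    rintro ⟨c, rfl⟩
    exact A.algebraMap_mem c
  have hx : f (xP K n) ∈ A := Algebra.subset_adjoin (Set.mem_insert _ _)
  rw [eq_top_iff]
  rintro r -
  obtain ⟨p, rfl⟩ := hf r
  induction p using induction_on_xP_yP_zP with
  | C a => exact hrange (hC a)
  | add p q hp hq => exact map_add f p q ▸ add_mem hp hq
  | mul p q hp hq => exact map_mul f p q ▸ mul_mem hp hq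
  | x => exact hx
  | y i => exact Algebra.subset_adjoin (Set.mem_insert_of_mem _ ⟨i, rfl⟩)
  | z => exact sub_sub_cancel (f (xP K n)) (f (zP K n)) ▸ sub_mem hx (hrange hxz)

section QuotientAlgebra

variable (n) (b : K)

theorem algebraMap_quotient_diamondIdeal (p : MvPolynomial (Fin 2) K) :
    letI := diamondAlgebra n b
    algebraMap (MvPolynomial (Fin 2) K) (MvPolynomial (Fin (n + 2)) K ⧸ diamondIdeal K n) p =
      Ideal.Quotient.mk _ (aeval (diamondParam n b) p) := rfl

theorem diamondRelations_quotient_diamondIdeal :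
    letI := diamondAlgebra n b
    DiamondRelations (algebraMap (MvPolynomial (Fin 2) K) _ (C b))
      (algebraMap (MvPolynomial (Fin 2) K) _ (X 0)) (algebraMap (MvPolynomial (Fin 2) K) _ (X 1))
      (Ideal.Quotient.mk (diamondIdeal K n) (xP K n)) (Ideal.Quotient.mk _ (zP K n))
      fun i => Ideal.Quotient.mk _ (yP K n i) where
  mul_eq := (diamondIdeal_le_ker_iff _).mp Ideal.mk_ker.ge
  x_sub_z := by simp [algebraMap_quotient_diamondIdeal, diamondParam]
  sum_sub := by simp [algebraMap_quotient_diamondIdeal, diamondParam, ← algebraMap_eq]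

theorem exists_ringHom_of_diamondRelations {Q : Type*} [CommRing Q] {s t x z : Q} {y : Fin n → Q}
    (φ : K →+* Q) (h : DiamondRelations (φ b) s t x z y) :
    ∃ f : MvPolynomial (Fin (n + 2)) K ⧸ diamondIdeal K n →+* Q,
      (∀ a, f (Ideal.Quotient.mk _ (C a)) = φ a) ∧ f (Ideal.Quotient.mk _ (xP K n)) = x ∧
        f (Ideal.Quotient.mk _ (zP K n)) = z ∧ ∀ i, f (Ideal.Quotient.mk _ (yP K n i)) = y i := by
  let g : MvPolynomial (Fin (n + 2)) K →+* Q := eval₂Hom φ (Fin.cons x (Fin.snoc y z))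
  have hgx : g (xP K n) = x := by simp [g, xP]
  have hgz : g (zP K n) = z := by simp [g, zP, ← Fin.succ_last]
  have hgy (i) : g (yP K n i) = y i := by simp [g, yP]
  have hg : diamondIdeal K n ≤ RingHom.ker g := by
    simpa only [diamondIdeal_le_ker_iff, hgx, hgy, hgz] using h.mul_eq
  exact ⟨Ideal.Quotient.lift _ g hg, fun a => eval₂_C φ _ a, hgx, hgz, hgy⟩

theorem isUniversalDiamond_quotient_diamondIdeal :
    letI := diamondAlgebra n b
    IsUniversalDiamond (C b) (X 0 : MvPolynomial (Fin 2) K) (X 1)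
      (Ideal.Quotient.mk (diamondIdeal K n) (xP K n)) (Ideal.Quotient.mk _ (zP K n))
      fun i => Ideal.Quotient.mk _ (yP K n i) := by
  let := diamondAlgebra n b
  have hrel := diamondRelations_quotient_diamondIdeal n b
  refine ⟨hrel, ?_, fun {Q} _ _ x z y h => ?_⟩
  · refine adjoin_insert_range_eq_top Ideal.Quotient.mk_surjective (fun a => ⟨C a, ?_⟩)
      ⟨X 0, hrel.x_sub_z.symm⟩
    rw [algebraMap_quotient_diamondIdeal, ← algebraMap_eq, AlgHom.commutes, algebraMap_eq]
  · obtain ⟨f, hC, hx, hz, hy⟩ :=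
      exists_ringHom_of_diamondRelations n b ((algebraMap (MvPolynomial (Fin 2) K) Q).comp C) h
    have hfC (a) : f (algebraMap (MvPolynomial (Fin 2) K) _ (C a)) =
        algebraMap (MvPolynomial (Fin 2) K) Q (C a) := by
      rw [algebraMap_quotient_diamondIdeal, ← algebraMap_eq, AlgHom.commutes]
      exact hC a
    have hfX : ∀ i, f (algebraMap (MvPolynomial (Fin 2) K) _ (X i)) =
        algebraMap (MvPolynomial (Fin 2) K) Q (X i) := by
      refine Fin.forall_fin_two.mpr ⟨?_, ?_⟩
      · rw [← hrel.x_sub_z, map_sub, hx, hz, h.x_sub_z]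
      · rw [← hrel.sum_sub, map_sub, map_sum, map_mul, hfC, hx]
        simpa only [hy] using h.sum_sub
    have hcomp : f.comp (algebraMap (MvPolynomial (Fin 2) K) _) = algebraMap _ Q :=
      MvPolynomial.ringHom_ext hfC hfX
    exact ⟨⟨f, RingHom.congr_fun hcomp⟩, hx, hz, hy⟩

end QuotientAlgebra

end

theorem apply_mem_of_mem_map_algebraMap {P R : Type*} [CommRing P] [CommRing R] [Algebra P R]
    (f : R →ₗ[P] P) {J : Ideal P} {r : R} (hr : r ∈ J.map (algebraMap P R)) : f r ∈ J := by
  rw [← Submodule.restrictScalars_mem P, ← Ideal.smul_top_eq_map] at hr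
  induction hr using Submodule.smul_induction_on' with
  | smul a ha m _ => exact map_smul f a m ▸ J.mul_mem_right _ ha
  | add u _ v _ hu hv => exact map_add f u v ▸ J.add_mem hu hv

theorem X_one_add_C_mul_X_zero_ne_zero {K : Type*} [Field K] (b : K) :
    (X 1 + C b * X 0 : MvPolynomial (Fin 2) K) ≠ 0 := fun h => by
  simpa using congrArg (MvPolynomial.eval ![0, 1]) h

namespace IsUniversalDiamond

variable {K : Type u} {R ι : Type*} [Field K] [CommRing R] [Algebra (MvPolynomial (Fin 2) K) R]
  [Fintype ι] {b : K} {x z : R} {y : ι → R}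

variable (h : IsUniversalDiamond (C b) (X 0 : MvPolynomial (Fin 2) K) (X 1) x z y)
include h

theorem exists_surjective_ringHom (j : ι) :
    ∃ f : R →+* MvPolynomial (Fin 2) K, Function.Surjective f := by
  classical
  obtain ⟨f, -⟩ := h.exists_algHom_single (mul_zero (X 0)) (sub_zero (X 0)) j
  exact ⟨f, fun p => ⟨algebraMap _ R p, f.commutes p⟩⟩

variable (hι : 2 < Fintype.card ι)
  (hb : IsUnit ((Fintype.card ι : MvPolynomial (Fin 2) K) ^ 2 - C b ^ 2))
include hι hb

/-- The basis of the universal diamond ring over a polynomial ring in two parameters. -/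
noncomputable def basisOfMvPolynomial (i₀ : ι) :
    Module.Basis (Unit ⊕ ι ⊕ ι ⊕ Unit) (MvPolynomial (Fin 2) K) R :=
  h.basis hι hb (X_ne_zero 0) (X_ne_zero 1)
    (X_one_add_C_mul_X_zero_ne_zero b) i₀

theorem ringKrullDim_eq_two : ringKrullDim R = 2 := by
  obtain ⟨i₀⟩ : Nonempty ι := Fintype.card_pos_iff.mp (by omega)
  have := Module.Finite.of_basis (h.basisOfMvPolynomial hι hb i₀)
  obtain ⟨f, hf⟩ := h.exists_surjective_ringHom i₀
  exact ringKrullDim_eq_of_finite_of_surjective f hf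

theorem isWeaklyRegular_algebraMap_X :
    IsWeaklyRegular R (List.ofFn fun i => algebraMap (MvPolynomial (Fin 2) K) R (X i)) := by
  obtain ⟨i₀⟩ : Nonempty ι := Fintype.card_pos_iff.mp (by omega)
  have := Module.Free.of_basis (h.basisOfMvPolynomial hι hb i₀)
  exact isWeaklyRegular_ofFn_algebraMap_X

theorem socleGen_notMem (i₀ : ι) :
    DiamondRelations.socleGen (algebraMap (MvPolynomial (Fin 2) K) R (C b)) x z y i₀ ∉
      (idealOfVars (Fin 2) K).map (algebraMap (MvPolynomial (Fin 2) K) R) := by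
  obtain ⟨f, hf⟩ := h.exists_socleGen_coord hι hb (X_ne_zero 0) (X_ne_zero 1)
    (X_one_add_C_mul_X_zero_ne_zero b) i₀
  exact fun hmem => (isMaximal_idealOfVars _ K).ne_top
    ((Ideal.eq_top_iff_one _).mpr (hf ▸ apply_mem_of_mem_map_algebraMap f hmem))

end IsUniversalDiamond

section

variable {K : Type u} [Field K] {n : ℕ}

theorem exists_natCast_sq_sub_sq_ne_zero (K : Type u) [Field K] (n : ℕ) :
    ∃ b : K, (n : K) ^ 2 - b ^ 2 ≠ 0 := by
  by_cases h : (n : K) = 0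
  · exact ⟨1, by simp [h]⟩
  · exact ⟨0, by simp [h]⟩

theorem isUnit_card_sq_sub_C_sq (σ : Type*) {b : K} (hb : (n : K) ^ 2 - b ^ 2 ≠ 0) :
    IsUnit ((Fintype.card (Fin n) : MvPolynomial σ K) ^ 2 - C b ^ 2) := by
  simpa using hb.isUnit.map (C (σ := σ))

variable {b : K} (hn : 2 < n) (hb : (n : K) ^ 2 - b ^ 2 ≠ 0)
include hn hb

theorem ringKrullDim_quotient_diamondIdeal :
    ringKrullDim (MvPolynomial (Fin (n + 2)) K ⧸ diamondIdeal K n) = 2 :=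
  let := diamondAlgebra n b
  (isUniversalDiamond_quotient_diamondIdeal n b).ringKrullDim_eq_two
    (by rwa [Fintype.card_fin]) (isUnit_card_sq_sub_C_sq _ hb)

theorem isWeaklyRegular_quotient_diamondIdeal :
    IsWeaklyRegular (MvPolynomial (Fin (n + 2)) K ⧸ diamondIdeal K n)
      (List.ofFn fun i => Ideal.Quotient.mk (diamondIdeal K n) (diamondParam n b i)) := by
  let := diamondAlgebra n b
  have := (isUniversalDiamond_quotient_diamondIdeal n b).isWeaklyRegular_algebraMap_X
    (by rwa [Fintype.card_fin]) (isUnit_card_sq_sub_C_sq _ hb)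
  simpa only [algebraMap_quotient_diamondIdeal, aeval_X] using this

theorem socleGen_notMem_diamondIdeal_sup (i : Fin n) :
    DiamondRelations.socleGen (C b) (xP K n) (zP K n) (yP K n) i ∉
      diamondIdeal K n ⊔ Ideal.ofList (List.ofFn (diamondParam n b)) := by
  let := diamondAlgebra n b
  have := (isUniversalDiamond_quotient_diamondIdeal n b).socleGen_notMem
    (by rwa [Fintype.card_fin]) (isUnit_card_sq_sub_C_sq _ hb) i
  have hle : (diamondIdeal K n ⊔ Ideal.ofList (List.ofFn (diamondParam n b))).map
      (Ideal.Quotient.mk (diamondIdeal K n)) ≤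
        (idealOfVars (Fin 2) K).map (algebraMap (MvPolynomial (Fin 2) K) _) := by
    rw [Ideal.map_sup, Ideal.map_quotient_self, bot_sup_eq, Ideal.ofList, Ideal.map_span,
      Ideal.span_le, Set.image_subset_iff]
    intro p hp
    obtain ⟨i, rfl⟩ := List.mem_ofFn.mp hp
    simpa only [Set.mem_preimage, SetLike.mem_coe, algebraMap_quotient_diamondIdeal,
      aeval_X] using Ideal.mem_map_of_mem
      (algebraMap (MvPolynomial (Fin 2) K) (_ ⧸ diamondIdeal K n)) (X_mem_idealOfVars i)
  refine fun hmem => this (hle ?_)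
  simpa [DiamondRelations.socleGen, algebraMap_quotient_diamondIdeal, ← algebraMap_eq] using
    Ideal.mem_map_of_mem (Ideal.Quotient.mk (diamondIdeal K n)) hmem

theorem isCMquot_diamondIdeal : IsCMquot (diamondIdeal K n) := by
  have hmem (i) : Ideal.Quotient.mk (diamondIdeal K n) (diamondParam n b i) ∈
      (idealOfVars (Fin (n + 2)) K).map (Ideal.Quotient.mk _) :=
    Ideal.mem_map_of_mem _ (diamondParam_mem_idealOfVars b i)
  refine ⟨2, ringKrullDim_quotient_diamondIdeal hn hb, _, hmem,
    (isWeaklyRegular_ofFn_iff _).mp (isWeaklyRegular_quotient_diamondIdeal hn hb), fun htop => ?_⟩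
  have hone : (1 : _ ⧸ diamondIdeal K n) ∈ (idealOfVars (Fin (n + 2)) K).map _ :=
    Ideal.span_le.mpr (Set.range_subset_iff.mpr hmem) (htop ▸ Submodule.mem_top)
  exact (isMaximal_idealOfVars _ K).ne_top ((Ideal.eq_top_iff_one _).mpr
    ((Ideal.mem_quotient_iff_mem diamondIdeal_le_idealOfVars).mp hone))

end

theorem nonempty_torsionBySet_equiv_of_eq_span_singleton {R M : Type*} [CommRing R] [AddCommGroup M]
    [Module R M] {m : Ideal R} [hm : m.IsMaximal] {v : M} (hv : v ≠ 0)
    (h : Submodule.torsionBySet R M m = Submodule.span R {v}) :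
    Nonempty (Submodule.torsionBySet R M m ≃ₗ[R] R ⧸ m) := by
  have hmv : v ∈ Submodule.torsionBySet R M m := h ▸ Submodule.mem_span_singleton_self v
  have hker : Ideal.torsionOf R M v = m := (hm.eq_of_le (mt (Ideal.torsionOf_eq_top_iff R v).mp hv)
    fun r hr => (Submodule.mem_torsionBySet_iff _ _).mp hmv ⟨r, hr⟩).symm
  exact ⟨LinearEquiv.ofEq _ _ h ≪≫ₗ (Ideal.quotTorsionOfEquivSpanSingleton R M v).symm ≪≫ₗ
    Submodule.quotEquivOfEq _ _ hker⟩

theorem eq_zero_of_forall_two_mul_sum_eq {K ι : Type*} [Field K] [Fintype ι] {b : K}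
    (hb : (Fintype.card ι : K) ^ 2 - b ^ 2 ≠ 0) {d : ι → K}
    (h : ∀ j, 2 * ∑ i, d i = (Fintype.card ι - b) * d j) : d = 0 := by
  rw [sq_sub_sq, mul_ne_zero_iff] at hb
  have hsum := Finset.sum_congr rfl fun j (_ : j ∈ Finset.univ) => h j
  rw [Finset.sum_const, Finset.card_univ, nsmul_eq_mul, ← Finset.mul_sum] at hsum
  have hzero : ∑ i, d i = 0 := (mul_eq_zero_iff_left hb.1).mp (by linear_combination hsum)
  funext j
  simpa [hzero, hb.2] using h j

namespace DiamondRelations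

section SocleProducts

variable {R ι : Type*} [CommRing R] [Fintype ι] {b x z : R} {y : ι → R}
  (h : DiamondRelations b 0 0 x z y) (hι : 2 < Fintype.card ι) (i₀ : ι)
include h hι

local notation "N" => (Fintype.card ι : R)

theorem linear_mul_quadric_of_ne {i j : ι} (hij : i ≠ j) :
    (N ^ 2 - b ^ 2) * ((y j + x) * (x * (y i + x))) = (N + b) * (2 * socleGen b x z y i₀) := by
  linear_combination 2 * h.mul_xz_mul_x hι i₀ + h.mul_xz_mul_y hι i + h.mul_xz_mul_y hι j +
    b * h.socleGen_eq hι i i₀ + b * h.socleGen_eq hι j i₀ +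
    (N ^ 2 - b ^ 2) * (x * h.mul_eq hij - (x + y i + y j) * h.xz_eq)

theorem linear_mul_quadric_self (i : ι) :
    (N ^ 2 - b ^ 2) * ((y i + x) * (x * (y i + x))) =
      (N + b) * ((2 - (N - b)) * socleGen b x z y i₀) := by
  linear_combination (2 - N) * h.mul_xz_mul_x hι i₀ + (b + 2) * h.mul_xz_mul_y hι i +
    b * (b + 2) * h.socleGen_eq hι i i₀ +
    (N ^ 2 - b ^ 2) * (x * h.y_sq i - ((b + 2) * y i + x) * h.xz_eq)

end SocleProducts

section Socle

variable {K R ι : Type*} [Field K] [CommRing R] [Algebra K R] [Fintype ι] {b : K} {x z : R}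
  {y : ι → R} (h : DiamondRelations (algebraMap K R b) 0 0 x z y) (hι : 2 < Fintype.card ι)
  (hb : (Fintype.card ι : K) ^ 2 - b ^ 2 ≠ 0) (i₀ : ι)
include h hι hb

theorem x_mul_socleGen_eq_zero : x * socleGen (algebraMap K R b) x z y i₀ = 0 := by
  have := h.mul_x_mul_socleGen hι i₀
  simp only [← map_natCast (algebraMap K R), ← map_pow, ← map_sub, ← Algebra.smul_def] at this
  simpa [hb] using this

theorem y_mul_socleGen_eq_zero (i : ι) : y i * socleGen (algebraMap K R b) x z y i₀ = 0 := by
  have := h.mul_y_mul_socleGen hι i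
  rw [h.socleGen_eq hι i i₀] at this
  simp only [← map_natCast (algebraMap K R), ← map_pow, ← map_sub, ← Algebra.smul_def] at this
  simpa [hb] using this

theorem smul_linear_mul_quadric [DecidableEq ι] (i j : ι) :
    ((Fintype.card ι : K) - b) • ((y j + x) * (x * (y i + x))) =
      (2 - if j = i then Fintype.card ι - b else 0) • socleGen (algebraMap K R b) x z y i₀ := by
  have hb' : (Fintype.card ι : K) + b ≠ 0 := fun h0 => hb (by rw [sq_sub_sq, h0, zero_mul])
  refine smul_right_injective R hb' ?_
  simp only [smul_smul, ← sq_sub_sq]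
  obtain rfl | hji := eq_or_ne j i
  · rw [if_pos rfl, Algebra.smul_def, Algebra.smul_def]
    simpa [mul_assoc, map_ofNat (algebraMap K R) 2] using h.linear_mul_quadric_self hι i₀ j
  · rw [if_neg hji, Algebra.smul_def, Algebra.smul_def]
    simpa [mul_assoc, map_ofNat (algebraMap K R) 2] using h.linear_mul_quadric_of_ne hι i₀ hji.symm

theorem smul_linear_mul_x_mul_sum (c : ι → K) (j : ι) :
    ((Fintype.card ι : K) - b) • ((y j + x) * (x * ∑ i, c i • (y i + x))) =
      (2 * ∑ i, c i - (Fintype.card ι - b) * c j) • socleGen (algebraMap K R b) x z y i₀ := by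
  classical
  simp only [Finset.mul_sum, Finset.smul_sum, mul_smul_comm, smul_comm _ (c _),
    h.smul_linear_mul_quadric hι hb i₀, smul_smul, ← Finset.sum_smul]
  congr 1
  simp [mul_sub, mul_comm]

theorem eq_zero_of_forall_linear_mul_x_mul_sum_eq_zero
    (hσ : socleGen (algebraMap K R b) x z y i₀ ≠ 0) {c : ι → K}
    (hc : ∀ j, (y j + x) * (x * ∑ i, c i • (y i + x)) = 0) : c = 0 :=
  eq_zero_of_forall_two_mul_sum_eq hb fun j => by
    have := h.smul_linear_mul_x_mul_sum hι hb i₀ c j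
    rw [hc, smul_zero, eq_comm, smul_eq_zero_iff_left hσ] at this
    exact sub_eq_zero.mp this

theorem mul_x_mul_sum_eq_zero (c : ι → K) (j : ι) :
    x * (y j + x) * (x * ∑ i, c i • (y i + x)) = 0 := by
  have hb' : (Fintype.card ι : K) - b ≠ 0 := fun h0 => hb (by rw [sq_sub_sq, h0, mul_zero])
  rw [mul_assoc, ← smul_eq_zero_iff_right hb', ← mul_smul_comm,
    h.smul_linear_mul_x_mul_sum hι hb j, mul_smul_comm, h.x_mul_socleGen_eq_zero hι hb,
    smul_zero]

theorem exists_eq_basisFamily (hgen : Algebra.adjoin K (insert x (Set.range y)) = ⊤) (r : R) :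
    ∃ (a : K) (c d : ι → K) (g : K), a • 1 + (∑ i, c i • (y i + x) +
      (x * ∑ i, d i • (y i + x) + g • socleGen (algebraMap K R b) x z y i₀)) = r := by
  have hr : r ∈ Submodule.span K (Set.range (basisFamily (algebraMap K R b) x z y i₀)) := by
    have h' : DiamondRelations (algebraMap K R b) (algebraMap K R 0) (algebraMap K R 0) x z y := by
      simpa only [map_zero] using h
    rw [h'.span_range_basisFamily hb.isUnit hι i₀ hgen]
    exact Submodule.mem_top
  obtain ⟨c, rfl⟩ := (Submodule.mem_span_range_iff_exists_fun K).mp hr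
  exact ⟨c (.inl ()), fun i => c (.inr (.inl i)), fun i => c (.inr (.inr (.inl i))),
    c (.inr (.inr (.inr ()))), by
      simp only [basisFamily, Finset.mul_sum, mul_smul_comm, Fintype.sum_sum_type,
        Finset.univ_unique, Finset.sum_singleton, Sum.elim_inl, Sum.elim_inr]⟩

theorem sum_mul_socleGen_eq_zero (c : ι → K) :
    (∑ i, c i • (y i + x)) * socleGen (algebraMap K R b) x z y i₀ = 0 := by
  simp [Finset.sum_mul, add_mul, h.x_mul_socleGen_eq_zero hι hb,
    h.y_mul_socleGen_eq_zero hι hb]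

theorem exists_eq_smul_socleGen (hgen : Algebra.adjoin K (insert x (Set.range y)) = ⊤)
    (hσ : socleGen (algebraMap K R b) x z y i₀ ≠ 0) {r : R} (hx : x * r = 0)
    (hy : ∀ i, y i * r = 0) : ∃ g : K, g • socleGen (algebraMap K R b) x z y i₀ = r := by
  -- Multiplying by `x z (n x - b y i₀)`, `x (y j + x)` and `y j + x` detects `a`, `c` and `d`.
  obtain ⟨a, c, d, g, rfl⟩ := h.exists_eq_basisFamily hι hb i₀ hgen r
  have hxσ := h.x_mul_socleGen_eq_zero hι hb i₀
  obtain rfl : a = 0 := by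
    rw [← smul_eq_zero_iff_left hσ]
    have hℓσ := h.sum_mul_socleGen_eq_zero hι hb i₀ c
    simp only [Algebra.smul_def, socleGen, mul_one] at hx hxσ hℓσ ⊢
    linear_combination z * (Fintype.card ι * x - algebraMap K R b * y i₀) * hx - hℓσ -
      (∑ i, algebraMap K R (d i) * (y i + x) + algebraMap K R g * z *
        (Fintype.card ι * x - algebraMap K R b * y i₀)) * hxσ
  obtain rfl : c = 0 := h.eq_zero_of_forall_linear_mul_x_mul_sum_eq_zero hι hb i₀ hσ fun j => by
    have hq := h.mul_x_mul_sum_eq_zero hι hb d j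
    simp only [Algebra.smul_def, map_zero] at hq hx hxσ ⊢
    linear_combination (y j + x) * (hx - algebraMap K R g * hxσ) - hq
  obtain rfl : d = 0 := h.eq_zero_of_forall_linear_mul_x_mul_sum_eq_zero hι hb i₀ hσ fun j => by
    have hyσ := h.y_mul_socleGen_eq_zero hι hb i₀ j
    have hyj := hy j
    simp only [Pi.zero_apply, Algebra.smul_def, map_zero, zero_mul, Finset.sum_const_zero]
      at hx hyj hxσ hyσ ⊢
    linear_combination hx + hyj - algebraMap K R g * (hxσ + hyσ)
  exact ⟨g, by simp⟩

end Socle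

end DiamondRelations

theorem mem_torsionBySet_idealOfVars_iff {σ R M : Type*} [CommRing R] [AddCommGroup M]
    [Module (MvPolynomial σ R) M] {m : M} :
    m ∈ Submodule.torsionBySet (MvPolynomial σ R) M (idealOfVars σ R) ↔
      ∀ i, (X i : MvPolynomial σ R) • m = 0 := by
  rw [idealOfVars, ← Submodule.torsionBySet_eq_torsionBySet_span, Submodule.mem_torsionBySet_iff]
  exact ⟨fun h i => h ⟨_, i, rfl⟩, by rintro h ⟨_, i, rfl⟩; exact h i⟩

section

variable {K : Type u} [Field K] {n : ℕ}

variable (n) in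
theorem diamondRelations_quotient_sup (b : K) :
    let mk := Ideal.Quotient.mk (diamondIdeal K n ⊔ Ideal.ofList (List.ofFn (diamondParam n b)))
    DiamondRelations (algebraMap K _ b) 0 0 (mk (xP K n)) (mk (zP K n)) fun i => mk (yP K n i) := by
  intro mk
  have hparam (i) : mk (diamondParam n b i) = 0 := Ideal.Quotient.eq_zero_iff_mem.mpr
    (Ideal.mem_sup_right (Ideal.subset_span (List.mem_ofFn.mpr ⟨i, rfl⟩)))
  refine ⟨(diamondIdeal_le_ker_iff _).mp (le_sup_left.trans Ideal.mk_ker.ge),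
    (map_sub mk _ _).symm.trans (hparam 0), ?_⟩
  have hsum : mk (∑ i, yP K n i - C b * xP K n) = 0 := hparam 1
  rwa [map_sub, map_sum, map_mul] at hsum

variable {b : K} (hn : 2 < n) (hb : (n : K) ^ 2 - b ^ 2 ≠ 0) (i₀ : Fin n)
include hn hb

theorem torsionBySet_idealOfVars_eq_span_socleGen :
    Submodule.torsionBySet (MvPolynomial (Fin (n + 2)) K)
      (_ ⧸ (diamondIdeal K n ⊔ Ideal.ofList (List.ofFn (diamondParam n b))))
        (idealOfVars (Fin (n + 2)) K) =
        Submodule.span _ {Ideal.Quotient.mk _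
          (DiamondRelations.socleGen (C b) (xP K n) (zP K n) (yP K n) i₀)} := by
  set mk := Ideal.Quotient.mk (diamondIdeal K n ⊔ Ideal.ofList (List.ofFn (diamondParam n b)))
  have h := diamondRelations_quotient_sup n b
  have hσ : DiamondRelations.socleGen (algebraMap K _ b) (mk (xP K n)) (mk (zP K n))
      (fun i => mk (yP K n i)) i₀ =
        mk (DiamondRelations.socleGen (C b) (xP K n) (zP K n) (yP K n) i₀) := by
    simp only [DiamondRelations.socleGen, map_mul, map_sub, map_natCast]
    rfl
  have hι : 2 < Fintype.card (Fin n) := by rwa [Fintype.card_fin]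
  have hb' : (Fintype.card (Fin n) : K) ^ 2 - b ^ 2 ≠ 0 := by rwa [Fintype.card_fin]
  rw [← hσ]
  refine le_antisymm (fun r hr => ?_) ((Submodule.span_singleton_le_iff_mem _ _).mpr ?_)
  · rw [mem_torsionBySet_idealOfVars_iff, forall_X_iff (p := fun v => v • r = 0)] at hr
    obtain ⟨g, rfl⟩ := h.exists_eq_smul_socleGen hι hb' i₀
      (adjoin_insert_range_eq_top Ideal.Quotient.mk_surjective (fun a => ⟨a, rfl⟩)
        ⟨0, by rw [h.x_sub_z, map_zero]⟩)
      (hσ ▸ fun h0 => socleGen_notMem_diamondIdeal_sup hn hb i₀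
        (Ideal.Quotient.eq_zero_iff_mem.mp h0)) hr.1 hr.2.2
    exact Submodule.mem_span_singleton.mpr ⟨C g, by rw [← algebraMap_eq, algebraMap_smul]⟩
  · rw [mem_torsionBySet_idealOfVars_iff, forall_X_iff (p := fun v => v • _ = 0)]
    have hx := h.x_mul_socleGen_eq_zero hι hb' i₀
    have hzx : mk (zP K n) = mk (xP K n) := (sub_eq_zero.mp h.x_sub_z).symm
    exact ⟨hx, (congrArg (· * _) hzx).trans hx, h.y_mul_socleGen_eq_zero hι hb' i₀⟩

theorem nonempty_torsionBySet_equiv_quotient_idealOfVars :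
    Nonempty (Submodule.torsionBySet (MvPolynomial (Fin (n + 2)) K)
      (_ ⧸ (diamondIdeal K n ⊔ Ideal.ofList (List.ofFn (diamondParam n b))))
        (idealOfVars (Fin (n + 2)) K) ≃ₗ[MvPolynomial (Fin (n + 2)) K]
          MvPolynomial (Fin (n + 2)) K ⧸ idealOfVars (Fin (n + 2)) K) :=
  have := isMaximal_idealOfVars (Fin (n + 2)) K
  let i₀ : Fin n := ⟨0, two_pos.trans hn⟩
  nonempty_torsionBySet_equiv_of_eq_span_singleton
    (fun h0 => socleGen_notMem_diamondIdeal_sup hn hb i₀ (Ideal.Quotient.eq_zero_iff_mem.mp h0))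
    (torsionBySet_idealOfVars_eq_span_socleGen hn hb i₀)

end

theorem algebraicIndependent_of_adjoin_range_eq_top {σ K : Type*} [Fintype σ] [Field K] {m : ℕ}
    (hm : Fintype.card σ = m) {f : Fin m → MvPolynomial σ K}
    (hf : Algebra.adjoin K (Set.range f) = ⊤) : AlgebraicIndependent K f := by
  have : Algebra.IsAlgebraic (Algebra.adjoin K (Set.range f)) (MvPolynomial σ K) :=
    ⟨fun p => isAlgebraic_algebraMap (⟨p, hf ▸ Algebra.mem_top⟩ : Algebra.adjoin K (Set.range f))⟩
  exact (Algebra.IsAlgebraic.isTranscendenceBasis_of_lift_le_trdeg_of_finite K f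
    (by simp [MvPolynomial.trdeg_of_isDomain, ← hm])).1

theorem isWeaklyRegular_ofFn_of_algebraicIndependent {K A : Type*} [CommRing K] [CommRing A]
    [Algebra K A] {m : ℕ} {f : Fin m → A} (hf : AlgebraicIndependent K f)
    (htop : Algebra.adjoin K (Set.range f) = ⊤) : IsWeaklyRegular A (List.ofFn f) := by
  have hsurj : Function.Surjective (aeval (R := K) f) := by
    rwa [← AlgHom.range_eq_top, ← Algebra.adjoin_range_eq_range_aeval]
  let e := RingEquiv.ofBijective (aeval (R := K) f) ⟨hf, hsurj⟩
  have he (i) : e (X i) = f i := aeval_X f i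
  refine (e.toAddEquiv.isWeaklyRegular_congr (as := List.ofFn X) (bs := List.ofFn f) ?_).mp
    (isWeaklyRegular_ofFn_X K m)
  refine List.forall₂_iff_get.mpr ⟨by simp, fun i _ _ p => ?_⟩
  simp [he]

section

variable {K : Type u} [Field K] {n : ℕ}

/-- The linear forms `y i + x`, which together with `diamondParam` form a system of coordinates. -/
noncomputable def diamondLinear (K : Type u) [Field K] (n : ℕ) (i : Fin n) :
    MvPolynomial (Fin (n + 2)) K :=
  yP K n i + xP K n

theorem X_mem_span_diamondParam_diamondLinear {b : K} (hb : (n : K) ^ 2 - b ^ 2 ≠ 0) (i) :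
    X i ∈ Submodule.span K (Set.range (Fin.append (diamondParam n b) (diamondLinear K n))) := by
  set W := Submodule.span K (Set.range (Fin.append (diamondParam n b) (diamondLinear K n)))
  have hparam (i) : diamondParam n b i ∈ W := Submodule.subset_span ⟨_, Fin.append_left _ _ i⟩
  have hlinear (i) : diamondLinear K n i ∈ W := Submodule.subset_span ⟨_, Fin.append_right _ _ i⟩
  have hx : xP K n ∈ W := by
    have hb' : (n : K) + b ≠ 0 := fun h0 => hb (by rw [sq_sub_sq, h0, zero_mul])
    rw [← W.smul_mem_iff hb']
    have : ((n : K) + b) • xP K n = ∑ i, diamondLinear K n i - diamondParam n b 1 := by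
      simp [diamondLinear, diamondParam, Finset.sum_add_distrib, smul_eq_C_mul]
      ring
    exact this ▸ sub_mem (sum_mem fun i _ => hlinear i) (hparam 1)
  refine forall_X_iff.mpr ⟨hx, ?_, fun i => ?_⟩ i
  · exact sub_sub_cancel (xP K n) (zP K n) ▸ sub_mem hx (hparam 0)
  · exact add_sub_cancel_right (yP K n i) (xP K n) ▸ sub_mem (hlinear i) hx

theorem ofList_diamondParam_append_diamondLinear {b : K} (hb : (n : K) ^ 2 - b ^ 2 ≠ 0) :
    Ideal.ofList (List.ofFn (diamondParam n b) ++ List.ofFn (diamondLinear K n)) =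
      idealOfVars (Fin (n + 2)) K := by
  rw [← List.ofFn_fin_append]
  refine (congrArg Ideal.span (Set.ext fun _ => List.mem_ofFn)).trans
    (le_antisymm (Ideal.span_le.mpr ?_) (Ideal.span_le.mpr ?_))
  · rintro _ ⟨i, rfl⟩
    cases i using Fin.addCases with
    | left i => exact Fin.append_left (diamondParam n b) _ i ▸ diamondParam_mem_idealOfVars b i
    | right i =>
      exact Fin.append_right (diamondParam n b) (diamondLinear K n) i ▸
        add_mem (X_mem_idealOfVars _) (X_mem_idealOfVars _)
  · rintro _ ⟨i, rfl⟩
    exact Submodule.span_le_restrictScalars K _ _ (X_mem_span_diamondParam_diamondLinear hb i)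

theorem isWeaklyRegular_diamondParam_append_diamondLinear {b : K}
    (hb : (n : K) ^ 2 - b ^ 2 ≠ 0) :
    IsWeaklyRegular (MvPolynomial (Fin (n + 2)) K)
      (List.ofFn (diamondParam n b) ++ List.ofFn (diamondLinear K n)) := by
  rw [← List.ofFn_fin_append]
  have htop : Algebra.adjoin K
      (Set.range (Fin.append (diamondParam n b) (diamondLinear K n))) = ⊤ := by
    rw [eq_top_iff, ← MvPolynomial.adjoin_range_X]
    refine Algebra.adjoin_le ?_
    rintro _ ⟨i, rfl⟩
    exact Algebra.span_le_adjoin _ _ (X_mem_span_diamondParam_diamondLinear hb i)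
  exact isWeaklyRegular_ofFn_of_algebraicIndependent
    (algebraicIndependent_of_adjoin_range_eq_top (by simp [add_comm]) htop) htop

theorem MinGradedFreeRes.diamondIdeal_card_eq_one {b : K} (hn : 2 < n)
    (hb : (n : K) ^ 2 - b ^ 2 ≠ 0)
    (F : MinGradedFreeRes K (Fin (n + 2)) (diamondIdeal K n)) :
    Nat.card (F.B n) = 1 ∧ ∀ q, n < q → IsEmpty (F.B q) := by
  have hreg : IsWeaklyRegular (MvPolynomial (Fin (n + 2)) K ⧸ diamondIdeal K n)
      (List.ofFn (diamondParam n b)) := by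
    rw [← isWeaklyRegular_map_algebraMap_iff
      (MvPolynomial (Fin (n + 2)) K ⧸ diamondIdeal K n), List.map_ofFn]
    exact isWeaklyRegular_quotient_diamondIdeal hn hb
  simpa only [List.length_ofFn] using F.card_eq_one_of_socle_equiv
    (ofList_diamondParam_append_diamondLinear hb)
    (isWeaklyRegular_diamondParam_append_diamondLinear hb) hreg
    (nonempty_torsionBySet_equiv_quotient_idealOfVars hn hb)

end

section GradedFreeModule

variable {K : Type*} [CommSemiring K] {σ B : Type*}

/-- The vectors of degree `e` in the free module whose basis vector `b` has degree `deg b`. -/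
def IsHomogeneousVector (deg : B → ℕ) (e : ℕ) (u : B →₀ MvPolynomial σ K) : Prop :=
  ∀ b m, coeff m (u b) ≠ 0 → m.degree + deg b = e

/-- The component of degree `e` of a vector of the free module whose basis vector `b` has degree
`deg b`; its coordinate at `b` vanishes unless `deg b ≤ e`. -/
noncomputable def gradedComponent (deg : B → ℕ) (e : ℕ) :
    (B →₀ MvPolynomial σ K) →ₗ[K] (B →₀ MvPolynomial σ K) where
  toFun u := Finsupp.onFinset u.support
    (fun b => if deg b ≤ e then homogeneousComponent (e - deg b) (u b) else 0)
    fun b hb => Finsupp.mem_support_iff.mpr fun h => hb (by rw [h, map_zero, ite_self])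
  map_add' u v := by
    ext b : 1
    simp only [Finsupp.onFinset_apply, Finsupp.add_apply, map_add, ite_add_ite, add_zero]
  map_smul' a u := by
    ext b : 1
    simp only [Finsupp.onFinset_apply, Finsupp.smul_apply, map_smul, smul_ite, smul_zero,
      RingHom.id_apply]

variable {deg : B → ℕ} {e : ℕ}

theorem gradedComponent_apply (u : B →₀ MvPolynomial σ K) (b : B) :
    gradedComponent deg e u b =
      if deg b ≤ e then homogeneousComponent (e - deg b) (u b) else 0 :=
  rfl

theorem coeff_gradedComponent (u : B →₀ MvPolynomial σ K) (b : B) (m : σ →₀ ℕ) :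
    coeff m (gradedComponent deg e u b) = if m.degree + deg b = e then coeff m (u b) else 0 := by
  rw [gradedComponent_apply]
  by_cases h : deg b ≤ e
  · simp only [if_pos h, coeff_homogeneousComponent, eq_tsub_iff_add_eq_of_le h]
  · rw [if_neg h, if_neg (by lia), coeff_zero]

theorem isHomogeneousVector_gradedComponent (u : B →₀ MvPolynomial σ K) :
    IsHomogeneousVector deg e (gradedComponent deg e u) := fun b m hm => by
  rw [coeff_gradedComponent] at hm
  exact (ite_ne_right_iff.mp hm).1

theorem IsHomogeneousVector.gradedComponent_eq_ite {f : ℕ} {u : B →₀ MvPolynomial σ K}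
    (hu : IsHomogeneousVector deg f u) :
    gradedComponent deg e u = if e = f then u else 0 := by
  ext b m
  rw [coeff_gradedComponent]
  by_cases hm : coeff m (u b) = 0
  · split_ifs <;> simp [hm]
  · rw [hu b m hm]
    simp only [eq_comm (a := f)]
    split_ifs <;> rfl

theorem exists_sum_gradedComponent_eq (deg : B → ℕ) (u : B →₀ MvPolynomial σ K) :
    ∃ M, ∑ e ∈ Finset.range M, gradedComponent deg e u = u := by
  refine ⟨(u.support.sup fun b => (u b).support.sup fun m => m.degree + deg b) + 1, ?_⟩
  ext b m
  rw [Finsupp.finsetSum_apply, coeff_sum]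
  simp only [coeff_gradedComponent, Finset.sum_ite_eq, Finset.mem_range, Nat.lt_succ_iff]
  rw [ite_eq_left_iff]
  contrapose!
  intro hm
  have hb : b ∈ u.support := Finsupp.mem_support_iff.mpr fun h => hm (by rw [h, coeff_zero])
  exact (Finset.le_sup (f := fun m => m.degree + deg b) (mem_support_iff.mpr hm.symm)).trans
    (Finset.le_sup (f := fun b => (u b).support.sup fun m => m.degree + deg b) hb)

theorem isHomogeneousVector_single_monomial (b : B) (m : σ →₀ ℕ) (a : K) :
    IsHomogeneousVector deg (m.degree + deg b) (Finsupp.single b (monomial m a)) := by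
  classical
  intro c m' hm'
  obtain rfl | hc := eq_or_ne c b
  · rw [Finsupp.single_eq_same, coeff_monomial] at hm'
    rw [(ite_ne_right_iff.mp hm').1]
  · simp [Finsupp.single_eq_of_ne hc] at hm'

theorem IsHomogeneousVector.monomial_smul {u : B →₀ MvPolynomial σ K}
    (hu : IsHomogeneousVector deg e u) (m : σ →₀ ℕ) (a : K) :
    IsHomogeneousVector deg (m.degree + e) (monomial m a • u) := fun b m' hm' => by
  classical
  rw [Finsupp.smul_apply, smul_eq_mul, coeff_monomial_mul'] at hm'
  obtain ⟨hle, hm'⟩ := ite_ne_right_iff.mp hm'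
  rw [← hu b _ (right_ne_zero_of_mul hm'), ← add_assoc, ← map_add, add_tsub_cancel_of_le hle]

theorem map_gradedComponent {B' : Type*} {deg' : B' → ℕ}
    {d : (B' →₀ MvPolynomial σ K) →ₗ[MvPolynomial σ K] (B →₀ MvPolynomial σ K)}
    (hd : ∀ b, IsHomogeneousVector deg (deg' b) (d (Finsupp.single b 1))) (e : ℕ)
    (u : B' →₀ MvPolynomial σ K) :
    d (gradedComponent deg' e u) = gradedComponent deg e (d u) := by
  induction u using Finsupp.induction_linear with
  | zero => simp only [map_zero]
  | add u v hu hv => simp only [map_add, hu, hv]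
  | single b p =>
    induction p using MvPolynomial.induction_on' with
    | add p q hp hq => simp only [Finsupp.single_add, map_add, hp, hq]
    | monomial m a =>
      have hsmul : d (Finsupp.single b (monomial m a)) = monomial m a • d (Finsupp.single b 1) := by
        rw [← map_smul, Finsupp.smul_single, smul_eq_mul, mul_one]
      rw [(isHomogeneousVector_single_monomial b m a).gradedComponent_eq_ite, hsmul,
        ((hd b).monomial_smul m a).gradedComponent_eq_ite, ← hsmul, apply_ite d, map_zero]

/-- A submodule of a free module with homogeneous basis that contains the graded components of its
elements. -/
def IsGradedSubmodule (deg : B → ℕ)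
    (N : Submodule (MvPolynomial σ K) (B →₀ MvPolynomial σ K)) : Prop :=
  ∀ u ∈ N, ∀ e, gradedComponent deg e u ∈ N

theorem isGradedSubmodule_ker {B' : Type*} {deg' : B' → ℕ}
    {d : (B' →₀ MvPolynomial σ K) →ₗ[MvPolynomial σ K] (B →₀ MvPolynomial σ K)}
    (hd : ∀ b, IsHomogeneousVector deg (deg' b) (d (Finsupp.single b 1))) :
    IsGradedSubmodule deg' (LinearMap.ker d) := fun u hu e => by
  rw [LinearMap.mem_ker] at hu ⊢
  rw [map_gradedComponent hd, hu, map_zero]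

theorem IsGradedSubmodule.span_homogeneous_eq
    {N : Submodule (MvPolynomial σ K) (B →₀ MvPolynomial σ K)} (hN : IsGradedSubmodule deg N) :
    Submodule.span (MvPolynomial σ K) {u ∈ N | ∃ e, IsHomogeneousVector deg e u} = N := by
  refine le_antisymm (Submodule.span_le.mpr fun u hu => hu.1) fun u hu => ?_
  obtain ⟨M, hM⟩ := exists_sum_gradedComponent_eq deg u
  rw [← hM]
  exact sum_mem fun e _ => Submodule.subset_span
    ⟨hN u hu e, e, isHomogeneousVector_gradedComponent u⟩

end GradedFreeModule

theorem exists_finset_irredundant_span_eq {R M : Type*} [Semiring R] [AddCommMonoid M] [Module R M]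
    {s : Set M} (hs : (Submodule.span R s).FG) :
    ∃ T : Finset M, ↑T ⊆ s ∧ Submodule.span R (T : Set M) = Submodule.span R s ∧
      ∀ g ∈ T, g ∉ Submodule.span R ((T : Set M) \ {g}) := by
  classical
  obtain ⟨T₀, hT₀s, hT₀⟩ := Submodule.fg_span_iff_fg_span_finset_subset s |>.mp hs
  obtain ⟨T, hT⟩ := exists_minimal_of_wellFoundedLT
    (fun T : Finset M => ↑T ⊆ s ∧ Submodule.span R (T : Set M) = Submodule.span R s)
    ⟨T₀, hT₀s, hT₀.symm⟩
  refine ⟨T, hT.prop.1, hT.prop.2, fun g hg hspan => ?_⟩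
  have herase : Submodule.span R (T.erase g : Set M) = Submodule.span R s := by
    rw [Finset.coe_erase, ← Submodule.span_insert_eq_span hspan, Set.insert_sdiff_singleton,
      Set.insert_eq_of_mem (Finset.mem_coe.mpr hg), hT.prop.2]
  exact Finset.notMem_erase g T (hT.le_of_le
    ⟨(Finset.coe_subset.mpr (T.erase_subset g)).trans hT.prop.1, herase⟩ (T.erase_subset g) hg)

section MinimalResolutionExistence

variable {K : Type*} [Field K] {σ : Type*}

-- The component of degree `deg' i` of a relation `∑ uᵢ gᵢ = 0` has the constant term of `uᵢ` as
-- its coefficient at `gᵢ`.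
theorem coeff_zero_eq_zero_of_irredundant {B ι : Type*} {deg : B → ℕ} {deg' : ι → ℕ}
    {g : ι → B →₀ MvPolynomial σ K} (hg : ∀ i, IsHomogeneousVector deg (deg' i) (g i)) {i : ι}
    (hirr : g i ∉ Submodule.span (MvPolynomial σ K) (g '' {i}ᶜ)) {u : ι →₀ MvPolynomial σ K}
    (hu : Finsupp.linearCombination (MvPolynomial σ K) g u = 0) : coeff 0 (u i) = 0 := by
  by_contra h0
  have hg' (j) : IsHomogeneousVector deg (deg' j)
      (Finsupp.linearCombination (MvPolynomial σ K) g (Finsupp.single j 1)) := by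
    rw [Finsupp.linearCombination_single, one_smul]
    exact hg j
  set w := gradedComponent deg' (deg' i) u
  have hwi : w i = C (coeff 0 (u i)) := by
    rw [gradedComponent_apply, if_pos le_rfl, Nat.sub_self, homogeneousComponent_zero]
  have hw : Finsupp.linearCombination (MvPolynomial σ K) g w = 0 := by
    rw [map_gradedComponent hg', hu, map_zero]
  have herase : Finsupp.linearCombination (MvPolynomial σ K) g (w.erase i) ∈
      Submodule.span (MvPolynomial σ K) (g '' {i}ᶜ) := by
    classical
    refine (Finsupp.mem_span_image_iff_linearCombination _).mpr ⟨_, ?_, rfl⟩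
    rw [Finsupp.mem_supported, Finsupp.support_erase]
    simp
  rw [← Finsupp.single_add_erase i w, map_add, Finsupp.linearCombination_single, hwi] at hw
  have hsmul := neg_mem herase
  rw [← eq_neg_of_add_eq_zero_left hw] at hsmul
  refine hirr ?_
  rw [← one_smul (MvPolynomial σ K) (g i), ← C_1, ← inv_mul_cancel₀ h0, C_mul, mul_smul]
  exact Submodule.smul_mem _ _ hsmul

theorem IsGradedSubmodule.exists_minimal_cover [Finite σ] {B : Type*} [Finite B] {deg : B → ℕ}
    {N : Submodule (MvPolynomial σ K) (B →₀ MvPolynomial σ K)} (hN : IsGradedSubmodule deg N) :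
    ∃ (r : ℕ) (deg' : Fin r → ℕ)
      (d : (Fin r →₀ MvPolynomial σ K) →ₗ[MvPolynomial σ K] (B →₀ MvPolynomial σ K)),
      (∀ b, IsHomogeneousVector deg (deg' b) (d (Finsupp.single b 1))) ∧
        LinearMap.range d = N ∧ ∀ u ∈ LinearMap.ker d, ∀ b, coeff 0 (u b) = 0 := by
  obtain ⟨T, hTs, hspan, hirr⟩ := exists_finset_irredundant_span_eq
    (R := MvPolynomial σ K) (s := {u ∈ N | ∃ e, IsHomogeneousVector deg e u})
    (IsNoetherian.noetherian _)
  rw [hN.span_homogeneous_eq] at hspan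
  choose degT hdegT using fun g : T => (hTs g.2).2
  let g (i : Fin T.card) : B →₀ MvPolynomial σ K := T.equivFin.symm i
  have hrange : Set.range g = T := (T.equivFin.symm.surjective.range_comp _).trans Subtype.range_coe
  have hginj : Function.Injective g := Subtype.val_injective.comp T.equivFin.symm.injective
  refine ⟨T.card, degT ∘ T.equivFin.symm, Finsupp.linearCombination _ g, fun i => ?_, ?_,
    fun u hu i => coeff_zero_eq_zero_of_irredundant (g := g)
      (fun i => hdegT (T.equivFin.symm i)) ?_ hu⟩
  · rw [Finsupp.linearCombination_single, one_smul]
    exact hdegT _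
  · rw [Finsupp.range_linearCombination, hrange, hspan]
  · rw [Set.image_compl_eq_range_sdiff_image hginj, hrange, Set.image_singleton]
    exact hirr _ (T.equivFin.symm i).2

variable (K σ) in
/-- A graded submodule of a free module with homogeneous basis, contained in `𝔪` times that free
module: the shape of a module of syzygies in a minimal graded free resolution. The basis is indexed
by `Fin rank` so that it lives in `Type`, as `MinGradedFreeRes.B` requires. -/
structure MinimalSyzygies where
  rank : ℕ
  deg : Fin rank → ℕ
  module : Submodule (MvPolynomial σ K) (Fin rank →₀ MvPolynomial σ K)
  isGraded : IsGradedSubmodule deg module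
  coeff_zero : ∀ u ∈ module, ∀ b, coeff 0 (u b) = 0

theorem MinimalSyzygies.exists_next [Finite σ] (s : MinimalSyzygies K σ) :
    ∃ (t : MinimalSyzygies K σ)
      (d : (Fin t.rank →₀ MvPolynomial σ K) →ₗ[MvPolynomial σ K]
        (Fin s.rank →₀ MvPolynomial σ K)),
      LinearMap.range d = s.module ∧ t.module = LinearMap.ker d ∧
        ∀ b, IsHomogeneousVector s.deg (t.deg b) (d (Finsupp.single b 1)) := by
  obtain ⟨r, deg', d, hd, hrange, hker⟩ := s.isGraded.exists_minimal_cover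
  exact ⟨⟨r, deg', LinearMap.ker d, isGradedSubmodule_ker hd, hker⟩, d, hrange, rfl, hd⟩

/-- A homogeneous ideal without constant terms, as a submodule of the free module of rank one. -/
noncomputable def MinimalSyzygies.ofIdeal {I : Ideal (MvPolynomial σ K)}
    (hI : ∀ p ∈ I, ∀ e, homogeneousComponent e p ∈ I) (hI₀ : I ≤ RingHom.ker constantCoeff) :
    MinimalSyzygies K σ where
  rank := 1
  deg _ := 0
  module := Submodule.comap (Finsupp.lapply 0) I
  isGraded u hu e := hI (u 0) hu e
  coeff_zero _ hu b := Subsingleton.elim b 0 ▸ hI₀ hu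

theorem nonempty_minGradedFreeRes [Finite σ] {I : Ideal (MvPolynomial σ K)}
    (hI : ∀ p ∈ I, ∀ e, homogeneousComponent e p ∈ I) (hI₀ : I ≤ RingHom.ker constantCoeff) :
    Nonempty (MinGradedFreeRes K σ I) := by
  choose next d hrange hker hhomog using MinimalSyzygies.exists_next (K := K) (σ := σ)
  let syz : ℕ → MinimalSyzygies K σ := fun i => i.rec (.ofIdeal hI hI₀) fun _ => next
  let ε : (Fin 1 →₀ MvPolynomial σ K) →ₗ[MvPolynomial σ K] MvPolynomial σ K := Finsupp.lapply 0
  have hε (p) : ε (Finsupp.single 0 p) = p := Finsupp.single_eq_same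
  have ε_homog (b) : (ε (Finsupp.single b 1)).IsHomogeneous 0 := by
    rw [Subsingleton.elim b 0, hε]
    exact isHomogeneous_one σ K
  have hsurj (p) : ∃ t, ε t - p ∈ I :=
    ⟨Finsupp.single 0 p, by rw [hε, sub_self]; exact I.zero_mem⟩
  exact ⟨{
    B i := Fin (syz i).rank
    finB _ := inferInstance
    deg i := (syz i).deg
    d i := d (syz i)
    ε := ε
    ε_homog := ε_homog
    surj := hsurj
    exact0 := hrange _
    exact i := (hrange _).trans (hker (syz i))
    homog i b c m hm := hhomog (syz i) b c m (mem_support_iff.mp hm)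
    minimal i b := (syz i).coeff_zero _ (hrange (syz i) ▸ LinearMap.mem_range_self _ _) }⟩

end MinimalResolutionExistence

attribute [local instance] MvPolynomial.gradedAlgebra in
theorem nonempty_minGradedFreeRes_diamondIdeal (K : Type*) [Field K] (n : ℕ) :
    Nonempty (MinGradedFreeRes K (Fin (n + 2)) (diamondIdeal K n)) := by
  refine nonempty_minGradedFreeRes (fun p hp e => ?_) (Ideal.span_le.mpr ?_)
  · have hhom : (diamondIdeal K n).IsHomogeneous (homogeneousSubmodule (Fin (n + 2)) K) := by
      refine Ideal.homogeneous_span _ _ ?_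
      rintro _ ⟨i, j, -, rfl⟩
      exact ⟨2, ((isHomogeneous_X K _).mul (isHomogeneous_X K _)).sub
        ((isHomogeneous_X K _).mul (isHomogeneous_X K _))⟩
    exact homogeneousComponent_mem_of_mem hhom hp e
  · rintro _ ⟨i, j, -, rfl⟩
    simp [xP, yP, zP, RingHom.mem_ker]

/-- The diamond ideal is Gorenstein: `S/I` is Cohen–Macaulay and the last nonzero free
module in its minimal graded free resolution has rank `1`. -/
theorem diamond_is_Gorenstein (K : Type*) [Field K] (n : ℕ) (hn : 3 ≤ n) :
    IsCMquot (diamondIdeal K n) ∧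
      Nonempty (MinGradedFreeRes K (Fin (n + 2)) (diamondIdeal K n)) ∧
      ∀ F : MinGradedFreeRes K (Fin (n + 2)) (diamondIdeal K n),
        ∃ p : ℕ, Nat.card (F.B p) = 1 ∧ ∀ q, p < q → IsEmpty (F.B q) := by
  obtain ⟨b, hb⟩ := exists_natCast_sq_sub_sq_ne_zero K n
  exact ⟨isCMquot_diamondIdeal hn hb, nonempty_minGradedFreeRes_diamondIdeal K n,
    fun F => ⟨n, F.diamondIdeal_card_eq_one hn hb⟩⟩
end
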